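/- arXiv:math/0604519 — 2 statements merged into one kernel-verified Lean document; each statement's English description precedes it below -/
import Mathlib

section
/- Theorem (flatness locus of $\tilde A_+$), case $(2,3,4)$ (pointwise over $\mathbb{C}$): For $n=4$, $\dim_{\mathbb{C}}\tilde A_+(2,3,4)=24$ (i.e., the algebra is flat) if and only if: $\alpha_2^{12}\beta_3^8\gamma_4^6=1$; $\alpha_2^6\beta_3^4\gamma_4^3\alpha_1=\alpha_1$; $\alpha_2^6\beta_3^4\gamma_4^3\gamma_2=\gamma_2$; $\alpha_2^4\beta_3^3\gamma_4^2\beta_1=\beta_2$; and $\alpha_2^3\beta_3^2\gamma_4^2\gamma_1=\gamma_3$. -/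
/-!
Rescaling `a, b, c` by cube and square roots of `β₃` and `α₂` makes both constants equal to `1`; the
constant term of the quartic for `c` becomes a number `δ ≠ 0`. Everything then takes place over the
commutative algebra `R = ℂ[c]/(quartic)`, which has dimension `4`.

*Upper bound.* With `a' = a⁻¹`, `b' = b⁻¹`, the words `1, a', b', a'b', ba'b', b'a'b'` span the algebra
as a right module over the image of `R`. Concretely, the `ℂ`-linear map
`Φ : R⁶ → Ã₊, u ↦ ∑ wⱼ φ(uⱼ)` intertwines left multiplication by `a', b'` with explicit `6 × 6`
matrices `Ai, Bi` over `R` (`IsTriple.col_a`, `IsTriple.col_b`); the only nontrivial ingredient is a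
straightening rule for `b'a'b'` (`IsTriple.word_relation`), obtained from
`b'a'b' = c b'` by eliminating `c` with its quartic equation. So `Φ` is onto,
`dim Ã₊ ≤ 24`, and equality holds iff `Φ` is injective (`IsTriple.finrank_eq_iff`).

*Necessity.* The matrices satisfy the quadratic and cubic relations for all parameters, but the
matrix `F` expressing the quartic relation for `C = Bi · Ai` need not vanish. As `Φ` kills the image of
`F`, injectivity of `Φ` forces `F = 0`. Two entries of `F` (`Datum.Fv4`, `Datum.Fv5`), written in the
basis `1, c, c², c³` of `R`, give all the stated conditions (`IsTriple.necessary`).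

*Sufficiency.* Under the conditions, a suitable choice of the scaling constants makes `δ = ±1`, and
then `F = 0` (`Datum.Fv`, `Datum.Fv_neg`, `Datum.F_eq_zero`). Thus `R⁶` is a representation of `Ã₊`,
and evaluating it at the first basis vector gives a left inverse of `Φ` (`IsTriple.injective_of_hom`).
-/

/-!
Theorem (flatness locus of `Ã₊`), cases `(2,3,n)` for `n ∈ {3,4,5}`. `Ã₊(2,3,n)` is the
quotient of the free unital associative `ℂ`-algebra on `a, b, c` by the two-sided ideal
generated by `abc - 1`, `a² - α₁a + α₂`, `b³ - β₁b² + β₂b - β₃` and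
`cⁿ - γ₁cⁿ⁻¹ + γ₂cⁿ⁻² - ⋯ + (-1)ⁿγₙ`. Flatness holds iff `dim_ℂ Ã₊(2,3,n) = |W₊|`
(`= 12, 24, 60` for `n = 3, 4, 5`).
-/

noncomputable section

namespace Tilde23n

/-- The generator `a`. -/
def a : FreeAlgebra ℂ (Fin 3) := FreeAlgebra.ι ℂ 0
/-- The generator `b`. -/
def b : FreeAlgebra ℂ (Fin 3) := FreeAlgebra.ι ℂ 1
/-- The generator `c`. -/
def c : FreeAlgebra ℂ (Fin 3) := FreeAlgebra.ι ℂ 2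

/-- scalar embedding -/
def κ (z : ℂ) : FreeAlgebra ℂ (Fin 3) := algebraMap ℂ _ z

/-- The relations of `Ã₊(2,3,n)`. -/
inductive Rel (n : ℕ) (α1 α2 β1 β2 β3 : ℂ) (γ : ℕ → ℂ) :
    FreeAlgebra ℂ (Fin 3) → FreeAlgebra ℂ (Fin 3) → Prop
  | rabc : Rel n α1 α2 β1 β2 β3 γ (a * b * c) 1
  | ra : Rel n α1 α2 β1 β2 β3 γ (a ^ 2 - κ α1 * a + κ α2) 0
  | rb : Rel n α1 α2 β1 β2 β3 γ (b ^ 3 - κ β1 * b ^ 2 + κ β2 * b - κ β3) 0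
  | rc : Rel n α1 α2 β1 β2 β3 γ
      (c ^ n + ∑ k ∈ Finset.Icc 1 n, κ ((-1 : ℂ) ^ k * γ k) * c ^ (n - k)) 0

/-- The algebra `Ã₊(2,3,n)`. -/
abbrev Aplus (n : ℕ) (α1 α2 β1 β2 β3 : ℂ) (γ : ℕ → ℂ) : Type :=
  RingQuot (Rel n α1 α2 β1 β2 β3 γ)

end Tilde23n

namespace Flat234

/-! ### The six-dimensional module over `R` and its obstruction -/

/-- Parameters of the normalised relations in a commutative ring `R`, together with an invertible root
`c` of the quartic `x⁴ - γ₁x³ + γ₂x² - γ₃x + δ` (in the field `quartic` this equation is divided by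
`c²`). The inverses of `δ` and `c` are carried as the data `δ'` and `d`. -/
structure Datum (R : Type*) [CommRing R] where
  (α β₁ β₂ γ₁ γ₂ γ₃ δ δ' c d : R)
  δδ' : δ * δ' = 1
  cd : c * d = 1
  quartic : c ^ 2 - γ₁ * c + γ₂ - γ₃ * d + δ * d ^ 2 = 0

namespace Datum
variable {R : Type*} [CommRing R] (D : Datum R)

/-- The coefficients `p₀, p₁, p₂, p₃` are those of `1, a', b', a'b'` in the expansion of
`b'a'b' + δ a(ba'b')c`; see `IsTriple.t_eq`. -/
def p₀ : R := D.δ * D.d * D.β₁ - D.γ₃ * D.β₁ + D.δ * D.c * D.β₁ * D.β₂ + D.α * D.c ^ 2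
  - D.α * D.γ₁ * D.c - D.α * D.δ * D.β₂ + D.α * D.β₂ * D.γ₃ * D.c
  - D.α * D.δ * D.β₂ ^ 2 * D.c ^ 2 + D.α ^ 2 * D.δ * D.c

/-- The coefficient of `a'` in the expansion of `b'a'b' + δ a(ba'b')c`. -/
def p₁ : R := D.γ₂ - D.β₂ * D.γ₃ * D.c + D.δ * D.β₂ ^ 2 * D.c ^ 2 - D.α * D.δ * D.c

/-- The coefficient of `b'` in the expansion of `b'a'b' + δ a(ba'b')c`. -/
def p₂ : R := D.γ₁ - D.α * D.γ₃ * D.c + D.α * D.β₂ * D.δ * D.c ^ 2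

/-- The coefficient of `a'b'` in the expansion of `b'a'b' + δ a(ba'b')c`. -/
def p₃ : R := D.γ₃ * D.c - D.β₂ * D.δ * D.c ^ 2

/-- Left multiplication by `a' = a⁻¹` in the basis `1, a', b', a'b', ba'b', b'a'b'`. -/
def Ai : Module.End R (Fin 6 → R) where
  toFun u := ![-u 1 - D.δ' * D.d * D.p₀ * u 4 - D.p₁ * u 5,
    u 0 + D.α * u 1 - D.δ' * D.d * D.p₁ * u 4 + (D.p₀ + D.α * D.p₁) * u 5,
    -u 3 - D.δ' * D.d * D.p₂ * u 4 - D.p₃ * u 5,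
    u 2 + D.α * u 3 - D.δ' * D.d * D.p₃ * u 4 + (D.p₂ + D.α * D.p₃) * u 5,
    D.α * u 4 - D.δ * D.c * u 5,
    D.δ' * D.d * u 4]
  map_add' u v := by ext i; fin_cases i <;> simp <;> ring
  map_smul' r u := by ext i; fin_cases i <;> simp <;> ring

/-- Left multiplication by `b' = b⁻¹` in the basis `1, a', b', a'b', ba'b', b'a'b'`. -/
def Bi : Module.End R (Fin 6 → R) where
  toFun u := ![D.c * u 1 - D.β₁ * u 2, D.d * u 2, u 0 + D.β₂ * u 2,
    u 4 - D.β₁ * u 5, u 5, u 3 + D.β₂ * u 5]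
  map_add' u v := by ext i; fin_cases i <;> simp <;> ring
  map_smul' r u := by ext i; fin_cases i <;> simp <;> ring

theorem Ai_apply (u : Fin 6 → R) : D.Ai u = ![-u 1 - D.δ' * D.d * D.p₀ * u 4 - D.p₁ * u 5,
    u 0 + D.α * u 1 - D.δ' * D.d * D.p₁ * u 4 + (D.p₀ + D.α * D.p₁) * u 5,
    -u 3 - D.δ' * D.d * D.p₂ * u 4 - D.p₃ * u 5,
    u 2 + D.α * u 3 - D.δ' * D.d * D.p₃ * u 4 + (D.p₂ + D.α * D.p₃) * u 5,
    D.α * u 4 - D.δ * D.c * u 5,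
    D.δ' * D.d * u 4] := rfl

theorem Bi_apply (u : Fin 6 → R) : D.Bi u = ![D.c * u 1 - D.β₁ * u 2, D.d * u 2, u 0 + D.β₂ * u 2,
    u 4 - D.β₁ * u 5, u 5, u 3 + D.β₂ * u 5] := rfl

/-- The inverse of `Ai`, representing `a`. -/
def A : Module.End R (Fin 6 → R) := D.α • 1 - D.Ai

/-- The inverse of `Bi`, representing `b`. -/
def B : Module.End R (Fin 6 → R) := D.Bi * D.Bi - D.β₂ • D.Bi + D.β₁ • 1

theorem A_apply (u : Fin 6 → R) : D.A u = D.α • u - D.Ai u := rfl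

theorem B_apply (u : Fin 6 → R) : D.B u = ![u 2 - D.β₂ * D.c * u 1, D.d * u 0 + D.β₁ * u 1,
    D.c * u 1, u 5 - D.β₂ * u 4, u 3 + D.β₁ * u 4, u 4] := by
  have h2 := D.cd
  ext i
  fin_cases i <;> simp [B, Bi_apply] <;> grind

theorem Ai_sq : D.Ai * D.Ai = D.α • D.Ai - 1 := by
  have h1 := D.δδ'
  have h2 := D.cd
  ext1 u
  ext i
  fin_cases i <;> simp [Ai_apply] <;> grind

theorem Bi_cube : D.Bi * (D.Bi * D.Bi) = D.β₂ • (D.Bi * D.Bi) - D.β₁ • D.Bi + 1 := by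
  have h2 := D.cd
  ext u i
  fin_cases i <;> simp [Bi_apply] <;> grind

/-- The operator `Bi * Ai`, representing `c = b⁻¹a⁻¹`. -/
def C : Module.End R (Fin 6 → R) := D.Bi * D.Ai

/-- The inverse of `C`, representing `ab`. -/
def Ci : Module.End R (Fin 6 → R) := D.A * D.B

/-- The quartic polynomial of `c` evaluated at `C` and divided by `C²`. It is the obstruction to
`A, B, C` satisfying all the relations. -/
def F : Module.End R (Fin 6 → R) :=
  D.C * D.C - D.γ₁ • D.C + D.γ₂ • 1 - D.γ₃ • D.Ci + D.δ • (D.Ci * D.Ci)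

/-- The obstruction kills the basis vector `1`, on which `C` acts as `c`. -/
theorem Fe : D.F ![1,0,0,0,0,0] = 0 := by
  have h2 := D.quartic
  have e1 : D.C ![1,0,0,0,0,0] = D.c • ![1,0,0,0,0,0] := by
    ext i; fin_cases i <;> simp [C, Ai_apply, Bi_apply]
  have e2 : D.Ci ![1,0,0,0,0,0] = D.d • ![1,0,0,0,0,0] := by
    ext i; fin_cases i <;> simp [Ci, A_apply, B_apply, Ai_apply]
  simp only [F, LinearMap.add_apply, LinearMap.sub_apply, LinearMap.smul_apply,
      Module.End.mul_apply, e1, e2, map_smul, Module.End.one_apply]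
  ext i; fin_cases i <;> simp; linear_combination h2

/-- The obstruction kills the basis vector `b'`; the `pᵢ` are designed to make this true. -/
theorem Fy : D.F ![0,0,1,0,0,0] = 0 := by
  have h1 := D.cd
  have h2 := D.quartic
  have e0 : D.C ![0,0,1,0,0,0] = ![0,0,0,0,0,1] := by
    ext i; fin_cases i <;> simp [C, Ai_apply, Bi_apply]
  have e1 : D.C ![0,0,0,0,0,1] = ![D.c * (D.p₀ + D.α * D.p₁) + D.β₁ * D.p₃, -(D.d * D.p₃), -D.p₁
      - D.β₂ * D.p₃, -(D.δ * D.c), 0, D.p₂ + D.α * D.p₃] := by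
    ext i; fin_cases i <;> simp [C, Ai_apply, Bi_apply]; ring
  have e2 : D.Ci ![0,0,1,0,0,0] = ![D.α, -1, 0, 0,0,0] := by
    ext i; fin_cases i <;> simp [Ci, A_apply, B_apply, Ai_apply]
  have e3 : D.Ci ![D.α,-1,0,0,0,0] = ![D.α * D.d - D.β₁ + D.α * D.β₂ * D.c, -D.β₂*D.c, -D.α*D.c,
      D.c,0,0] := by
    ext i; fin_cases i <;> simp [Ci, A_apply, B_apply, Ai_apply] <;> ring
  simp only [F, LinearMap.add_apply, LinearMap.sub_apply, LinearMap.smul_apply,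
      Module.End.mul_apply, e0, e1, e2, e3, Module.End.one_apply]
  ext i; fin_cases i <;> simp [p₀,p₁,p₂,p₃] <;> grind

theorem C_apply (u : Fin 6 → R) : D.C u = ![D.c * (u 0 + D.α * u 1 - D.δ' * D.d * D.p₁ * u 4
    + (D.p₀ + D.α * D.p₁) * u 5) + D.β₁ * (u 3 + D.δ' * D.d * D.p₂ * u 4 + D.p₃ * u 5),
   -D.d * (u 3 + D.δ' * D.d * D.p₂ * u 4 + D.p₃ * u 5),
   -u 1 - D.δ' * D.d * D.p₀ * u 4 - D.p₁ * u 5 - D.β₂ * (u 3 + D.δ' * D.d * D.p₂ * u 4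
       + D.p₃ * u 5),
    D.α * u 4 - D.δ * D.c * u 5 - D.β₁ * D.δ' * D.d * u 4, D.δ' * D.d * u 4,
    u 2 + D.α * u 3 - D.δ' * D.d * D.p₃ * u 4 + (D.p₂ + D.α * D.p₃) * u 5
        + D.β₂ * D.δ' * D.d * u 4] := by
  ext i; fin_cases i <;> simp [C, Ai_apply, Bi_apply] <;> ring

theorem Ci_apply (u : Fin 6 → R) : D.Ci u = ![D.α * (u 2 - D.β₂ * D.c * u 1) + D.d * u 0
    + D.β₁ * u 1 + D.δ' * D.d * D.p₀ * (u 3 + D.β₁ * u 4) + D.p₁ * u 4,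
    - (u 2 - D.β₂ * D.c * u 1) + D.δ' * D.d * D.p₁ * (u 3 + D.β₁ * u 4) - (D.p₀ + D.α * D.p₁) * u 4,
    D.α * D.c * u 1 + u 5 - D.β₂ * u 4 + D.δ' * D.d * D.p₂ * (u 3 + D.β₁ * u 4) + D.p₃ * u 4,
    -D.c * u 1 + D.δ' * D.d * D.p₃ * (u 3 + D.β₁ * u 4) - (D.p₂ + D.α * D.p₃) * u 4,
    D.δ * D.c * u 4,
    D.α * u 4 - D.δ' * D.d * (u 3 + D.β₁ * u 4)] := by
  ext i; fin_cases i <;> simp [Ci, A_apply, B_apply, Ai_apply] <;> ring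

/-- The obstruction vanishes on the basis vector `ba'b'` when `δ = 1` and the conditions hold. -/
theorem Fv (h1 : D.δ = 1) (h4 : D.β₂ = D.β₁) (h5 : D.γ₃ = D.γ₁): D.F ![0,0,0,0,1,0] = 0 := by
  have q1 := D.δδ'
  have q2 := D.cd
  have q3 : D.γ₂ = -D.c^2+D.γ₁*D.c+D.γ₁*D.d-D.d^2 := by have := D.quartic; simp only [h1,h5] at *; linear_combination this
  have q4 : D.δ' = 1 := by simpa [h1] using q1
  ext i
  fin_cases i <;> simp [F, C_apply, Ci_apply]
  all_goals simp only [p₀,p₁,p₂,p₃,q3,q4,h1,h4,h5]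
  all_goals clear q3 q1 h1 h4 h5 q4
  all_goals grind

/-- The obstruction vanishes on the basis vector `ba'b'` when `δ = -1` and the conditions hold. -/
theorem Fv_neg (h1 : D.δ = -1) (h2 : D.α = 0) (h3 : D.γ₂ = 0) (h4 : D.β₂ = D.β₁)
    (h5 : D.γ₃ = D.γ₁) : D.F ![0,0,0,0,1,0] = 0 := by
  have q1 := D.δδ'
  have q2 := D.cd
  have q3 : D.d^2 = D.c^2-D.γ₁*D.c-D.γ₁*D.d := by have := D.quartic; simp only [h1,h3,h5] at *; linear_combination -this
  have q4 : D.δ' = -1 := by simp [h1] at q1; linear_combination -q1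
  ext i
  fin_cases i <;> simp [F, C_apply, Ci_apply]
  all_goals simp only [p₀,p₁,p₂,p₃,h2,h3,q4,h1,h4,h5]
  all_goals clear q1 h1 h4 h5 q4
  all_goals grind
end Datum

/-! ### The straightening rule -/

/-- Elements `a, b, c` of a `ℂ`-algebra satisfying the relations of `Ã₊(2,3,4)` normalised so that
`α₂ = β₃ = 1`; the constant term of the quartic is called `δ`. -/
structure IsTriple {X : Type*} [Ring X] [Algebra ℂ X] (α β₁ β₂ γ₁ γ₂ γ₃ δ : ℂ) (a b c : X) : Prop where
  abc : a * b * c = 1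
  sq : a * a = α • a - 1
  cube : b * b * b = β₁ • (b * b) - β₂ • b + 1
  quartic : c * c * c * c = γ₁ • (c * c * c) - γ₂ • (c * c) + γ₃ • c - δ • 1

namespace IsTriple
variable {X : Type*} [Ring X] [Algebra ℂ X] {α β₁ β₂ γ₁ γ₂ γ₃ δ : ℂ} {a b c : X}
  (h : IsTriple α β₁ β₂ γ₁ γ₂ γ₃ δ a b c)
include h

/-- The straightening rule for `b'a'b'`, where `a' = a⁻¹` and `b' = b⁻¹`: it follows from `b'a'b' = cb'`
on replacing `c` by `γ₁ - γ₂(ab) + γ₃(ab)² - δ(ab)³` and rewriting `aba` through `ba'`. All words on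
the right are combinations of `1, a', b', a'b'` times powers of `c`, apart from `a(ba'b')c`. -/
theorem word_relation {a' b' : X} (ha' : a' = α • 1 - a) (hb' : b' = b * b - β₁ • b + β₂ • 1) :
    b' * a' * b' = γ₁ • b' - γ₂ • a + γ₃ • (α • (a * b) - a * b' * c - β₁ • 1 + β₂ • (a * c))
      - δ • (α • (a * b * (a * b)) - α • (a * c) + a * (b * a' * b') * c - β₁ • (a * b)
        + β₂ • ((α • (a * b) - a * b' * c - β₁ • 1 + β₂ • (a * c)) * c)) := by
  have a1 : a * a' = 1 := by rw [ha', mul_sub, h.sq]; simp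
  have a2 : a' * a = 1 := by rw [ha', sub_mul, h.sq]; simp
  have b1 : b * b' = 1 := by
    rw [hb']; simp only [mul_add, mul_sub, ← mul_assoc, h.cube, mul_smul_comm, mul_one]; module
  have b2 : b' * b = 1 := by
    rw [hb']; simp only [add_mul, sub_mul, h.cube, smul_mul_assoc, one_mul]; module
  have bc : b * c = a' := by
    calc b * c = a' * (a * b * c) := by rw [mul_assoc a, ← mul_assoc a', a2, one_mul]
      _ = a' := by rw [h.abc, mul_one]
  have hc : c = b' * a' := by rw [← bc, ← mul_assoc, b2, one_mul]
  have cc' : c * (a * b) = 1 := by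
    rw [hc, mul_assoc, ← mul_assoc a', a2, one_mul, b2]
  have ab' : a * b * b' = a := by rw [mul_assoc, b1, mul_one]
  -- the product `b a'`
  have ba' : b * a' = b' * c + β₁ • a' - β₂ • c := by
    rw [hb']
    simp only [add_mul, sub_mul, smul_mul_assoc, one_mul, mul_assoc, bc]; module
  have aba : a * b * a = α • (a * b) - a * b' * c - β₁ • 1 + β₂ • (a * c) := by
    have : a = α • 1 - a' := by rw [ha']; module
    calc a * b * a = α • (a * b) - a * (b * a') := by
          conv_lhs => rw [show a * b * a = a * b * (α • 1 - a') by rw [← this]]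
          rw [mul_sub, mul_smul_comm, mul_one, mul_assoc]
      _ = _ := by
          rw [ba', mul_sub, mul_add, mul_smul_comm, mul_smul_comm, a1, mul_assoc]; module
  have q : c * b' = γ₁ • b' - γ₂ • a + γ₃ • (a * b * a) - δ • (a * b * (a * b * a)) := by
    have e : c = γ₁ • 1 - γ₂ • (a * b) + γ₃ • (a * b * (a * b))
        - δ • (a * b * (a * b) * (a * b)) := by
      have e0 := congrArg (· * ((a * b) * (a * b) * (a * b))) h.quartic
      have c3 : c * c * c * ((a * b) * (a * b) * (a * b)) = 1 := by
        simp only [mul_assoc c, mul_assoc (a * b)]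
        rw [← mul_assoc c (a * b), cc', one_mul, ← mul_assoc c (a * b), cc', one_mul, cc']
      have c2 : c * c * ((a * b) * (a * b) * (a * b)) = a * b := by
        simp only [mul_assoc c, mul_assoc (a * b)]
        rw [← mul_assoc c (a * b), cc', one_mul, ← mul_assoc c (a * b), cc', one_mul]
      have c1 : c * ((a * b) * (a * b) * (a * b)) = a * b * (a * b) := by
        simp only [mul_assoc (a * b)]
        rw [← mul_assoc c (a * b), cc', one_mul]
      simp only [sub_mul, add_mul, smul_mul_assoc, one_mul, c1, c2, c3] at e0
      have e5 : c * c * c * c = c * (c * c * c) := by simp only [mul_assoc]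
      rw [← e0, e5, mul_assoc, c3, mul_one]
    conv_lhs => rw [e]
    simp only [sub_mul, add_mul, smul_mul_assoc, one_mul]
    rw [ab', mul_assoc (a * b) (a * b) b', ab', mul_assoc (a * b) (a * b) (a * b),
      mul_assoc (a * b) (a * b * (a * b)) b', mul_assoc (a * b) (a * b) b', ab']
  have bab' : a * b * (a * b' * c) = α • (a * c) - a * (b * a' * b') * c := by
    have : a = α • 1 - a' := by rw [ha']; module
    calc a * b * (a * b' * c) = a * (b * (α • 1 - a') * b') * c := by
          rw [← this]; simp only [mul_assoc]
      _ = _ := by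
          simp only [mul_sub, sub_mul, mul_smul_comm, smul_mul_assoc, mul_one, b1]
  have e1 : b' * a' * b' = c * b' := by rw [hc]
  rw [e1, q]
  have e2 : a * b * (a * b * a) = α • (a * b * (a * b)) - a * b * (a * b' * c) - β₁ • (a * b)
      + β₂ • (a * b * a * c) := by
    conv_lhs => rw [aba]
    simp only [mul_sub, mul_add, mul_smul_comm, mul_one, mul_assoc]
  rw [e2, bab', aba]
  module
end IsTriple

/-! ### The spanning map -/

open Polynomial

/-- The quartic polynomial satisfied by `c`. -/
def quart (γ₁ γ₂ γ₃ δ : ℂ) : ℂ[X] :=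
  X ^ 4 - Polynomial.C γ₁ * X ^ 3 + Polynomial.C γ₂ * X ^ 2 - Polynomial.C γ₃ * X + Polynomial.C δ

theorem quart_root (γ₁ γ₂ γ₃ δ : ℂ) : (AdjoinRoot.root (quart γ₁ γ₂ γ₃ δ)) ^ 4
    - algebraMap ℂ _ γ₁ * (AdjoinRoot.root (quart γ₁ γ₂ γ₃ δ)) ^ 3
    + algebraMap ℂ _ γ₂ * (AdjoinRoot.root (quart γ₁ γ₂ γ₃ δ)) ^ 2
    - algebraMap ℂ _ γ₃ * AdjoinRoot.root (quart γ₁ γ₂ γ₃ δ) + algebraMap ℂ _ δ = 0 := by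
  have h : Polynomial.aeval (AdjoinRoot.root (quart γ₁ γ₂ γ₃ δ)) (quart γ₁ γ₂ γ₃ δ) = 0 := by
    rw [AdjoinRoot.aeval_eq, AdjoinRoot.mk_self]
  conv at h => lhs; arg 2; rw [quart]
  simpa only [map_add, map_sub, map_mul, map_pow, aeval_X, aeval_C] using h

/-- The generic datum: `c` is the class of the variable in `R = ℂ[X]/(quartic)`. -/
def dat (α β₁ β₂ γ₁ γ₂ γ₃ : ℂ) {δ : ℂ} (hδ : δ ≠ 0) : Datum (AdjoinRoot (quart γ₁ γ₂ γ₃ δ)) where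
  α := algebraMap ℂ _ α
  β₁ := algebraMap ℂ _ β₁
  β₂ := algebraMap ℂ _ β₂
  γ₁ := algebraMap ℂ _ γ₁
  γ₂ := algebraMap ℂ _ γ₂
  γ₃ := algebraMap ℂ _ γ₃
  δ := algebraMap ℂ _ δ
  δ' := algebraMap ℂ _ δ⁻¹
  c := AdjoinRoot.root _
  d := algebraMap ℂ _ δ⁻¹ * (-(AdjoinRoot.root _) ^ 3 + algebraMap ℂ _ γ₁ * (AdjoinRoot.root _) ^ 2
    - algebraMap ℂ _ γ₂ * AdjoinRoot.root _ + algebraMap ℂ _ γ₃)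
  δδ' := by rw [← map_mul, mul_inv_cancel₀ hδ, map_one]
  cd := by
    have h := quart_root γ₁ γ₂ γ₃ δ
    have h' : algebraMap ℂ (AdjoinRoot (quart γ₁ γ₂ γ₃ δ)) δ * algebraMap ℂ _ δ⁻¹ = 1 := by
      rw [← map_mul, mul_inv_cancel₀ hδ, map_one]
    linear_combination h' - algebraMap ℂ _ δ⁻¹ * h
  quartic := by
    have h := quart_root γ₁ γ₂ γ₃ δ
    have h' : algebraMap ℂ (AdjoinRoot (quart γ₁ γ₂ γ₃ δ)) δ * algebraMap ℂ _ δ⁻¹ = 1 := by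
      rw [← map_mul, mul_inv_cancel₀ hδ, map_one]
    generalize algebraMap ℂ (AdjoinRoot (quart γ₁ γ₂ γ₃ δ)) δ⁻¹ = e at *
    grind

namespace IsTriple
variable {X : Type*} [Ring X] [Algebra ℂ X] {α β₁ β₂ γ₁ γ₂ γ₃ δ : ℂ} {a b c : X}
  (h : IsTriple α β₁ β₂ γ₁ γ₂ γ₃ δ a b c)
include h

theorem aeval_quart : Polynomial.aeval c (quart γ₁ γ₂ γ₃ δ) = 0 := by
  have := h.quartic
  simp only [quart, map_add, map_sub, map_mul, map_pow, aeval_X, aeval_C, ← Algebra.smul_def]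
  have e : c ^ 4 = c * c * c * c := by simp only [pow_succ, pow_zero, one_mul]
  have e3 : c ^ 3 = c * c * c := by simp only [pow_succ, pow_zero, one_mul]
  rw [e, this, e3, pow_two, Algebra.algebraMap_eq_smul_one]
  module

/-- The algebra map `R → X` sending the class of the variable to `c`. As `X` need not be commutative,
it is built from the ideal quotient underlying `AdjoinRoot`. -/
def φ : AdjoinRoot (quart γ₁ γ₂ γ₃ δ) →ₐ[ℂ] X :=
  Ideal.Quotient.liftₐ (Ideal.span {quart γ₁ γ₂ γ₃ δ}) (Polynomial.aeval c) (by
    intro p hp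
    obtain ⟨q, rfl⟩ := Ideal.mem_span_singleton'.1 hp
    rw [map_mul, h.aeval_quart, mul_zero])

theorem φ_root : h.φ (AdjoinRoot.root _) = c := by
  have : h.φ (AdjoinRoot.root _) = Polynomial.aeval c Polynomial.X := rfl
  rw [this, aeval_X]

theorem cab : c * (a * b) = 1 := by
  have e0 : (b * b - β₁ • b + β₂ • 1) * b = 1 := by
    simp only [sub_mul, add_mul, smul_mul_assoc, h.cube, one_mul]; module
  have e1 : (α • 1 - a) * a = 1 := by
    simp only [sub_mul, smul_mul_assoc, h.sq, one_mul]; module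
  have e : (b * b - β₁ • b + β₂ • 1) * (α • 1 - a) * (a * b) = 1 := by
    rw [mul_assoc, ← mul_assoc _ a b, e1, one_mul, e0]
  have := left_inv_eq_right_inv e h.abc
  rw [← this, e]

theorem φ_d (hδ : δ ≠ 0) : h.φ (dat α β₁ β₂ γ₁ γ₂ γ₃ hδ).d = a * b := by
  have e1 : c * h.φ (dat α β₁ β₂ γ₁ γ₂ γ₃ hδ).d = 1 := by
    have := congrArg h.φ (dat α β₁ β₂ γ₁ γ₂ γ₃ hδ).cd
    rw [map_mul, map_one] at this
    rwa [show (dat α β₁ β₂ γ₁ γ₂ γ₃ hδ).c = AdjoinRoot.root _ from rfl, h.φ_root] at this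
  exact (left_inv_eq_right_inv h.abc e1).symm

/-- The six words `1, a', b', a'b', ba'b', b'a'b'` with `a' = a⁻¹` and `b' = b⁻¹`. -/
def w (_h : IsTriple α β₁ β₂ γ₁ γ₂ γ₃ δ a b c) : Fin 6 → X :=
  ![1, α • 1 - a, b * b - β₁ • b + β₂ • 1,
    (α • 1 - a) * (b * b - β₁ • b + β₂ • 1),
    b * (α • 1 - a) * (b * b - β₁ • b + β₂ • 1),
    (b * b - β₁ • b + β₂ • 1) * (α • 1 - a) * (b * b - β₁ • b + β₂ • 1)]

/-- The `ℂ`-linear map `R⁶ → X`, `u ↦ ∑ wⱼ φ(uⱼ)`. -/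
def Φ : (Fin 6 → AdjoinRoot (quart γ₁ γ₂ γ₃ δ)) →ₗ[ℂ] X where
  toFun u := ∑ j, h.w j * h.φ (u j)
  map_add' u v := by simp only [Pi.add_apply, map_add, mul_add, Finset.sum_add_distrib]
  map_smul' r u := by simp only [Pi.smul_apply, map_smul, mul_smul_comm, Finset.smul_sum,
      RingHom.id_apply]

theorem Φ_apply (u) : h.Φ u = ∑ j, h.w j * h.φ (u j) := rfl

/-- `IsTriple.word_relation` in collected form: `b'a'b' = φ(p₀) + a'φ(p₁) + b'φ(p₂) + a'b'φ(p₃) - δ a(ba'b')c`. -/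
theorem t_eq (hδ : δ ≠ 0) {a' b' : X} (ha' : a' = α • 1 - a) (hb' : b' = b * b - β₁ • b + β₂ • 1) :
    b' * a' * b' = h.φ (dat α β₁ β₂ γ₁ γ₂ γ₃ hδ).p₀ + a' * h.φ (dat α β₁ β₂ γ₁ γ₂ γ₃ hδ).p₁
      + b' * h.φ (dat α β₁ β₂ γ₁ γ₂ γ₃ hδ).p₂ + a' * b' * h.φ (dat α β₁ β₂ γ₁ γ₂ γ₃ hδ).p₃
      - δ • (a * (b * a' * b') * c) := by
  have e := h.word_relation ha' hb'
  have abc : a * b * c = 1 := h.abc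
  have ea : a = α • 1 - a' := by rw [ha']; module
  set D := dat α β₁ β₂ γ₁ γ₂ γ₃ hδ with hD
  have c0 : h.φ D.c = c := h.φ_root
  have d0 : h.φ D.d = a * b := h.φ_d hδ
  have P0 : D.p₀ = (-(α * γ₂)) • 1 + (γ₃ * α) • D.d - (γ₃ * β₁) • 1 + (γ₃ * β₂ * α) • D.c
      - (δ * α) • (D.d * D.d) + (δ * α * α) • D.c + (δ * β₁) • D.d - (δ * β₂ * α) • (D.d * D.c)
      + (δ * β₂ * β₁) • D.c - (δ * β₂ * β₂ * α) • (D.c * D.c) := by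
    have q := D.quartic
    have q2 := D.cd
    simp only [Algebra.smul_def, map_mul, map_neg]
    change D.p₀ = (-(D.α * D.γ₂)) * 1 + (D.γ₃ * D.α) * D.d - (D.γ₃ * D.β₁) * 1
        + (D.γ₃ * D.β₂ * D.α) * D.c
      - (D.δ * D.α) * (D.d * D.d) + (D.δ * D.α * D.α) * D.c + (D.δ * D.β₁) * D.d
          - (D.δ * D.β₂ * D.α) * (D.d * D.c)
      + (D.δ * D.β₂ * D.β₁) * D.c - (D.δ * D.β₂ * D.β₂ * D.α) * (D.c * D.c)
    rw [Datum.p₀]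
    linear_combination D.α * q + D.δ * D.β₂ * D.α * q2
  have P1 : D.p₁ = γ₂ • 1 - (β₂ * γ₃) • D.c + (δ * β₂ * β₂) • (D.c * D.c) - (α * δ) • D.c := by
    simp only [Algebra.smul_def, map_mul]
    change D.p₁ = D.γ₂ * 1 - (D.β₂ * D.γ₃) * D.c + (D.δ * D.β₂ * D.β₂) * (D.c * D.c)
        - (D.α * D.δ) * D.c
    rw [Datum.p₁]; ring
  have P2 : D.p₂ = γ₁ • 1 - (α * γ₃) • D.c + (α * β₂ * δ) • (D.c * D.c) := by
    simp only [Algebra.smul_def, map_mul]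
    change D.p₂ = D.γ₁ * 1 - (D.α * D.γ₃) * D.c + (D.α * D.β₂ * D.δ) * (D.c * D.c)
    rw [Datum.p₂]; ring
  have P3 : D.p₃ = γ₃ • D.c - (β₂ * δ) • (D.c * D.c) := by
    simp only [Algebra.smul_def, map_mul]
    change D.p₃ = D.γ₃ * D.c - (D.β₂ * D.δ) * (D.c * D.c)
    rw [Datum.p₃]; ring
  rw [e, P0, P1, P2, P3]
  simp only [map_add, map_sub, map_smul, map_mul, map_one, c0, d0, abc, sub_mul, add_mul,
      smul_mul_assoc, one_mul]
  have e1 : a * c = α • c - a' * c := by conv_lhs => rw [ea, sub_mul, smul_mul_assoc, one_mul]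
  have e2 : a * b' = α • b' - a' * b' := by conv_lhs => rw [ea, sub_mul, smul_mul_assoc, one_mul]
  rw [e1, e2]
  have e3 : γ₂ • a = γ₂ • (α • 1 - a') := by rw [← ea]
  rw [e3]
  simp only [mul_add, mul_sub, mul_smul_comm, sub_mul, smul_mul_assoc, mul_one, mul_assoc]
  module

/-- `Φ` intertwines `Ai` with left multiplication by `a⁻¹ = α - a`. -/
theorem col_a (hδ : δ ≠ 0) (u) : h.Φ ((dat α β₁ β₂ γ₁ γ₂ γ₃ hδ).Ai u) = (α • 1 - a) * h.Φ u := by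
  obtain ⟨a', ha'⟩ : ∃ a', a' = α • 1 - a := ⟨_, rfl⟩
  obtain ⟨b', hb'⟩ : ∃ b', b' = b * b - β₁ • b + β₂ • 1 := ⟨_, rfl⟩
  have ht := h.t_eq hδ ha' hb'
  have d0 : h.φ (dat α β₁ β₂ γ₁ γ₂ γ₃ hδ).d = a * b := h.φ_d hδ
  have c0 : h.φ (dat α β₁ β₂ γ₁ γ₂ γ₃ hδ).c = c := h.φ_root
  have cab := h.cab
  have ea : a = α • 1 - a' := by rw [ha']; module
  have a2 : a' * a = 1 := by rw [ha', sub_mul, h.sq]; simp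
  have aa : a' * a' = α • a' - 1 := by
    conv_lhs => rw [ha', mul_sub, ← ha', a2, mul_smul_comm, mul_one]
  obtain ⟨v, hv⟩ : ∃ v, v = b * a' * b' := ⟨_, rfl⟩
  obtain ⟨t, htt⟩ : ∃ t, t = b' * a' * b' := ⟨_, rfl⟩
  set D := dat α β₁ β₂ γ₁ γ₂ γ₃ hδ with hD
  rw [← hv, ← htt] at ht
  -- multiply `t_eq` on the left by `a'`, using `a'a = 1`
  have c1 : a' * t = - h.φ D.p₁ + a' * h.φ (D.p₀ + D.α * D.p₁) - b' * h.φ D.p₃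
      + a' * b' * h.φ (D.p₂ + D.α * D.p₃) - v * h.φ (D.δ * D.c) := by
    have k : ∀ r, h.φ (D.α * r) = α • h.φ r := fun r => by
      rw [show D.α * r = α • r from (Algebra.smul_def _ _).symm, map_smul]
    have k2 : ∀ r, h.φ (D.δ * r) = δ • h.φ r := fun r => by
      rw [show D.δ * r = δ • r from (Algebra.smul_def _ _).symm, map_smul]
    rw [ht]
    simp only [mul_add, mul_sub, map_add, k, k2, c0, mul_smul_comm, ← mul_assoc, aa, a2, sub_mul,
        one_mul, smul_mul_assoc]
    module
  -- solve `t_eq` for `av`, using `c(ab) = 1`, and substitute in `a'v = αv - av`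
  have c2 : a' * v = - h.φ (D.δ' * D.d * D.p₀) - a' * h.φ (D.δ' * D.d * D.p₁)
      - b' * h.φ (D.δ' * D.d * D.p₂) - a' * b' * h.φ (D.δ' * D.d * D.p₃) + α • v
      + t * h.φ (D.δ' * D.d) := by
    have k2 : ∀ r, h.φ (D.δ' * D.d * r) = δ⁻¹ • (h.φ r * (a * b)) := fun r => by
      have e : D.δ' * D.d * r = δ⁻¹ • (r * D.d) := by
        rw [Algebra.smul_def]; change _ = D.δ' * _; ring
      rw [e, map_smul, map_mul, d0]
    have k3 : h.φ (D.δ' * D.d) = δ⁻¹ • (a * b) := by rw [← mul_one (D.δ' * D.d), k2, map_one,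
        one_mul]
    have e1 : a * v = δ⁻¹ • ((h.φ D.p₀ + a' * h.φ D.p₁ + b' * h.φ D.p₂ + a' * b' * h.φ D.p₃
        - t) * (a * b)) := by
      have : a * v * c = δ⁻¹ • (h.φ D.p₀ + a' * h.φ D.p₁ + b' * h.φ D.p₂ + a' * b' * h.φ D.p₃
          - t) := by
        rw [eq_inv_smul_iff₀ hδ, ht]; abel
      rw [← smul_mul_assoc, ← this, mul_assoc _ c, cab, mul_one]
    have e2 : a' * v = α • v - a * v := by rw [ha', sub_mul, smul_mul_assoc, one_mul]
    rw [e2, e1, k2, k2, k2, k2, k3]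
    simp only [sub_mul, add_mul, mul_smul_comm, mul_assoc]
    module
  have k : ∀ r, h.φ (D.α * r) = α • h.φ r := fun r => by
    rw [show D.α * r = α • r from (Algebra.smul_def _ _).symm, map_smul]
  have w0 : h.w = ![1, a', b', a' * b', v, t] := by rw [hv, htt, ha', hb']; rfl
  rw [← ha', Φ_apply, Φ_apply, w0]
  simp only [Fin.sum_univ_six, Datum.Ai_apply]
  simp [mul_add, ← mul_assoc, aa, c1, c2, -map_add, -map_mul]
  simp only [map_add, map_sub, k, mul_add, mul_sub, mul_neg, add_mul, sub_mul, neg_mul, map_mul,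
      mul_smul_comm, smul_mul_assoc, one_mul, ← mul_assoc]
  module

/-- `Φ` intertwines `Bi` with left multiplication by `b⁻¹ = b² - β₁b + β₂`. -/
theorem col_b (hδ : δ ≠ 0) (u) : h.Φ ((dat α β₁ β₂ γ₁ γ₂ γ₃ hδ).Bi u)
    = (b * b - β₁ • b + β₂ • 1) * h.Φ u := by
  obtain ⟨a', ha'⟩ : ∃ a', a' = α • 1 - a := ⟨_, rfl⟩
  obtain ⟨b', hb'⟩ : ∃ b', b' = b * b - β₁ • b + β₂ • 1 := ⟨_, rfl⟩
  have d0 : h.φ (dat α β₁ β₂ γ₁ γ₂ γ₃ hδ).d = a * b := h.φ_d hδ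
  have c0 : h.φ (dat α β₁ β₂ γ₁ γ₂ γ₃ hδ).c = c := h.φ_root
  have a2 : a' * a = 1 := by rw [ha', sub_mul, h.sq]; simp
  have b2 : b' * b = 1 := by
    rw [hb']; simp only [add_mul, sub_mul, h.cube, smul_mul_assoc, one_mul]; module
  have bc : b * c = a' := by
    calc b * c = a' * (a * b * c) := by rw [mul_assoc a, ← mul_assoc a', a2, one_mul]
      _ = a' := by rw [h.abc, mul_one]
  have hc : b' * a' = c := by rw [← bc, ← mul_assoc, b2, one_mul]
  have bb : b' * b' = b - β₁ • 1 + β₂ • b' := by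
    conv_lhs => rw [hb']
    rw [← hb']
    have : b' * b' = b' * (b * b - β₁ • b + β₂ • 1) := by rw [← hb']
    rw [this]
    simp only [mul_add, mul_sub, ← mul_assoc, mul_smul_comm, b2, one_mul, mul_one]
  obtain ⟨v, hv⟩ : ∃ v, v = b * a' * b' := ⟨_, rfl⟩
  obtain ⟨t, htt⟩ : ∃ t, t = b' * a' * b' := ⟨_, rfl⟩
  set D := dat α β₁ β₂ γ₁ γ₂ γ₃ hδ with hD
  have k1 : ∀ r, h.φ (D.β₁ * r) = β₁ • h.φ r := fun r => by
    rw [show D.β₁ * r = β₁ • r from (Algebra.smul_def _ _).symm, map_smul]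
  have k2 : ∀ r, h.φ (D.β₂ * r) = β₂ • h.φ r := fun r => by
    rw [show D.β₂ * r = β₂ • r from (Algebra.smul_def _ _).symm, map_smul]
  have c3 : c * b' = t := by rw [htt, hc]
  have c4 : b' * v = a' * b' := by rw [hv, ← mul_assoc, ← mul_assoc, b2, one_mul]
  have c5 : b' * t = v - β₁ • (a' * b') + β₂ • t := by
    rw [htt, hv, mul_assoc, ← mul_assoc b' b', bb]
    simp only [add_mul, sub_mul, smul_mul_assoc, one_mul, mul_assoc]
  have ad : a' * (a * b) = b := by rw [← mul_assoc, a2, one_mul]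
  have w0 : h.w = ![1, a', b', a' * b', v, t] := by rw [hv, htt, ha', hb']; rfl
  rw [← hb', Φ_apply, Φ_apply, w0]
  simp only [Fin.sum_univ_six, Datum.Bi_apply]
  simp [mul_add, mul_sub, k1, k2, c0, d0]
  simp only [← mul_assoc b', hc, bb, ← mul_assoc a' (a * b), ad]
  rw [c3, c4, c5]
  simp only [add_mul, sub_mul, smul_mul_assoc, one_mul]
  module
end IsTriple

/-! ### Vanishing of the obstruction -/

namespace Datum
variable {R : Type*} [CommRing R] (D : Datum R)
/-- An entry of `F`, multiplied by `δ³c` so that it becomes a polynomial in `c` of degree at most `3`. -/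
theorem Fv4 : D.δ^3*D.c*D.F ![0,0,0,0,1,0] 4
    = (D.δ^6-1)*D.c^3+(D.γ₁-D.γ₃*D.δ^4)*D.c^2+(D.δ^3-1)*D.γ₂*D.c+(D.γ₃-D.γ₁*D.δ^2) := by
  have q0 : D.F ![0,0,0,0,1,0] 4 = (D.δ' * D.d)^2 - D.γ₁*D.δ'*D.d + D.γ₂ - D.γ₃*D.δ*D.c
      + D.δ^3*D.c^2 := by
    simp [F, C_apply, Ci_apply]; ring
  rw [q0]
  have q1 := D.δδ'
  have q2 := D.cd
  have q3 := D.quartic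
  grind

/-- Another entry of `F`, again multiplied by `δ³c`. -/
theorem Fv5 : D.δ^3*D.c*D.F ![0,0,0,0,1,0] 5 = (-D.β₂+D.β₁*D.δ^2)*D.c^3
    + (D.β₂*D.γ₁-D.β₁*D.γ₁*D.δ^2-D.α*D.δ^2+D.α*D.δ^5)*D.c^2
   + (D.β₂*D.δ^2-D.β₂*D.γ₂-D.β₁*D.δ^4+D.β₁*D.γ₂*D.δ^2-D.α*D.γ₃*D.δ^3+D.α*D.γ₁*D.δ^2)*D.c
       + (-D.γ₃*D.δ+D.γ₁*D.δ^3+D.β₂*D.γ₃-D.β₂*D.γ₁*D.δ^2+D.α*D.β₂*D.δ^3-D.α*D.β₁*D.δ^2) := by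
  have q1 := D.δδ'
  have q2 := D.cd
  have q3 := D.quartic
  have q4 : D.p₂ + D.α * D.p₃ = D.γ₁ := by simp only [p₂,p₃]; ring
  simp [F, C_apply, Ci_apply]
  simp only [q4]
  simp only [p₀,p₂,p₃]
  grind

theorem Ai_A : D.Ai * D.A = 1 := by
  rw [A, mul_sub, Ai_sq, mul_smul_comm, mul_one]; abel

theorem A_Ai : D.A * D.Ai = 1 := by
  rw [A, sub_mul, Ai_sq, smul_mul_assoc, one_mul]; abel

theorem Bi_B : D.Bi * D.B = 1 := by
  rw [B, mul_add, mul_sub, Bi_cube, mul_smul_comm, mul_smul_comm, mul_one]; abel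

theorem B_Bi : D.B * D.Bi = 1 := by
  rw [B, add_mul, sub_mul, mul_assoc, Bi_cube, smul_mul_assoc, smul_mul_assoc, one_mul]; abel

theorem C_Ci : D.C * D.Ci = 1 := by
  rw [C, Ci, mul_assoc, ← mul_assoc D.Ai, Ai_A, one_mul, Bi_B]

theorem Ci_C : D.Ci * D.C = 1 := by
  rw [C, Ci, mul_assoc, ← mul_assoc D.B, B_Bi, one_mul, A_Ai]

theorem F_C (u) : D.F (D.C u) = D.C (D.F u) := by
  have : D.F * D.C = D.C * D.F := by
    have e1 := D.C_Ci
    have e2 := D.Ci_C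
    simp only [F, mul_add, add_mul, mul_sub, sub_mul, mul_smul_comm, smul_mul_assoc, one_mul,
        mul_one, mul_assoc, e2]
    rw [e1, ← mul_assoc D.C D.Ci D.Ci, e1, one_mul]
  rw [← Module.End.mul_apply, this, Module.End.mul_apply]

theorem F_Ci (u) : D.F (D.Ci u) = D.Ci (D.F u) := by
  have h := D.F_C (D.Ci u)
  rw [← Module.End.mul_apply D.C D.Ci, C_Ci, Module.End.one_apply] at h
  rw [h, ← Module.End.mul_apply D.Ci D.C, Ci_C, Module.End.one_apply]

/-- It suffices to check that `F` kills the basis vector `ba'b'`: `F` commutes with `C` and `Ci`, and the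
remaining basis vectors are reached from `1` and `b'` by applying these operators. -/
theorem F_eq_zero (hv : D.F ![0,0,0,0,1,0] = 0) : D.F = 0 := by
  have hx0 := D.Fe
  have hy := D.Fy
  have ht : D.F ![0,0,0,0,0,1] = 0 := by
    have := D.F_C ![0,0,1,0,0,0]
    rw [hy, map_zero] at this
    rw [← this]; congr 1
    ext i; fin_cases i <;> simp [C_apply]
  have hx : D.F ![0,1,0,0,0,0] = 0 := by
    have := D.F_Ci ![0,0,1,0,0,0]
    rw [hy, map_zero] at this
    have e : (![0,1,0,0,0,0] : Fin 6 → R) = D.α • ![1,0,0,0,0,0] - D.Ci ![0,0,1,0,0,0] := by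
      ext i; fin_cases i <;> simp [Ci_apply]
    rw [e, map_sub, map_smul, hx0, this]; simp
  have hz : D.F ![0,0,0,1,0,0] = 0 := by
    have := D.F_Ci ![0,1,0,0,0,0]
    rw [hx, map_zero] at this
    have cd := D.cd
    have e : (![0,0,0,1,0,0] : Fin 6 → R) = (D.d * (D.β₁ - D.α * D.β₂ * D.c)) • ![1,0,0,0,0,0]
        + (D.d * D.β₂ * D.c) • ![0,1,0,0,0,0] + (D.d * D.α * D.c) • ![0,0,1,0,0,0]
        - D.d • D.Ci ![0,1,0,0,0,0] := by
      ext i; fin_cases i <;> simp [Ci_apply] <;> grind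
    rw [e, map_sub, map_add, map_add, map_smul, map_smul, map_smul, map_smul, hx0, hx, hy,
        this]; simp
  refine LinearMap.ext fun u => ?_
  have e : u = u 0 • ![1,0,0,0,0,0] + u 1 • ![0,1,0,0,0,0] + u 2 • ![0,0,1,0,0,0]
      + u 3 • ![0,0,0,1,0,0] + u 4 • ![0,0,0,0,1,0] + u 5 • ![0,0,0,0,0,1] := by
    ext i; fin_cases i <;> simp
  rw [e]
  simp only [map_add, map_smul, hx0, hx, hy, hz, hv, ht]; simp
end Datum

section rep
variable (α β₁ β₂ γ₁ γ₂ γ₃ : ℂ) {δ : ℂ} (hδ : δ ≠ 0)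

/-- If the obstruction vanishes, `A, B, C` satisfy the normalised relations. -/
theorem isTriple_End (hF : (dat α β₁ β₂ γ₁ γ₂ γ₃ hδ).F = 0) :
    IsTriple α β₁ β₂ γ₁ γ₂ γ₃ δ (dat α β₁ β₂ γ₁ γ₂ γ₃ hδ).A (dat α β₁ β₂ γ₁ γ₂ γ₃ hδ).B
      (dat α β₁ β₂ γ₁ γ₂ γ₃ hδ).C := by
  set D := dat α β₁ β₂ γ₁ γ₂ γ₃ hδ with hD
  have k : ∀ (z : ℂ) (f : Module.End (AdjoinRoot (quart γ₁ γ₂ γ₃ δ)) (Fin 6 → AdjoinRoot (quart γ₁ γ₂ γ₃ δ))),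
      z • f = (algebraMap ℂ (AdjoinRoot (quart γ₁ γ₂ γ₃ δ)) z) • f := fun z f => by
    refine LinearMap.ext fun u => ?_
    rw [LinearMap.smul_apply, LinearMap.smul_apply, algebraMap_smul]
  constructor
  · exact D.Ci_C
  · rw [k]
    change D.A * D.A = D.α • D.A - 1
    have : D.Ai = D.α • 1 - D.A := by rw [Datum.A]; abel
    have e := D.A_Ai
    rw [this, mul_sub, mul_smul_comm, mul_one] at e
    rw [← e]; abel
  · rw [k, k]
    change D.B * D.B * D.B = D.β₁ • (D.B * D.B) - D.β₂ • D.B + 1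
    have e := congrArg (fun f => D.B * (D.B * (D.B * f))) D.Bi_cube
    have b2 := D.B_Bi
    simp only [mul_add, mul_sub, mul_smul_comm, mul_one] at e
    have b3 : ∀ f, D.B * (D.Bi * f) = f := fun f => by rw [← mul_assoc, b2, one_mul]
    simp only [b3, b2, mul_one] at e
    rw [e, mul_assoc]; abel
  · rw [k, k, k, k]
    change D.C * D.C * D.C * D.C = D.γ₁ • (D.C * D.C * D.C) - D.γ₂ • (D.C * D.C) + D.γ₃ • D.C
        - D.δ • 1
    have e := congrArg (fun f => D.C * (D.C * f)) hF
    have b2 := D.C_Ci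
    simp only [Datum.F, mul_add, mul_sub, mul_smul_comm, mul_one, mul_zero] at e
    have b3 : ∀ f, D.C * (D.Ci * f) = f := fun f => by rw [← mul_assoc, b2, one_mul]
    simp only [b3, b2, mul_one] at e
    simp only [mul_assoc]
    rw [← sub_eq_zero, ← e]; abel

end rep

/-! ### Dimension, necessity and sufficiency for normalised parameters -/

section quart
variable (γ₁ γ₂ γ₃ δ : ℂ)

theorem quart_natDegree : (quart γ₁ γ₂ γ₃ δ).natDegree = 4 := by
  rw [quart]; compute_degree!

theorem quart_monic : (quart γ₁ γ₂ γ₃ δ).Monic := by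
  rw [quart]; monicity!

instance : Module.Finite ℂ (AdjoinRoot (quart γ₁ γ₂ γ₃ δ)) := (quart_monic γ₁ γ₂ γ₃ δ).finite_adjoinRoot

theorem finrank_pi : Module.finrank ℂ (Fin 6 → AdjoinRoot (quart γ₁ γ₂ γ₃ δ)) = 24 := by
  rw [Module.finrank_pi_fintype]
  have : Module.finrank ℂ (AdjoinRoot (quart γ₁ γ₂ γ₃ δ)) = 4 := by
    rw [(AdjoinRoot.powerBasis' (quart_monic γ₁ γ₂ γ₃ δ)).finrank, AdjoinRoot.powerBasis'_dim,
        quart_natDegree]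
  simp [this]

variable {γ₁ γ₂ γ₃ δ} in
/-- `1, c, c², c³` are linearly independent over `ℂ` in `R`. -/
theorem coeffs_eq_zero {z₀ z₁ z₂ z₃ : ℂ}
    (h : algebraMap ℂ (AdjoinRoot (quart γ₁ γ₂ γ₃ δ)) z₃ * AdjoinRoot.root (quart γ₁ γ₂ γ₃ δ) ^ 3
      + algebraMap ℂ _ z₂ * AdjoinRoot.root (quart γ₁ γ₂ γ₃ δ) ^ 2
      + algebraMap ℂ _ z₁ * AdjoinRoot.root (quart γ₁ γ₂ γ₃ δ) + algebraMap ℂ _ z₀ = 0) :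
    z₃ = 0 ∧ z₂ = 0 ∧ z₁ = 0 ∧ z₀ = 0 := by
  have h0 : AdjoinRoot.mk (quart γ₁ γ₂ γ₃ δ) (C z₃ * X ^ 3 + C z₂ * X ^ 2 + C z₁ * X + C z₀)
      = 0 := by
    simpa only [map_add, map_mul, map_pow, AdjoinRoot.mk_X, AdjoinRoot.mk_C,
        ← AdjoinRoot.algebraMap_eq] using h
  rw [AdjoinRoot.mk_eq_zero] at h0
  have h1 := Polynomial.eq_zero_of_dvd_of_natDegree_lt h0 (by
    rw [quart_natDegree]
    refine lt_of_le_of_lt (b := 3) ?_ (by norm_num)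
    compute_degree)
  have k := fun n => congrArg (fun p => coeff p n) h1
  refine ⟨?_, ?_, ?_, ?_⟩
  · simpa [coeff_X, coeff_C] using k 3
  · simpa [coeff_X, coeff_C] using k 2
  · simpa [coeff_X, coeff_C] using k 1
  · simpa [coeff_X, coeff_C] using k 0
end quart

namespace IsTriple
variable {X : Type*} [Ring X] [Algebra ℂ X] {α β₁ β₂ γ₁ γ₂ γ₃ δ : ℂ} {a b c : X}
  (h : IsTriple α β₁ β₂ γ₁ γ₂ γ₃ δ a b c)
include h

theorem Φ_alg_smul (z : ℂ) (u) : h.Φ (algebraMap ℂ (AdjoinRoot (quart γ₁ γ₂ γ₃ δ)) z • u)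
    = z • h.Φ u := by
  rw [algebraMap_smul, map_smul]

theorem Φ_A (hδ : δ ≠ 0) (u) : h.Φ ((dat α β₁ β₂ γ₁ γ₂ γ₃ hδ).A u) = a * h.Φ u := by
  have k := h.Φ_alg_smul α u
  rw [Datum.A_apply, map_sub, col_a]
  change h.Φ (algebraMap ℂ (AdjoinRoot (quart γ₁ γ₂ γ₃ δ)) α • u) - _ = _
  rw [k]
  simp only [sub_mul, smul_mul_assoc, one_mul]; abel

theorem Φ_B (hδ : δ ≠ 0) (u) : h.Φ ((dat α β₁ β₂ γ₁ γ₂ γ₃ hδ).B u) = b * h.Φ u := by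
  obtain ⟨b', hb'⟩ : ∃ b', b' = b * b - β₁ • b + β₂ • 1 := ⟨_, rfl⟩
  have b2 : b' * b = 1 := by
    rw [hb']; simp only [add_mul, sub_mul, h.cube, smul_mul_assoc, one_mul]; module
  have bb : b' * b' = b - β₁ • 1 + β₂ • b' := by
    have : b' * b' = b' * (b * b - β₁ • b + β₂ • 1) := by rw [← hb']
    rw [this]
    simp only [mul_add, mul_sub, ← mul_assoc, mul_smul_comm, b2, one_mul, mul_one]
  set D := dat α β₁ β₂ γ₁ γ₂ γ₃ hδ with hD
  have k1 : h.Φ (D.β₁ • u) = β₁ • h.Φ u := h.Φ_alg_smul β₁ u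
  have k2 : h.Φ (D.β₂ • D.Bi u) = β₂ • h.Φ (D.Bi u) := h.Φ_alg_smul β₂ _
  have e : D.B u = D.Bi (D.Bi u) - D.β₂ • D.Bi u + D.β₁ • u := rfl
  rw [e, map_add, map_sub, k1, k2, col_b, col_b, ← hb', ← mul_assoc, bb]
  simp only [add_mul, sub_mul, smul_mul_assoc, one_mul]; abel

theorem Φ_C (hδ : δ ≠ 0) (u) : h.Φ ((dat α β₁ β₂ γ₁ γ₂ γ₃ hδ).C u) = c * h.Φ u := by
  have a2 : (α • 1 - a) * a = 1 := by rw [sub_mul, h.sq]; simp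
  have b2 : (b * b - β₁ • b + β₂ • 1) * b = 1 := by
    simp only [add_mul, sub_mul, h.cube, smul_mul_assoc, one_mul]; module
  have e : (b * b - β₁ • b + β₂ • 1) * (α • 1 - a) = c := by
    refine left_inv_eq_right_inv (a := a * b) ?_ h.abc
    rw [mul_assoc, ← mul_assoc _ a b, a2, one_mul, b2]
  rw [Datum.C, Module.End.mul_apply, col_b, col_a, ← mul_assoc, e]

theorem Φ_Ci (hδ : δ ≠ 0) (u) : h.Φ ((dat α β₁ β₂ γ₁ γ₂ γ₃ hδ).Ci u) = a * b * h.Φ u := by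
  rw [Datum.Ci, Module.End.mul_apply, Φ_A, Φ_B, mul_assoc]

/-- `Φ` kills the image of the obstruction, since `c` does satisfy its quartic in `X`. -/
theorem Φ_F (hδ : δ ≠ 0) (u) : h.Φ ((dat α β₁ β₂ γ₁ γ₂ γ₃ hδ).F u) = 0 := by
  have q := congrArg h.φ (dat α β₁ β₂ γ₁ γ₂ γ₃ hδ).quartic
  have d0 := h.φ_d hδ
  set D := dat α β₁ β₂ γ₁ γ₂ γ₃ hδ with hD
  have c0 : h.φ D.c = c := h.φ_root
  have k1 : ∀ r, h.φ (D.γ₁ * r) = γ₁ • h.φ r := fun r => by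
    rw [show D.γ₁ * r = γ₁ • r from (Algebra.smul_def _ _).symm, map_smul]
  have k3 : ∀ r, h.φ (D.γ₃ * r) = γ₃ • h.φ r := fun r => by
    rw [show D.γ₃ * r = γ₃ • r from (Algebra.smul_def _ _).symm, map_smul]
  have k4 : ∀ r, h.φ (D.δ * r) = δ • h.φ r := fun r => by
    rw [show D.δ * r = δ • r from (Algebra.smul_def _ _).symm, map_smul]
  have k2 : h.φ D.γ₂ = γ₂ • 1 := by
    rw [show D.γ₂ = algebraMap ℂ _ γ₂ from rfl, AlgHom.commutes, Algebra.algebraMap_eq_smul_one]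
  rw [map_add, map_sub, map_add, map_sub, k1, k2, k3, k4, map_pow, map_pow, c0, d0, map_zero,
      pow_two, pow_two] at q
  have m1 := fun u => h.Φ_alg_smul γ₁ u
  have m2 := fun u => h.Φ_alg_smul γ₂ u
  have m3 := fun u => h.Φ_alg_smul γ₃ u
  have m4 := fun u => h.Φ_alg_smul δ u
  have e : D.F u = D.C (D.C u) - D.γ₁ • D.C u + D.γ₂ • u - D.γ₃ • D.Ci u
      + D.δ • D.Ci (D.Ci u) := rfl
  change ∀ u, h.Φ (D.γ₁ • u) = _ at m1
  change ∀ u, h.Φ (D.γ₂ • u) = _ at m2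
  change ∀ u, h.Φ (D.γ₃ • u) = _ at m3
  change ∀ u, h.Φ (D.δ • u) = _ at m4
  rw [e, map_add, map_sub, map_add, map_sub, m1, m2, m3, m4, Φ_C, Φ_C, Φ_Ci, Φ_Ci, Φ_Ci]
  have := congrArg (· * h.Φ u) q
  simp only [add_mul, sub_mul, smul_mul_assoc, one_mul, zero_mul, mul_assoc] at this ⊢
  exact this

/-- The range of `Φ` contains `1` and is stable under left multiplication by `a, b, c`. The hypothesis
`gen` says that these three elements generate the algebra. -/
theorem Φ_surjective (hδ : δ ≠ 0)
    (gen : ∀ S : Submodule ℂ X, 1 ∈ S → (∀ x ∈ S, a * x ∈ S) → (∀ x ∈ S, b * x ∈ S) →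
      (∀ x ∈ S, c * x ∈ S) → S = ⊤) : Function.Surjective h.Φ := by
  rw [← LinearMap.range_eq_top]
  refine gen _ ⟨Pi.single 0 1, ?_⟩ ?_ ?_ ?_
  · rw [Φ_apply, Finset.sum_eq_single 0]
    · simp [w]
    · intro j _ hj; simp [hj]
    · simp
  · rintro _ ⟨u, rfl⟩
    exact ⟨_, h.Φ_A hδ u⟩
  · rintro _ ⟨u, rfl⟩
    exact ⟨_, h.Φ_B hδ u⟩
  · rintro _ ⟨u, rfl⟩
    exact ⟨_, h.Φ_C hδ u⟩

theorem finrank_eq_iff (hδ : δ ≠ 0)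
    (gen : ∀ S : Submodule ℂ X, 1 ∈ S → (∀ x ∈ S, a * x ∈ S) → (∀ x ∈ S, b * x ∈ S) →
      (∀ x ∈ S, c * x ∈ S) → S = ⊤) :
    Module.finrank ℂ X = 24 ↔ Function.Injective h.Φ := by
  have hs := h.Φ_surjective hδ gen
  have := Module.Finite.of_surjective h.Φ hs
  constructor
  · intro e
    exact (LinearMap.injective_iff_surjective_of_finrank_eq_finrank
      ((finrank_pi γ₁ γ₂ γ₃ δ).trans e.symm)).2 hs
  · intro hi
    rw [← finrank_pi γ₁ γ₂ γ₃ δ]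
    exact (LinearEquiv.ofBijective h.Φ ⟨hi, hs⟩).finrank_eq.symm

theorem necessary (hδ : δ ≠ 0) (hi : Function.Injective h.Φ) :
    δ ^ 6 = 1 ∧ δ ^ 3 * α = α ∧ δ ^ 3 * γ₂ = γ₂ ∧ δ ^ 2 * β₁ = β₂ ∧ δ ^ 2 * γ₁ = γ₃ := by
  have hF : ∀ u, (dat α β₁ β₂ γ₁ γ₂ γ₃ hδ).F u = 0 := fun u =>
    hi (by rw [Φ_F, map_zero])
  have e4 := (dat α β₁ β₂ γ₁ γ₂ γ₃ hδ).Fv4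
  have e5 := (dat α β₁ β₂ γ₁ γ₂ γ₃ hδ).Fv5
  rw [hF, Pi.zero_apply, mul_zero] at e4 e5
  obtain ⟨h1, h2, h3, h4⟩ := coeffs_eq_zero (γ₁ := γ₁) (γ₂ := γ₂) (γ₃ := γ₃) (δ := δ)
    (z₃ := δ ^ 6 - 1) (z₂ := γ₁ - γ₃ * δ ^ 4) (z₁ := (δ ^ 3 - 1) * γ₂) (z₀ := γ₃ - γ₁ * δ ^ 2) (by
      simp only [map_sub, map_mul, map_pow, map_one]
      exact e4.symm)
  obtain ⟨h5, h6, -, -⟩ := coeffs_eq_zero (γ₁ := γ₁) (γ₂ := γ₂) (γ₃ := γ₃) (δ := δ)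
    (z₃ := -β₂ + β₁ * δ ^ 2) (z₂ := β₂ * γ₁ - β₁ * γ₁ * δ ^ 2 - α * δ ^ 2 + α * δ ^ 5)
    (z₁ := β₂ * δ ^ 2 - β₂ * γ₂ - β₁ * δ ^ 4 + β₁ * γ₂ * δ ^ 2 - α * γ₃ * δ ^ 3 + α * γ₁ * δ ^ 2)
    (z₀ := -γ₃ * δ + γ₁ * δ ^ 3 + β₂ * γ₃ - β₂ * γ₁ * δ ^ 2 + α * β₂ * δ ^ 3 - α * β₁ * δ ^ 2) (by
      simp only [map_sub, map_add, map_neg, map_mul, map_pow]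
      exact e5.symm)
  refine ⟨by linear_combination h1, ?_, by linear_combination h3, by linear_combination h5,
    by linear_combination -h4⟩
  have : δ ^ 2 * (δ ^ 3 * α - α) = 0 := by linear_combination h6 + γ₁ * h5
  rcases mul_eq_zero.1 this with h | h
  · exact absurd h (pow_ne_zero 2 hδ)
  · linear_combination h

/-- If `X` acts on `R⁶` through `A, B, C`, then evaluation at the first basis vector is a left inverse
of `Φ`. -/
theorem injective_of_hom (hδ : δ ≠ 0)
    (ρ : X →ₐ[ℂ] Module.End (AdjoinRoot (quart γ₁ γ₂ γ₃ δ)) (Fin 6 → AdjoinRoot (quart γ₁ γ₂ γ₃ δ)))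
    (ha : ρ a = (dat α β₁ β₂ γ₁ γ₂ γ₃ hδ).A) (hb : ρ b = (dat α β₁ β₂ γ₁ γ₂ γ₃ hδ).B)
    (hc : ρ c = (dat α β₁ β₂ γ₁ γ₂ γ₃ hδ).C) : Function.Injective h.Φ := by
  -- the words carry the first basis vector to the whole standard basis
  have hw : ∀ j, ρ (h.w j) ![1, 0, 0, 0, 0, 0] = Pi.single j 1 := by
    have ea : ρ (α • 1 - a) = (dat α β₁ β₂ γ₁ γ₂ γ₃ hδ).Ai := by
      rw [map_sub, map_smul, map_one, ha, Datum.A]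
      refine LinearMap.ext fun u => ?_
      simp only [LinearMap.sub_apply, LinearMap.smul_apply, Module.End.one_apply]
      rw [← algebraMap_smul (AdjoinRoot (quart γ₁ γ₂ γ₃ δ)) α u]
      exact sub_sub_cancel _ _
    have eb : ρ (b * b - β₁ • b + β₂ • 1) = (dat α β₁ β₂ γ₁ γ₂ γ₃ hδ).Bi := by
      have b1 : b * (b * b - β₁ • b + β₂ • 1) = 1 := by
        simp only [mul_add, mul_sub, ← mul_assoc, h.cube, mul_smul_comm, mul_one]; module
      have := congrArg ρ b1
      rw [map_mul, map_one, hb] at this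
      exact (left_inv_eq_right_inv (Datum.Bi_B _) this).symm
    intro j
    fin_cases j
    · simp [w]; ext i; fin_cases i <;> rfl
    · change ρ (α • 1 - a) _ = _
      rw [ea]; ext i; fin_cases i <;> simp [Datum.Ai_apply]
    · change ρ (b * b - β₁ • b + β₂ • 1) _ = _
      rw [eb]; ext i; fin_cases i <;> simp [Datum.Bi_apply]
    · change ρ ((α • 1 - a) * (b * b - β₁ • b + β₂ • 1)) _ = _
      rw [map_mul, ea, eb]; ext i; fin_cases i <;> simp [Datum.Ai_apply, Datum.Bi_apply]
    · change ρ (b * (α • 1 - a) * (b * b - β₁ • b + β₂ • 1)) _ = _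
      rw [map_mul, map_mul, ea, eb, hb]
      ext i; fin_cases i <;> simp [Datum.Ai_apply, Datum.Bi_apply, Datum.B_apply]
    · change ρ ((b * b - β₁ • b + β₂ • 1) * (α • 1 - a) * (b * b - β₁ • b + β₂ • 1)) _ = _
      rw [map_mul, map_mul, ea, eb]
      ext i; fin_cases i <;> simp [Datum.Ai_apply, Datum.Bi_apply]
  have hφ : ∀ r, ρ (h.φ r) ![1, 0, 0, 0, 0, 0] = r • ![1, 0, 0, 0, 0, 0] := by
    have hC : ∀ n : ℕ, (ρ c ^ n) ![1, 0, 0, 0, 0, 0]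
        = (AdjoinRoot.root (quart γ₁ γ₂ γ₃ δ)) ^ n • ![1, 0, 0, 0, 0, 0] := by
      intro n
      induction n with
      | zero => simp
      | succ n ih =>
        have e1 : ρ c ![1,0,0,0,0,0] = (AdjoinRoot.root (quart γ₁ γ₂ γ₃ δ)) • ![1,0,0,0,0,0] := by
          rw [hc]; ext i; fin_cases i <;> simp [Datum.C_apply]; rfl
        rw [pow_succ, Module.End.mul_apply, e1, map_smul, ih, smul_smul, pow_succ, mul_comm]
    intro r
    induction r using AdjoinRoot.induction_on with
    | ih p =>
      change ρ (Polynomial.aeval c p) _ = _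
      induction p using Polynomial.induction_on' with
      | add p q hp hq => rw [map_add, map_add, LinearMap.add_apply, hp, hq, map_add, add_smul]
      | monomial n z =>
        rw [aeval_monomial, map_mul, AlgHom.commutes, Module.End.mul_apply, map_pow, hC]
        rw [← C_mul_X_pow_eq_monomial, map_mul, map_pow, AdjoinRoot.mk_X, AdjoinRoot.mk_C, mul_smul]
        rw [Module.algebraMap_end_apply, ← algebraMap_smul (AdjoinRoot (quart γ₁ γ₂ γ₃ δ)) z]
        rfl
  have key : ∀ u, ρ (h.Φ u) ![1, 0, 0, 0, 0, 0] = u := by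
    intro u
    rw [Φ_apply, map_sum, LinearMap.sum_apply]
    conv_rhs => rw [pi_eq_sum_univ' u]
    refine Finset.sum_congr rfl fun j _ => ?_
    rw [map_mul, Module.End.mul_apply, hφ, map_smul, hw]
  exact Function.LeftInverse.injective (g := fun x => ρ x ![1, 0, 0, 0, 0, 0]) key
end IsTriple

/-! ### Rescaling the generators -/

open Tilde23n

/-- Elements `x, y, z` of a `ℂ`-algebra satisfying the defining relations of `Ã₊(2,3,4)`. -/
structure IsRaw {E : Type*} [Ring E] [Algebra ℂ E] (α1 α2 β1 β2 β3 : ℂ) (γ : ℕ → ℂ) (x y z : E) :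
    Prop where
  abc : x * y * z = 1
  sq : x * x = α1 • x - α2 • 1
  cube : y * y * y = β1 • (y * y) - β2 • y + β3 • 1
  quartic : z * z * z * z = γ 1 • (z * z * z) - γ 2 • (z * z) + γ 3 • z - γ 4 • 1

section
variable {E : Type*} [Ring E] [Algebra ℂ E] {α1 α2 β1 β2 β3 : ℂ} {γ : ℕ → ℂ}

/-- A map from the free algebra respects `Rel` iff the images of the generators satisfy `IsRaw`. -/
theorem rel_iff (f : FreeAlgebra ℂ (Fin 3) →ₐ[ℂ] E) :
    (∀ ⦃x y⦄, Rel 4 α1 α2 β1 β2 β3 γ x y → f x = f y) ↔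
      IsRaw α1 α2 β1 β2 β3 γ (f a) (f b) (f c) := by
  have fκ : ∀ z x, f (κ z * x) = z • f x := fun z x => by
    rw [κ, ← Algebra.smul_def, map_smul]
  have fκ' : ∀ z, f (κ z) = z • 1 := fun z => by
    rw [κ, AlgHom.commutes, Algebra.algebraMap_eq_smul_one]
  have e2 : f (a ^ 2 - κ α1 * a + κ α2) = f a * f a - (α1 • f a - α2 • 1) := by
    rw [map_add, map_sub, map_pow, fκ, fκ', pow_two]; abel
  have e3 : f (b ^ 3 - κ β1 * b ^ 2 + κ β2 * b - κ β3) =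
      f b * f b * f b - (β1 • (f b * f b) - β2 • f b + β3 • 1) := by
    rw [map_sub, map_add, map_sub, map_pow, fκ, fκ, fκ', map_pow, pow_two, pow_succ, pow_two]; abel
  have e4 : f (c ^ 4 + ∑ k ∈ Finset.Icc 1 4, κ ((-1 : ℂ) ^ k * γ k) * c ^ (4 - k)) =
      f c * f c * f c * f c
        - (γ 1 • (f c * f c * f c) - γ 2 • (f c * f c) + γ 3 • f c - γ 4 • 1) := by
    rw [map_add, map_sum, show Finset.Icc 1 4 = {1, 2, 3, 4} from rfl]
    simp only [fκ, map_pow]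
    simp [pow_succ]
    abel
  constructor
  · intro h
    refine ⟨?_, ?_, ?_, ?_⟩
    · have := h .rabc
      rwa [map_mul, map_mul, map_one] at this
    · have := h .ra
      rwa [e2, map_zero, sub_eq_zero] at this
    · have := h .rb
      rwa [e3, map_zero, sub_eq_zero] at this
    · have := h .rc
      rwa [e4, map_zero, sub_eq_zero] at this
  · rintro h _ _ (_ | _ | _ | _)
    · rw [map_mul, map_mul, map_one, h.abc]
    · rw [e2, map_zero, h.sq, sub_self]
    · rw [e3, map_zero, h.cube, sub_self]
    · rw [e4, map_zero, h.quartic, sub_self]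

-- The normalised elements are `l⁻¹a`, `m⁻¹b`, `lmc`.
variable {l m : ℂ} (hl : l ≠ 0) (hm : m ≠ 0) (hl2 : l ^ 2 = α2) (hm3 : m ^ 3 = β3)
include hl hm hl2 hm3

theorem IsRaw.isTriple {x y z : E} (h : IsRaw α1 α2 β1 β2 β3 γ x y z) :
    IsTriple (l⁻¹ * α1) (m⁻¹ * β1) (m⁻¹ ^ 2 * β2) (l * m * γ 1) ((l * m) ^ 2 * γ 2)
      ((l * m) ^ 3 * γ 3) ((l * m) ^ 4 * γ 4) (l⁻¹ • x) (m⁻¹ • y) ((l * m) • z) := by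
  subst hl2 hm3
  constructor <;> simp only [smul_mul_assoc, mul_smul_comm, h.abc, h.sq, h.cube, h.quartic]
  all_goals match_scalars <;> field_simp

theorem IsTriple.isRaw {x y z : E} (h : IsTriple (l⁻¹ * α1) (m⁻¹ * β1) (m⁻¹ ^ 2 * β2) (l * m * γ 1)
      ((l * m) ^ 2 * γ 2) ((l * m) ^ 3 * γ 3) ((l * m) ^ 4 * γ 4) x y z) :
    IsRaw α1 α2 β1 β2 β3 γ (l • x) (m • y) ((l * m)⁻¹ • z) := by
  subst hl2 hm3
  constructor <;> simp only [smul_mul_assoc, mul_smul_comm, h.abc, h.sq, h.cube, h.quartic]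
  all_goals match_scalars <;> field_simp
end

/-- A subspace containing `1` and stable under left multiplication by the rescaled generators is
everything. -/
theorem generates (α1 α2 β1 β2 β3 : ℂ) (γ : ℕ → ℂ) {l m : ℂ} (hl : l ≠ 0) (hm : m ≠ 0)
    (q : FreeAlgebra ℂ (Fin 3) →ₐ[ℂ] Aplus 4 α1 α2 β1 β2 β3 γ) (hq : Function.Surjective q)
    (S : Submodule ℂ (Aplus 4 α1 α2 β1 β2 β3 γ)) (h1 : 1 ∈ S)
    (ha : ∀ x ∈ S, l⁻¹ • q a * x ∈ S) (hb : ∀ x ∈ S, m⁻¹ • q b * x ∈ S)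
    (hc : ∀ x ∈ S, (l * m) • q c * x ∈ S) : S = ⊤ := by
  have un : ∀ {z : ℂ} {g : Aplus 4 α1 α2 β1 β2 β3 γ}, z ≠ 0 → (∀ x ∈ S, z • g * x ∈ S) →
      ∀ x ∈ S, g * x ∈ S := fun {z g} hz h x hx => by
    have := S.smul_mem z⁻¹ (h x hx)
    rwa [smul_mul_assoc, inv_smul_smul₀ hz] at this
  have key : ∀ p, ∀ x ∈ S, q p * x ∈ S := by
    intro p
    induction p using FreeAlgebra.induction with
    | grade0 r =>
      intro x hx
      rw [AlgHom.commutes, ← Algebra.smul_def]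
      exact S.smul_mem r hx
    | grade1 i =>
      fin_cases i
      · exact un (inv_ne_zero hl) ha
      · exact un (inv_ne_zero hm) hb
      · exact un (mul_ne_zero hl hm) hc
    | mul p p' hp hp' => intro x hx; rw [map_mul, mul_assoc]; exact hp _ (hp' _ hx)
    | add p p' hp hp' => intro x hx; rw [map_add, add_mul]; exact S.add_mem (hp _ hx) (hp' _ hx)
  rw [eq_top_iff]
  intro x _
  obtain ⟨p, rfl⟩ := hq x
  simpa using key p 1 h1

/-- The two implications for the normalised parameters attached to a square root `l` of `α₂` and a cube
root `m` of `β₃`. -/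
theorem finrank_iff (α1 α2 β1 β2 β3 : ℂ) (γ : ℕ → ℂ) {l m : ℂ} (hl : l ≠ 0) (hm : m ≠ 0)
    (hl2 : l ^ 2 = α2) (hm3 : m ^ 3 = β3) (hδ : (l * m) ^ 4 * γ 4 ≠ 0) :
    (Module.finrank ℂ (Aplus 4 α1 α2 β1 β2 β3 γ) = 24 →
      ((l * m) ^ 4 * γ 4) ^ 6 = 1 ∧ ((l * m) ^ 4 * γ 4) ^ 3 * (l⁻¹ * α1) = l⁻¹ * α1 ∧
      ((l * m) ^ 4 * γ 4) ^ 3 * ((l * m) ^ 2 * γ 2) = (l * m) ^ 2 * γ 2 ∧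
      ((l * m) ^ 4 * γ 4) ^ 2 * (m⁻¹ * β1) = m⁻¹ ^ 2 * β2 ∧
      ((l * m) ^ 4 * γ 4) ^ 2 * (l * m * γ 1) = (l * m) ^ 3 * γ 3) ∧
    ((dat (l⁻¹ * α1) (m⁻¹ * β1) (m⁻¹ ^ 2 * β2) (l * m * γ 1) ((l * m) ^ 2 * γ 2)
      ((l * m) ^ 3 * γ 3) hδ).F = 0 → Module.finrank ℂ (Aplus 4 α1 α2 β1 β2 β3 γ) = 24) := by
  set q := RingQuot.mkAlgHom ℂ (Rel 4 α1 α2 β1 β2 β3 γ) with hq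
  have raw : IsRaw α1 α2 β1 β2 β3 γ (q a) (q b) (q c) :=
    (rel_iff q).1 fun _ _ hr => RingQuot.mkAlgHom_rel ℂ hr
  have tri := raw.isTriple hl hm hl2 hm3
  have fr := tri.finrank_eq_iff hδ
    (generates α1 α2 β1 β2 β3 γ hl hm q (RingQuot.mkAlgHom_surjective ℂ _))
  refine ⟨fun h => tri.necessary hδ (fr.1 h), fun hF => fr.2 ?_⟩
  set D := dat (l⁻¹ * α1) (m⁻¹ * β1) (m⁻¹ ^ 2 * β2) (l * m * γ 1) ((l * m) ^ 2 * γ 2)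
      ((l * m) ^ 3 * γ 3) hδ with hD
  have rawD := (isTriple_End _ _ _ _ _ _ hδ hF).isRaw hl hm hl2 hm3
  rw [← hD] at rawD
  let f := FreeAlgebra.lift ℂ ![l • D.A, m • D.B, (l * m)⁻¹ • D.C]
  have fa : f a = l • D.A := FreeAlgebra.lift_ι_apply _ _
  have fb : f b = m • D.B := FreeAlgebra.lift_ι_apply _ _
  have fc : f c = (l * m)⁻¹ • D.C := FreeAlgebra.lift_ι_apply _ _
  have hf : ∀ ⦃x y⦄, Rel 4 α1 α2 β1 β2 β3 γ x y → f x = f y :=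
    (rel_iff f).2 (by rw [fa, fb, fc]; exact rawD)
  have hρ : ∀ p, RingQuot.liftAlgHom ℂ ⟨f, hf⟩ (q p) = f p :=
    fun p => RingQuot.liftAlgHom_mkAlgHom_apply ℂ f hf p
  refine tri.injective_of_hom hδ (RingQuot.liftAlgHom ℂ ⟨f, hf⟩) ?_ ?_ ?_
  · rw [map_smul, hρ, fa, inv_smul_smul₀ hl]
  · rw [map_smul, hρ, fb, inv_smul_smul₀ hm]
  · rw [map_smul, hρ, fc, smul_inv_smul₀ (mul_ne_zero hl hm)]
end Flat234

/-- Flatness locus of `Ã₊(2,3,4)` (type `B₃`, `|W₊| = 24`). -/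
theorem flatness_tilde_234 (α1 β1 β2 : ℂ) (γ : ℕ → ℂ) (α2 β3 : ℂ)
    (hα2 : α2 ≠ 0) (hβ3 : β3 ≠ 0) (hγ4 : γ 4 ≠ 0) :
    Module.finrank ℂ (Tilde23n.Aplus 4 α1 α2 β1 β2 β3 γ) = 24 ↔
      (α2 ^ 12 * β3 ^ 8 * γ 4 ^ 6 = 1 ∧
       α2 ^ 6 * β3 ^ 4 * γ 4 ^ 3 * α1 = α1 ∧
       α2 ^ 6 * β3 ^ 4 * γ 4 ^ 3 * γ 2 = γ 2 ∧
       α2 ^ 4 * β3 ^ 3 * γ 4 ^ 2 * β1 = β2 ∧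
       α2 ^ 3 * β3 ^ 2 * γ 4 ^ 2 * γ 1 = γ 3) := by
  constructor
  · intro h
    obtain ⟨l, hl2⟩ := IsAlgClosed.exists_pow_nat_eq α2 (n := 2) (by norm_num)
    obtain ⟨m, hm3⟩ := IsAlgClosed.exists_pow_nat_eq β3 (n := 3) (by norm_num)
    have hl : l ≠ 0 := by rintro rfl; exact hα2 (by rw [← hl2]; simp)
    have hm : m ≠ 0 := by rintro rfl; exact hβ3 (by rw [← hm3]; simp)
    have hlm := mul_ne_zero hl hm
    obtain ⟨h1, h2, h3, h4, h5⟩ := (Flat234.finrank_iff α1 α2 β1 β2 β3 γ hl hm hl2 hm3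
      (mul_ne_zero (pow_ne_zero 4 hlm) hγ4)).1 h
    subst hl2 hm3
    refine ⟨by linear_combination h1, ?_, ?_, ?_, ?_⟩
    · refine mul_left_cancel₀ (inv_ne_zero hl) ?_
      linear_combination h2
    · refine mul_left_cancel₀ (pow_ne_zero 2 hlm) ?_
      linear_combination h3
    · field_simp at h4
      linear_combination h4
    · refine mul_left_cancel₀ (pow_ne_zero 3 hlm) ?_
      linear_combination h5
  · rintro ⟨h1, h2, h3, h4, h5⟩
    obtain ⟨l, hl2⟩ := IsAlgClosed.exists_pow_nat_eq α2 (n := 2) (by norm_num)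
    have hl : l ≠ 0 := by rintro rfl; exact hα2 (by rw [← hl2]; simp)
    -- this cube root of `β3` makes the normalised `δ` equal to `α2⁶β3⁴γ4³`, whose square is `1`
    obtain ⟨m, hmdef⟩ : ∃ m, m = α2 ^ 4 * β3 ^ 3 * γ 4 ^ 2 := ⟨_, rfl⟩
    have hm3 : m ^ 3 = β3 := by rw [hmdef]; linear_combination β3 * h1
    have hm : m ≠ 0 := by rintro rfl; exact hβ3 (by rw [← hm3]; simp)
    have hlm := mul_ne_zero hl hm
    have hδ := mul_ne_zero (pow_ne_zero 4 hlm) hγ4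
    refine (Flat234.finrank_iff α1 α2 β1 β2 β3 γ hl hm hl2 hm3 hδ).2 (Flat234.Datum.F_eq_zero _ ?_)
    have eδ : (l * m) ^ 4 * γ 4 = α2 ^ 6 * β3 ^ 4 * γ 4 ^ 3 := by
      linear_combination (γ 4 * m ^ 4 * (l ^ 2 + α2)) * hl2 + α2 ^ 2 * γ 4 * m * hm3
          + α2 ^ 2 * β3 * γ 4 * hmdef
    have eβ : m⁻¹ ^ 2 * β2 = m⁻¹ * β1 := by
      rw [← h4, ← hmdef]; field_simp
    have eγ : (l * m) ^ 3 * γ 3 = l * m * γ 1 := by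
      rw [← h5]
      have : m ^ 2 * α2 ^ 4 * β3 ^ 2 * γ 4 ^ 2 = 1 := by
        rw [hmdef]; linear_combination h1
      linear_combination (l * m ^ 3 * α2 ^ 3 * β3 ^ 2 * γ 4 ^ 2 * γ 1) * hl2 + l * m * γ 1 * this
    have hs : (α2 ^ 6 * β3 ^ 4 * γ 4 ^ 3 - 1) * (α2 ^ 6 * β3 ^ 4 * γ 4 ^ 3 + 1) = 0 := by
      linear_combination h1
    rcases mul_eq_zero.1 hs with hs | hs
    · apply Flat234.Datum.Fv
      · change algebraMap ℂ _ _ = 1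
        rw [eδ, sub_eq_zero.1 hs, map_one]
      · exact congrArg (algebraMap ℂ _) eβ
      · exact congrArg (algebraMap ℂ _) eγ
    · have hs' : α2 ^ 6 * β3 ^ 4 * γ 4 ^ 3 = -1 := by linear_combination hs
      rw [hs'] at h2 h3
      have hα1 : α1 = 0 := by linear_combination (-1 / 2) * h2
      have hγ2 : γ 2 = 0 := by linear_combination (-1 / 2) * h3
      apply Flat234.Datum.Fv_neg
      · change algebraMap ℂ _ _ = -1
        rw [eδ, hs', map_neg, map_one]
      · change algebraMap ℂ _ _ = 0
        rw [hα1, mul_zero, map_zero]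
      · change algebraMap ℂ _ _ = 0
        rw [hγ2, mul_zero, map_zero]
      · exact congrArg (algebraMap ℂ _) eβ
      · exact congrArg (algebraMap ℂ _) eγ
end
end

section
/- Theorem (flatness locus of $\tilde A_+$), case $(2,3,5)$ (pointwise over $\mathbb{C}$): For $n=5$, $\dim_{\mathbb{C}}\tilde A_+(2,3,5)=60$ (i.e., the algebra is flat) if and only if: $\alpha_2^{30}\beta_3^{20}\gamma_5^{12}=1$; $\alpha_2^{15}\beta_3^{10}\gamma_5^{6}\alpha_1=\alpha_1$; $\alpha_2^{10}\beta_3^{7}\gamma_5^{4}\beta_1=\beta_2$; $\alpha_2^{6}\beta_3^{4}\gamma_5^{3}\gamma_1=\gamma_4$; and $\alpha_2^{12}\beta_3^{8}\gamma_5^{5}\gamma_2=\gamma_3$. -/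
/-!
Theorem (flatness locus of `Ã₊`), cases `(2,3,n)` for `n ∈ {3,4,5}`. `Ã₊(2,3,n)` is the
quotient of the free unital associative `ℂ`-algebra on `a, b, c` by the two-sided ideal
generated by `abc - 1`, `a² - α₁a + α₂`, `b³ - β₁b² + β₂b - β₃` and
`cⁿ - γ₁cⁿ⁻¹ + γ₂cⁿ⁻² - ⋯ + (-1)ⁿγₙ`. Flatness holds iff `dim_ℂ Ã₊(2,3,n) = |W₊|`
(`= 12, 24, 60` for `n = 3, 4, 5`).
-/

noncomputable section

/-!
Let `A` denote the algebra, put `s₁ s₂ = a`, `s₂ s₃ = b`, `s₃ s₁ = c`, and let the letters `s_i` act on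
`A × A`, the even and the odd part of the deformed group algebra of the full Coxeter group of type `H₃`
(`sAct`). Every letter is an involution there, and a braid move multiplies a word by a monomial in
`-α₂, β₃, γ₅`, up to words which are at least two letters shorter (`BraidSys.follow_mem`). Hence, for
every pair `i ≠ j`, the minimal representatives of the cosets of `⟨s_i, s_j⟩`, followed by words in `i`
and `j`, span (`BraidSys.reduce`), and `dim A ≤ 60` always (`finite_and_finrank_le`).

*Necessity.* Let `x₀` be the longest of the coset representatives, `s = s_i s_j` and `m` the order of
`s` in the group. The shorter cosets span a subspace `F` which is stable under `s` from the left and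
from the right, and `s x₀ = K x₀ s⁻¹` modulo `F`, with `K` a monomial that comes from explicit braid
moves (`BraidSys.twist`). So `x₀` times a polynomial in `s` is annihilated, modulo `F`, by the
polynomial of `s` and also by a rescaled reversal of that polynomial. If `dim A = 60`, then
`x₀, x₀ s, …, x₀ s^(m-1)` are independent modulo `F`, so the two polynomials are proportional
(`reversal`, `BraidSys.symmetry`). For `s = a, b, c` this gives the conditions on `α₁`, on `β₁, β₂` and
on the `γ_k`, and the constant terms for `s = c` give `α₂³⁰ β₃²⁰ γ₅¹² = 1`.

*Sufficiency.* Under the conditions the generators can be rescaled so that `β₃ = 1`, `β₁ = β₂`, the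
polynomial `P` of `c` is antipalindromic, and either `α₂ = 1` or `α₂ = -1, α₁ = 0`. For such parameters
`icosaA` and `icosaT` give the action of `a` and `b` on a free module of rank `12` over
`Q = ℂ[X] / P`, with one basis vector for each coset of `⟨c⟩`, that is, each vertex of the icosahedron;
`X` plays the part of right multiplication by `c`. The relations of `a` and `b` are checked on the
basis. That of `c = (ab)⁻¹` needs few vectors, as it is inherited along the orbits of `c`; the vertex
opposite to the first one is first replaced by an eigenvector of `c` modulo the first basis vector
(`IcosaTable.opC_quintic`). The first basis vector generates the module, so `dim A ≥ 60`
(`sixty_le_finrank`).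
-/

/-! ### The module on the vertices of the icosahedron -/

/-- The image of the `i`-th vector under `a`, in terms of twelve vectors `e` (one for each vertex of
the icosahedron, in the order of the distance from `e 0`). -/
def icosaA {Q M : Type*} [CommRing Q] [AddCommGroup M] [Module Q M] (r D B g k x y : Q)
    (e : Fin 12 → M) : Fin 12 → M
  | 0 =>
      r • e 0 + (-D) • e 1
  | 1 =>
      e 0
  | 2 =>
      (r * B - B * y) • e 0 + (-D * B) • e 1 + y • e 3
  | 3 =>
      (D * B * x) • e 0 + (-D * B) • e 1 + (-D * x) • e 2 + r • e 3
  | 4 =>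
      e 7
  | 5 =>
      r • e 5 + (-D) • e 6
  | 6 =>
      e 5
  | 7 =>
      (-D) • e 4 + r • e 7
  | 8 =>
      (r * r * B * g * x - r * r * g - r * B * B * g - r * B * g * x * x - r * B * g * x + r * B *
      g * y + r * B * x * x + r * B * x - r * g + r * k * x + D * B * B * g * y - D * B * g * y *
      y - D * B * k + B * B * g * x + k * y) • e 0 + (-r * B * g * x - r * B + r * g + D * B * g *
      x * x + D * B * k - k * x) • e 1 + (-r * x + r - B * g * x + B * g) • e 2 + (r * r + r * B *
      g + r * g * x - r * k - r * x * x - D * B * g * y - B * g) • e 3 + (-B) • e 4 + (-r * B + D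
      * g * y) • e 5 + B • e 6 + (g * x) • e 7 + (-D) • e 9
  | 9 =>
      (r * r * B + r * B * B * g - r * B * g * x + r * B * g * y - r * B * k - r * B * y - r * B *
      y * y + r * g - D * B * B * g * y - D * k * x - B * B * g * x + B * g * x * x + B * k) • e 0
      + (-r * B * g * y - r * B + r * g + D * B * g * y * y + D * B * k - k * y) • e 1 + (-r * r -
      r * B * g - r * g * y + r * k + r * y * y + D * B * g + B * g * x) • e 2 + (-r + r * y - D *
      B * g + D * B * g * y) • e 3 + (r * B - g * x) • e 4 + (D * B) • e 5 + (-D * g * y) • e 6 +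
      (-D * B) • e 7 + e 8 + r • e 9
  | 10 =>
      (-r * r * B * B * g + r * r * B * g * g * x + r * r * B * g * x - r * r * g * g + r * B * B
      * g * g * x - r * B * B * g * g - r * B * B * g * x * x + 2 * r * B * B * g * y + r * B * B
      * k * x - r * B * B - 2 * r * B * g * g * x * x - r * B * g * g * x + r * B * g * g + r * B
      * g * g * y - r * B * g * k * x + r * B * g * x * x + r * B * g * x - r * B * g - r * B * g
      * y + r * B * k * x - r * B * k + r * g * g * x - r * g * g + r * g * k * x - D * B * B * g
      * k * x + D * B * B * g * k + D * B * B * k * x - D * B * B * k - D * B * B * x * x + D * B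
      * B * y + D * B * g * g * g * x * x - D * B * g * g * g * y - D * B * g * g * k * x + D * B
      * g * g * k + D * B * g * k * x - D * B * g * k + B * B * g * g * x - B * B * g * g + B * g
      * x - B * g - B * k * x * x + B * k * y - g * k * x * x + g * k * y) • e 0 + (-r * r * B * g
      * x - r * r * B * g + r * r * B * k + r * r * B * x * x + r * r * B * y + r * B * B * g * x
      + r * B * B * g + r * B * B * g * y - r * B * B * k - r * B * B * y * y - r * B * g * g * x
      - r * B * g * g + r * B * g - r * B * k * y - 2 * r * B * x - 2 * r * B + r * g * g * x + r
      * g * g + r * g * y - r * k - r * y * y - D * B * B * g * x * x - D * B * B * g * x + D * B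
      * B * x * x + D * B * B * x + D * B * g * g * x * x + D * B * g * k - D * g * k - B * B * g
      - B * B * g * y + B * B + B * B * y + B * g * g * y + B * g * k * x - g * k * x) • e 1 + (r
      * r * B * g - r * r * g * x - r * B * g * g * x + r * B * g * x * x - r * B * g * y - r * B
      * k * x + r * B - r * g * g + r * g * k * x - r * g * x + r * g + r * g * y + D * B * g * g
      * y + D * B * g * k * x - D * B * g * k - D * B * g * y * y - D * B * k * x + D * B * x * x
      + B * g * g) • e 2 + (r * r * g + r * B * g * g - r * B * g * y + r * g * g * x - r * g * k
      - r * g * x * x - r * g * x + r * g - D * B * g * g * y + D * B * g * y * y + D * B * k - D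
      * B * y - B * g * g * x) • e 3 + (-r * r * B + r * B * g * x + r * B * y - D * g * g * x * x
      - B * g + k * x) • e 4 + (-r * B * g + D * g * g * y + B * g * x - k) • e 5 + (-r * B * x +
      r * k + D * B * x * x + B * g - g * g) • e 6 + (r * B - D * B * y - B * g * x + g * g * x) •
      e 7 + (-r * g + D * g * x) • e 8 + (-D * g) • e 9 + r • e 10 + x • e 11
  | 11 =>
      (r * r * B * g + r * r * B * g * y - r * r * B * k - r * r * B * x - r * r * B * y * y - r *
      B * B * g * x + r * B * B * k + r * B * B * x * x - 2 * r * B * g - r * B * g * y + r * B *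
      k * x + 2 * r * B + 2 * r * B * y - r * g * x + r * k + r * x * x + D * B * B * g - D * B *
      B * k * y - D * B * B * x + B * B * g * y - B * B * k - B * B * y * y) • e 0 + (r * B * k -
      r * B * k * y + D * B * g - D * B * g * y - D * B * k * x + D * B * k * y * y) • e 1 + (-r *
      B * g * y + B * g * y * y + B * k - B * y) • e 2 + (-r * B * g + D * B * g * x + D * B * k *
      y - D * B) • e 3 + (r * B * y - B * y * y) • e 4 + (r * B - D * B * x) • e 5 + (-D * k * y)
      • e 6 + (-k) • e 7 + (D * g * y) • e 8 + g • e 9 + (-D * y) • e 10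

/-- The image of the `i`-th vector under `b`, in terms of twelve vectors `e` (one for each vertex of
the icosahedron, in the order of the distance from `e 0`). -/
def icosaT {Q M : Type*} [CommRing Q] [AddCommGroup M] [Module Q M] (r D B g k x y : Q)
    (e : Fin 12 → M) : Fin 12 → M
  | 0 =>
      y • e 1
  | 1 =>
      (-B * x) • e 0 + B • e 1 + x • e 2
  | 2 =>
      e 0
  | 3 =>
      e 6
  | 4 =>
      (-r * B + D * B * y) • e 0 + B • e 1 + r • e 2 + (-D * y) • e 3
  | 5 =>
      (-r * B * g - D * k + B * g * y + B * k * x) • e 0 + (-r * g * x + r * k + r * x * x + D * B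
      * g - B * k) • e 1 + (r * g - k * x) • e 2 + (-g * y) • e 3 + (-r) • e 4 + g • e 6 + e 7
  | 6 =>
      (-r * B * x + D * B * x * x) • e 0 + r • e 1 + B • e 2 + (-B) • e 3 + (-D * x) • e 4 + B • e
      6
  | 7 =>
      (-r * r * B - r * B * B * g + r * B * g * x - r * B * g * y + r * B * k + r * B * y + r * B
      * y * y - r * g + D * B * B * g * x - D * B * g * x * x - D * B * k + B * B * g * y + k * x)
      • e 0 + (r * B * g * y + r * B - r * g + D * k * y - B * g * y * y - B * k) • e 1 + (r * r +
      r * B * g + r * g * y - r * k - r * y * y - D * B * g * x - B * g) • e 2 + (r - r * y + B *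
      g - B * g * y) • e 3 + (-r * B + D * g * x) • e 4 + (-B) • e 5 + (g * y) • e 6 + B • e 7 +
      (-D) • e 8
  | 8 =>
      (-D) • e 5 + r • e 6
  | 9 =>
      e 11
  | 10 =>
      (-r * r * B * g * x + r * r * g + r * B * B * g + r * B * g * x * x + r * B * g * x - r * B
      * g * y - r * B * x * x - r * B * x + r * g - r * k * x - D * B * B * g * x - D * k * y - B
      * B * g * y + B * g * y * y + B * k) • e 0 + (r * B * g * x + r * B - r * g + D * k * x - B
      * g * x * x - B * k) • e 1 + (r * x - r + D * B * g * x - D * B * g) • e 2 + (-r * r - r * B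
      * g - r * g * x + r * k + r * x * x + D * B * g + B * g * y) • e 3 + (D * B) • e 4 + (r * B
      - g * y) • e 5 + (-D * B) • e 6 + (-D * g * x) • e 7 + r • e 8 + e 9
  | 11 =>
      (-r * r * B * g - r * r * B * g * y + r * r * B * k + r * r * B * y * y + r * r * g * x - r
      * B * B * B + r * B * B * g * x - r * B * g * x * x + r * B * g + r * B * g * y - 2 * r * B
      - r * B * y + r * g * g - r * g * k * x + r * g * x - r * g * y - r * k + D * B * B * B * x
      - D * B * B * g - D * k * x * x + B * B * B * y - B * B * g * x * x + B * g * g * x * x - B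
      * g * g * y - B * g * k * x + B * g * k + B * g * y * y + B * k * x) • e 0 + (r * B * B * y
      - r * B * k - r + r * y - D * B * g + D * B * g * y + D * g * k * x - B * B * y * y) • e 1 +
      (r * B * B + r * B * g * y - r * B * k + r * B - r * g - D * B * B * x + D * k * y - B * g *
      y * y - B * k + g * k * x) • e 2 + (r * B * g + D * B - D * g * g * x - B * B * y) • e 3 +
      (-r * r - r * g * y + r * k + r * y * y - D * B * B + D * B * g + B * g * x - g * g * x) • e
      4 + (-r * B + D * g * x) • e 5 + (B * y) • e 6 + r • e 7 + (-D * g * y) • e 8 + (-B) • e 9 +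
      e 10 + B • e 11

/-- Operators `A` and `T` given by the tables `icosaA` and `icosaT`, over a commutative ring in which
`x` has inverse `y` and is a root of `X⁵ - gX⁴ + kX³ - kX² + gX - 1`. The last two ring relations,
which follow from this, reduce every Laurent polynomial in `x` to the span of `x², x, 1, y, y²`. -/
structure IcosaTable {Q M : Type*} [CommRing Q] [AddCommGroup M] [Module Q M]
    (r D B g k x y : Q) (A T : M →ₗ[Q] M) (e : Fin 12 → M) : Prop where
  hxy : x * y = 1
  hD : D = 1 ∨ D = -1 ∧ r = 0
  hx : x * x * x = g * (x * x) - k * x + k - g * y + y * y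
  hy : y * y * y = g * (y * y) - k * y + k - g * x + x * x
  hA : ∀ i, A (e i) = icosaA r D B g k x y e i
  hT : ∀ i, T (e i) = icosaT r D B g k x y e i

namespace IcosaTable

variable {Q M : Type*} [CommRing Q] [AddCommGroup M] [Module Q M] {r D B g k x y : Q}
  {A T : M →ₗ[Q] M} {e : Fin 12 → M}

theorem hDD (h : IcosaTable r D B g k x y A T e) : D * D = 1 := by
  obtain rfl | ⟨rfl, -⟩ := h.hD <;> simp

theorem hr (h : IcosaTable r D B g k x y A T e) : D * r = r := by
  obtain rfl | ⟨-, rfl⟩ := h.hD <;> simp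

set_option maxHeartbeats 4000000 in
theorem quadratic (h : IcosaTable r D B g k x y A T e) (i : Fin 12) :
    A (A (e i)) = r • A (e i) - D • e i := by
  have hxy := h.hxy; have hD := h.hDD; have hr := h.hr; have hx := h.hx; have hy := h.hy
  fin_cases i <;>
  simp only [Fin.reduceFinMk, Fin.zero_eta, Fin.mk_one, Fin.isValue, map_add, map_smul,
    h.hA, icosaA] <;>
  match_scalars <;> clear h <;> grind

set_option maxHeartbeats 4000000 in
theorem cubic (h : IcosaTable r D B g k x y A T e) (i : Fin 12) :
    T (T (T (e i))) = B • T (T (e i)) - B • T (e i) + e i := by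
  have hxy := h.hxy; have hD := h.hDD; have hr := h.hr; have hx := h.hx; have hy := h.hy
  fin_cases i <;>
  simp only [Fin.reduceFinMk, Fin.zero_eta, Fin.mk_one, Fin.isValue, map_add, map_smul,
    h.hT, icosaT] <;>
  match_scalars <;> clear h <;> grind

set_option maxHeartbeats 4000000 in
/-- The values of `A⁻¹ = D (r - A)` which determine `c = T⁻¹ A⁻¹` on `e 0, …, e 10`. -/
theorem cycle (h : IcosaTable r D B g k x y A T e) :
    T (x • e 0) =
      D • (r • e 0 - A (e 0)) ∧
    T ((r * x) • e 0 + (-D) • e 2) =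
      D • (r • e 1 - A (e 1)) ∧
    T (e 4) =
      D • (r • e 2 - A (e 2)) ∧
    T (e 1) =
      D • (r • e 3 - A (e 3)) ∧
    T ((-r * g * y + r * k + r * y * y) • e 0 + (-D * k) • e 1 + (-k) • e 2 + (D * g) • e 3 + g •
       e 4 + (-D) • e 5) =
      D • (r • e 4 - A (e 4)) ∧
    T (e 3) =
      D • (r • e 5 - A (e 5)) ∧
    T (e 8) =
      D • (r • e 6 - A (e 6)) ∧
    T ((r * B * B + r - D * B * B * y - B * B * x) • e 0 + (-r * B * y + D * B * y * y) • e 1 +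
       (-r * B + B * x) • e 2 + (D * B * y) • e 3 + B • e 4 + (-D * y) • e 6) =
      D • (r • e 7 - A (e 7)) ∧
    T (e 10) =
      D • (r • e 8 - A (e 8)) ∧
    T (e 7) =
      D • (r • e 9 - A (e 9)) ∧
    T ((r * r * B * g * x - r * r * B - r * B * B * g + r * B * B * y - r * B * g * x * x - r * B
       * g * x + r * B * x * x + 2 * r * B * x - r * g + r * y + D * B * B * g * x - D * B * B + B
       * B * g * y - B * B * y * y) • e 0 + (-r * B * g * x + B * g * x * x + B * k - B * x) • e 1
       + (-D * B * g * x + D * B * g) • e 2 + (r * B * g + r * B * x - B * g * y - B * k - B * x *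
       x) • e 3 + (-D * B) • e 4 + (-r * B + B * y) • e 5 + k • e 6 + (D * g * x) • e 7 + (-k) • e
       8 + (-D * x) • e 9 + g • e 10) =
      D • (r • e 10 - A (e 10)) := by
  have hxy := h.hxy; have hD := h.hDD; have hr := h.hr; have hx := h.hx; have hy := h.hy
  refine ⟨?_, ?_, ?_, ?_, ?_, ?_, ?_, ?_, ?_, ?_, ?_⟩ <;>
  simp only [map_add, map_smul,
    h.hA, icosaA, h.hT, icosaT] <;>
  match_scalars <;> clear h <;> grind

set_option maxHeartbeats 4000000 in
set_option maxRecDepth 10000 in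
/-- The vertex opposite to `e 0`: for the stated coefficients, `u = ∑ hᵢ eᵢ + e₁₁` satisfies
`c u = y u + (x - 1) s e₀`. -/
theorem opposite (h : IcosaTable r D B g k x y A T e) (h0 h1 h2 h3 h4 h5 h6 h7 h8 h9 s : Q)
    (hh0 : h0 =
      r * r * r * (B * (-g * x + x * x - x)) + r * r * (B * B * B * (-1) + B * B * (-g * x - 2 * g
      - 3 * g * y + 3 * k + x * x + x + 1 + y + 3 * y * y) + B * (-g * g * y + g * k - g + g * y *
      y + k * x + k) + (-g * x - g + x * x + y)) + r * (B * B * B * (-g - 1 + 2 * y) + B * B * (2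
      * g * g * x + 2 * g * g + 2 * g * g * y - 2 * g * k - 2 * g * x * x - 3 * g * x - 3 * g - 2
      * g * y - 2 * g * y * y + k + x + 1 - y + 2 * y * y) + B * (g * g * g * x + g * g * g + 2 *
      g * g * g * y - 2 * g * g * k - g * g * x * x - 4 * g * g * x - 2 * g * g - 3 * g * g * y -
      2 * g * g * y * y + 3 * g * k + g * x * x + 2 * g * x + 2 * g - g * y + 3 * g * y * y - k +
      y) + (g * g * k * x + g * g - g - k * x - k - 1)) + D * (B * B * B * (-g - 1) + B * B * (g *
      y - x - 1) + B * (g * g * g * x + g * g * g + g * k * x + g * k - g - k * x * x) + (g * g *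
      k * x + g * g * k - g * k * x * x)) + B * B * B * k + B * B * (-2 * g * g * y + 2 * g * k +
      2 * g * x + g + g * y * y - k - x * x) + B * (-g * g * g * g * x - g * g * g * g + g * g * g
      * x * x + g * g * k - g * k - k * x - k) + (-g * k * x - g * k))
    (hh1 : h1 =
      r * r * (B * B * (-1 + y) + B * (g * x - g - x * x + x) + (-g + g * y)) + r * (B * B * (g *
      y + 2 * x - 1 + y - 2 * y * y) + B * (-g * g + g * x - g + g * y - g * y * y - k * x - 2 + y
      * y) + (g * g + g * k - g * k * y - g + g * y)) + D * (B * B * (-g + g * y - x * x + x) + B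
      * (-2 * g * g * y + 2 * g * k - g - k + y) + (-g * g - k * y * y)) + B * B * (-g * x - g + k
      - k * y + x * x + y) + B * (g * g * y * y + g * k + 2 * g * x + g * y + k * y - 1) + (g * g
      * g - g * g * k * x - g * k + k * x))
    (hh2 : h2 =
      r * r * (B * y + (-g)) + r * (B * B * (g * y - 1 + y - y * y) + B * (-g * g + g * x - g + g
      * y - k * y) + (-g * g * y + g * k - g + 2 * g * y - y * y)) + D * (B * B * (y - y * y) + B
      * (g * g * x - g * x * x - g - k + x) + (-g * g * g * x)) + B * B * (-g + x) + B * (2 * g *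
      g + g * g * y - g * y * y - 1) + (g * g * x + k * y))
    (hh3 : h3 =
      r * r * (B * (-x + 1)) + r * (B * B * (1 - y) + B * (g + x * x - 1) + (-g * x)) + D * (B * B
      * (-x + 1) + B * (-2 * g * g * x + 2 * g * x * x - g * y) + (-g * g * y)) + B * B * (-g * y
      + y * y) + B * (-g * x + 2 * g - y) + (g * g * g * y + g * g * k * x - g * g * k + k))
    (hh4 : h4 =
      r * (B * B * (-y) + B * (g + y * y) + (-y)) + B * (-g - g * y) + k)
    (hh5 : h5 =
      r * (B * (-y)) + D * (B * 2 * g * x) + B * g * y + (-g * g * x * x))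
    (hh6 : h6 =
      r * (B * (-1 + y)) + D * (B * x + g * y) + B * (g * y - y * y) + (-g * g * y - g))
    (hh7 : h7 =
      r * (B + (-g * x + x * x)) + D * (g) + B * (-x) + (-g * y))
    (hh8 : h8 =
      D * (g) + B * (-y))
    (hh9 : h9 =
      r * (x) + B * (-1))
    (hs : s =
      r * r * r * (B * B * (-1) + B * (-g - 1) + (-g)) + r * r * (B * B * B * (-1) + B * B * (2 *
      k - 1) + B * (g * k - 2 * g + k - 1) + (g * k - 2 * g - k - 1)) + r * (B * B * B * (-g - 3)
      + B * B * (-g * g - 3 * g + 2 * k) + B * (-g * g * g - g * g * k + 2 * g * g + 5 * g * k - g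
      - 3 * k - 2) + (g * g * g + g * g * k - g * g - g * k - g - k - 1)) + D * (B * B * B * (-g -
      1) + B * B * (g * k - g - k - 1) + B * (g * g * g + g * g * k - g + k * k) + (g * g * k + g
      * k * k)) + B * B * B * k + B * B * (g * g + 2 * g * k + g) + B * (-g * g * g * g - g * g *
      g * k + g * g * k - g * k - g - k) + (-g * k)) :
    T (y • (h0 • e 0 + h1 • e 1 + h2 • e 2 + h3 • e 3 + h4 • e 4 + h5 • e 5 + h6 • e 6 + h7 • e 7 + h8
        • e 8 + h9 • e 9 + e 11) +
        ((x - 1) * s) • e 0) =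
      D • (r • (h0 • e 0 + h1 • e 1 + h2 • e 2 + h3 • e 3 + h4 • e 4 + h5 • e 5 + h6 • e 6 + h7 • e 7 + h8
        • e 8 + h9 • e 9 + e 11) -
        A (h0 • e 0 + h1 • e 1 + h2 • e 2 + h3 • e 3 + h4 • e 4 + h5 • e 5 + h6 • e 6 + h7 • e 7 + h8
        • e 8 + h9 • e 9 + e 11)) := by
  have hxy := h.hxy; have hD := h.hD; have hx := h.hx; have hy := h.hy
  simp only [map_add, map_smul,
    h.hA, icosaA, h.hT, icosaT]
  match_scalars
  all_goals try simp only [hh0, hh1, hh2, hh3, hh4, hh5, hh6, hh7, hh8, hh9, hs]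
  all_goals
    clear h hh0 hh1 hh2 hh3 hh4 hh5 hh6 hh7 hh8 hh9 hs h0 h1 h2 h3 h4 h5 h6 h7 h8 h9 s
    obtain rfl | ⟨rfl, rfl⟩ := hD <;> grind (ringSteps := 1000000)

theorem A_sq (h : IcosaTable r D B g k x y A T e) (he : Submodule.span Q (Set.range e) = ⊤)
    (v : M) : A (A v) = r • A v - D • v :=
  LinearMap.congr_fun (LinearMap.ext_on_range (f := A ∘ₗ A) (g := r • A - D • LinearMap.id) he
    fun i => h.quadratic i) v

theorem T_cube (h : IcosaTable r D B g k x y A T e) (he : Submodule.span Q (Set.range e) = ⊤)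
    (v : M) : T (T (T v)) = B • T (T v) - B • T v + v :=
  LinearMap.congr_fun (LinearMap.ext_on_range (f := T ∘ₗ T ∘ₗ T)
    (g := B • (T ∘ₗ T) - B • T + LinearMap.id) he fun i => h.cubic i) v

/-- The operator `C = T⁻¹ A⁻¹`, with both inverses expressed by the quadratic and cubic relations. -/
def opC (r D B : Q) (A T : M →ₗ[Q] M) : M →ₗ[Q] M :=
  (T ∘ₗ T - B • T + B • LinearMap.id) ∘ₗ (D • (r • LinearMap.id - A))

theorem opC_eq (h : IcosaTable r D B g k x y A T e) (he : Submodule.span Q (Set.range e) = ⊤)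
    {v w : M} (hw : T w = D • (r • v - A v)) : opC r D B A T v = w := by
  have h3 := h.T_cube he w
  simp only [opC, LinearMap.comp_apply, LinearMap.add_apply, LinearMap.sub_apply,
    LinearMap.smul_apply, LinearMap.id_apply, ← hw]
  rw [h3]; abel

theorem A_T_opC (h : IcosaTable r D B g k x y A T e) (he : Submodule.span Q (Set.range e) = ⊤)
    (v : M) : A (T (opC r D B A T v)) = v := by
  have h2 := h.A_sq he v
  have h1 : T (opC r D B A T v) = D • (r • v - A v) := by
    change T (T (T (D • (r • v - A v))) - B • T (D • (r • v - A v)) + B • (D • (r • v - A v))) = _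
    generalize D • (r • v - A v) = w
    have h3 := h.T_cube he w
    rw [map_add, map_sub, map_smul, map_smul, h3]
    abel
  rw [h1, map_smul, map_sub, map_smul, h2, sub_sub_cancel, smul_smul, h.hDD, one_smul]

theorem opC_quintic (h : IcosaTable r D B g k x y A T e)
    (he : Submodule.span Q (Set.range e) = ⊤) {C : M →ₗ[Q] M} (hC : C = opC r D B A T) (v : M) :
    C (C (C (C (C v)))) - g • C (C (C (C v))) + k • C (C (C v)) - k • C (C v) + g • C v - v = 0 := by
  have hxy := h.hxy; have hD := h.hDD; have hr := h.hr; have hx := h.hx; have hy := h.hy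
  obtain ⟨c0, c1, c2, c3, c4, c5, c6, c7, c8, c9, c10⟩ :
    C (e 0) =
      x • e 0 ∧
    C (e 1) =
      (r * x) • e 0 + (-D) • e 2 ∧
    C (e 2) =
      e 4 ∧
    C (e 3) =
      e 1 ∧
    C (e 4) =
      (-r * g * y + r * k + r * y * y) • e 0 + (-D * k) • e 1 + (-k) • e 2 + (D * g) • e 3 + g • e
      4 + (-D) • e 5 ∧
    C (e 5) =
      e 3 ∧
    C (e 6) =
      e 8 ∧
    C (e 7) =
      (r * B * B + r - D * B * B * y - B * B * x) • e 0 + (-r * B * y + D * B * y * y) • e 1 + (-r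
      * B + B * x) • e 2 + (D * B * y) • e 3 + B • e 4 + (-D * y) • e 6 ∧
    C (e 8) =
      e 10 ∧
    C (e 9) =
      e 7 ∧
    C (e 10) =
      (r * r * B * g * x - r * r * B - r * B * B * g + r * B * B * y - r * B * g * x * x - r * B *
      g * x + r * B * x * x + 2 * r * B * x - r * g + r * y + D * B * B * g * x - D * B * B + B *
      B * g * y - B * B * y * y) • e 0 + (-r * B * g * x + B * g * x * x + B * k - B * x) • e 1 +
      (-D * B * g * x + D * B * g) • e 2 + (r * B * g + r * B * x - B * g * y - B * k - B * x * x)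
      • e 3 + (-D * B) • e 4 + (-r * B + B * y) • e 5 + k • e 6 + (D * g * x) • e 7 + (-k) • e 8 +
      (-D * x) • e 9 + g • e 10 := by
    obtain ⟨c0, c1, c2, c3, c4, c5, c6, c7, c8, c9, c10⟩ := h.cycle
    rw [hC]
    exact ⟨h.opC_eq he c0, h.opC_eq he c1, h.opC_eq he c2, h.opC_eq he c3, h.opC_eq he c4,
      h.opC_eq he c5, h.opC_eq he c6, h.opC_eq he c7, h.opC_eq he c8, h.opC_eq he c9,
      h.opC_eq he c10⟩
  -- `N = p(C)` commutes with `C`, so it vanishes on `C v` as soon as it vanishes on `v`.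
  set N : M →ₗ[Q] M := C ∘ₗ C ∘ₗ C ∘ₗ C ∘ₗ C - g • (C ∘ₗ C ∘ₗ C ∘ₗ C) + k • (C ∘ₗ C ∘ₗ C)
    - k • (C ∘ₗ C) + g • C - LinearMap.id with hN
  have N_apply (v : M) : N v = C (C (C (C (C v)))) - g • C (C (C (C v))) + k • C (C (C v))
      - k • C (C v) + g • C v - v := rfl
  have NC {v : M} (hv : N v = 0) : N (C v) = 0 := by
    have : N (C v) = C (N v) := by simp only [N_apply, map_add, map_sub, map_smul]
    rw [this, hv, map_zero]
  have N0 : N (e 0) = 0 := by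
    simp only [N_apply, c0, map_smul]
    match_scalars
    clear * - hxy hx hy
    grind
  have N5 : N (e 5) = 0 := by
    simp only [N_apply, c0, c1, c2, c3, c4, c5, map_smul, map_add]
    match_scalars <;> clear * - hxy hD hr hx hy <;> grind
  have N3 : N (e 3) = 0 := c5 ▸ NC N5
  have N1 : N (e 1) = 0 := c3 ▸ NC N3
  have unit {z w : Q} (hzw : w * z = 1) {v : M} (hv : N (z • v) = 0) : N v = 0 := by
    rw [← one_smul Q v, ← hzw, mul_smul, map_smul, hv, smul_zero]
  have N2 : N (e 2) = 0 := by
    have := NC N1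
    rw [c1, map_add, map_smul, N0, smul_zero, zero_add] at this
    exact unit (w := -D) (by linear_combination hD) this
  have N4 : N (e 4) = 0 := c2 ▸ NC N2
  have N9 : N (e 9) = 0 := by
    simp only [N_apply, c0, c1, c2, c3, c4, c5, c6, c7, c8, c9, c10, map_smul, map_add]
    match_scalars <;> clear * - hxy hD hr hx hy <;> grind
  have N7 : N (e 7) = 0 := c9 ▸ NC N9
  have N6 : N (e 6) = 0 := by
    have := NC N7
    simp only [c7, map_add, map_smul, N0, N1, N2, N3, N4, smul_zero, zero_add] at this
    rw [← map_smul] at this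
    exact unit (w := -D * x) (by linear_combination D * D * hxy + hD) this
  have N8 : N (e 8) = 0 := c6 ▸ NC N6
  have N10 : N (e 10) = 0 := c8 ▸ NC N8
  obtain ⟨u, q, hu, hq⟩ : ∃ (u : M) (q : Q), C u = y • u + ((x - 1) * q) • e 0 ∧
      (N u = 0 → N (e 11) = 0) := by
    refine ⟨_, _, hC ▸ h.opC_eq he (h.opposite _ _ _ _ _ _ _ _ _ _ _ rfl rfl rfl rfl rfl rfl rfl rfl
      rfl rfl rfl), fun h0 => ?_⟩
    simpa only [map_add, map_smul, N0, N1, N2, N3, N4, N5, N6, N7, N8, N9, smul_zero, zero_add]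
      using h0
  have N11 : N (e 11) = 0 := by
    apply hq
    simp only [N_apply, hu, c0, map_smul, map_add]
    match_scalars <;> clear * - hxy hx hy <;> grind
  have hN0 : N = 0 := LinearMap.ext_on_range he fun i => by
    fin_cases i <;> assumption
  rw [← N_apply, hN0, LinearMap.zero_apply]

/-- A submodule containing `e 0` and closed under `A`, `T` and `C` is everything. -/
theorem generates (h : IcosaTable r D B g k x y A T e)
    (he : Submodule.span Q (Set.range e) = ⊤) (S : Submodule Q M) (h0 : e 0 ∈ S)
    (hA : ∀ v ∈ S, A v ∈ S) (hT : ∀ v ∈ S, T v ∈ S) (hC : ∀ v ∈ S, opC r D B A T v ∈ S) :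
    S = ⊤ := by
  have hxy := h.hxy; have hD := h.hDD
  have unit {z w : Q} (hzw : w * z = 1) {v : M} (hv : z • v ∈ S) : v ∈ S := by
    rw [← one_smul Q v, ← hzw, mul_smul]; exact S.smul_mem _ hv
  have ad {v w : M} (hv : v ∈ S) (hw : v + w ∈ S) : w ∈ S := (S.add_mem_iff_right hv).1 hw
  have m1 : e 1 ∈ S := by
    have := hT _ h0
    rw [h.hT, icosaT] at this
    exact unit hxy this
  have m2 : e 2 ∈ S := by
    have := hT _ m1
    rw [h.hT, icosaT] at this
    exact unit (w := y) (by linear_combination hxy)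
      (ad (S.add_mem (S.smul_mem _ h0) (S.smul_mem _ m1)) this)
  obtain ⟨-, -, c2, -, -, -, c6, -, c8, -, -⟩ := h.cycle
  have m4 : e 4 ∈ S := h.opC_eq he c2 ▸ hC _ m2
  have m3 : e 3 ∈ S := by
    have := hA _ m2
    rw [h.hA, icosaA] at this
    exact unit hxy (ad (S.add_mem (S.smul_mem _ h0) (S.smul_mem _ m1)) this)
  have m6 : e 6 ∈ S := by
    have := hT _ m3
    rwa [h.hT, icosaT] at this
  have m5 : e 5 ∈ S := by
    have := hA _ m6
    rwa [h.hA, icosaA] at this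
  have m7 : e 7 ∈ S := by
    have := hA _ m4
    rwa [h.hA, icosaA] at this
  have m8 : e 8 ∈ S := h.opC_eq he c6 ▸ hC _ m6
  have m10 : e 10 ∈ S := h.opC_eq he c8 ▸ hC _ m8
  have m9 : e 9 ∈ S := by
    have := hT _ m10
    rw [h.hT, icosaT] at this
    refine ad ?_ this
    repeat' first | assumption | refine S.add_mem ?_ ?_ | refine S.smul_mem _ ?_
  have m11 : e 11 ∈ S := by
    have := hT _ m9
    rwa [h.hT, icosaT] at this
  rw [eq_top_iff, ← he, Submodule.span_le]
  rintro _ ⟨i, rfl⟩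
  fin_cases i <;> assumption

end IcosaTable

theorem laurent_relations {Q : Type*} [CommRing Q] {g k x y : Q} (hxy : x * y = 1)
    (h5 : x ^ 5 - g * x ^ 4 + k * x ^ 3 - k * x ^ 2 + g * x - 1 = 0) :
    x * x * x = g * (x * x) - k * x + k - g * y + y * y ∧
      y * y * y = g * (y * y) - k * y + k - g * x + x * x := by
  constructor <;> grind

open Polynomial in
/-- For `D² = 1`, `D r = r` there is a representation of dimension `60`, generated by one vector, of the
algebra with generators `A, T, C` and relations `A T C = 1`, `A² = rA - D`, `T³ = BT² - BT + 1` and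
`C⁵ = gC⁴ - kC³ + kC² - gC + 1`. -/
theorem exists_icosa_model (r D B g k : ℂ) (hD : D = 1 ∨ D = -1 ∧ r = 0) :
    ∃ (V : Type) (_ : AddCommGroup V) (_ : Module ℂ V) (A T C : Module.End ℂ V) (v : V),
      Module.finrank ℂ V = 60 ∧ A * T * C = 1 ∧ A ^ 2 - r • A + D • 1 = 0 ∧
      T ^ 3 - B • T ^ 2 + B • T - 1 = 0 ∧ C ^ 5 - g • C ^ 4 + k • C ^ 3 - k • C ^ 2 + g • C - 1 = 0 ∧
      ∀ S : Submodule ℂ V, v ∈ S → (∀ w ∈ S, A w ∈ S) → (∀ w ∈ S, T w ∈ S) →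
        (∀ w ∈ S, C w ∈ S) → S = ⊤ := by
  set P : ℂ[X] := X ^ 5 - Polynomial.C g * X ^ 4 + Polynomial.C k * X ^ 3 - Polynomial.C k * X ^ 2
    + Polynomial.C g * X - 1 with hP
  have hdeg : P.natDegree = 5 := by rw [hP]; compute_degree!
  have hmon : P.Monic := by
    rw [hP]; monicity!
  let Q := AdjoinRoot P
  let am : ℂ →+* Q := algebraMap ℂ Q
  let x : Q := AdjoinRoot.root P
  have hx5 : x ^ 5 - am g * x ^ 4 + am k * x ^ 3 - am k * x ^ 2 + am g * x - 1 = 0 := by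
    have := AdjoinRoot.eval₂_root P
    conv_lhs at this => arg 3; rw [hP]
    simp only [eval₂_sub, eval₂_add, eval₂_mul, eval₂_pow, eval₂_X, eval₂_C, eval₂_one] at this
    exact this
  obtain ⟨y, hxy⟩ : ∃ y : Q, x * y = 1 :=
    ⟨x ^ 4 - am g * x ^ 3 + am k * x ^ 2 - am k * x + am g, by linear_combination hx5⟩
  let e : Module.Basis (Fin 12) Q (Fin 12 → Q) := Pi.basisFun Q (Fin 12)
  let A : (Fin 12 → Q) →ₗ[Q] (Fin 12 → Q) :=
    e.constr Q (icosaA (am r) (am D) (am B) (am g) (am k) x y e)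
  let T : (Fin 12 → Q) →ₗ[Q] (Fin 12 → Q) :=
    e.constr Q (icosaT (am r) (am D) (am B) (am g) (am k) x y e)
  have h : IcosaTable (am r) (am D) (am B) (am g) (am k) x y A T e :=
    { hxy := hxy
      hD := by
        obtain rfl | ⟨rfl, rfl⟩ := hD
        · exact Or.inl (map_one _)
        · exact Or.inr ⟨by simp, map_zero _⟩
      hx := (laurent_relations hxy hx5).1
      hy := (laurent_relations hxy hx5).2
      hA := fun i => e.constr_basis Q _ i
      hT := fun i => e.constr_basis Q _ i }
  have he : Submodule.span Q (Set.range e) = ⊤ := e.span_eq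
  obtain ⟨C, hC⟩ : ∃ C, C = IcosaTable.opC (am r) (am D) (am B) A T := ⟨_, rfl⟩
  have hs (z : ℂ) (w : Fin 12 → Q) : am z • w = z • w := algebraMap_smul Q z w
  refine ⟨Fin 12 → Q, inferInstance, inferInstance, A.restrictScalars ℂ, T.restrictScalars ℂ,
    C.restrictScalars ℂ, e 0, ?_, ?_, ?_, ?_, ?_, ?_⟩
  · have : Module.finrank ℂ Q = 5 := by
      rw [(AdjoinRoot.powerBasis' hmon).finrank, AdjoinRoot.powerBasis'_dim, hdeg]
    have : Module.Finite ℂ Q := (AdjoinRoot.powerBasis' hmon).finite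
    rw [Module.finrank_pi_fintype]
    simp [Q, this, *]
  · refine LinearMap.ext fun v => ?_
    rw [hC]
    exact h.A_T_opC he v
  · refine LinearMap.ext fun v => ?_
    have := h.A_sq he v
    rw [hs, hs] at this
    change A (A v) - r • A v + D • v = 0
    rw [this]; abel
  · refine LinearMap.ext fun v => ?_
    have := h.T_cube he v
    rw [hs, hs] at this
    change T (T (T v)) - B • T (T v) + B • T v - v = 0
    rw [this]; abel
  · refine LinearMap.ext fun v => ?_
    have := h.opC_quintic he hC v
    simp only [hs] at this
    simpa only [pow_succ, pow_zero, one_mul, LinearMap.sub_apply, LinearMap.add_apply,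
      Module.End.mul_apply, LinearMap.smul_apply, Module.End.one_apply,
      LinearMap.coe_restrictScalars, LinearMap.zero_apply] using this
  · intro S h0 hSA hST hSC
    -- the largest `Q`-submodule contained in `S`
    let S' : Submodule Q (Fin 12 → Q) :=
      { carrier := {v | ∀ q : Q, q • v ∈ S}
        add_mem' := fun hv hw q => by rw [smul_add]; exact S.add_mem (hv q) (hw q)
        zero_mem' := fun q => by rw [smul_zero]; exact S.zero_mem
        smul_mem' := fun z v hv q => by rw [smul_smul]; exact hv _ }
    have hC0 : C (e 0) = x • e 0 := hC ▸ h.opC_eq he h.cycle.1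
    have h0' : e 0 ∈ S' := fun q => by
      -- `C` acts on `e 0` as `x`, which generates `Q`
      induction q using AdjoinRoot.induction_on with
      | ih p =>
        induction p using Polynomial.induction_on with
        | C z =>
          have := S.smul_mem z h0
          rwa [← hs] at this
        | add p q hp hq => rw [map_add, add_smul]; exact S.add_mem hp hq
        | monomial n z hn =>
          have : C (AdjoinRoot.mk P (Polynomial.C z * X ^ n) • e 0) =
              AdjoinRoot.mk P (Polynomial.C z * X ^ (n + 1)) • e 0 := by
            rw [map_smul, hC0, smul_smul, pow_succ, ← mul_assoc, map_mul _ _ X]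
            rfl
          rw [← this]
          exact hSC _ hn
    have hS' : S' = ⊤ := h.generates he S' h0'
      (fun v hv q => by rw [← map_smul]; exact hSA _ (hv q))
      (fun v hv q => by rw [← map_smul]; exact hST _ (hv q))
      (fun v hv q => by rw [← map_smul]; subst hC; exact hSC _ (hv q))
    refine eq_top_iff.2 fun v _ => ?_
    have : v ∈ S' := hS' ▸ Submodule.mem_top
    simpa using this 1

/-! ### The lower bound for the dimension -/

open Tilde23n in
/-- Under the five conditions, rescaling `a`, `b`, `c` turns the relations of the algebra into those of
`exists_icosa_model`, so the algebra has a cyclic module of dimension `60`. -/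
theorem sixty_le_finrank (α1 β1 β2 : ℂ) (γ : ℕ → ℂ) (α2 β3 : ℂ)
    (hα2 : α2 ≠ 0) (hβ3 : β3 ≠ 0) (hγ5 : γ 5 ≠ 0)
    (h1 : α2 ^ 30 * β3 ^ 20 * γ 5 ^ 12 = 1)
    (h2 : α2 ^ 15 * β3 ^ 10 * γ 5 ^ 6 * α1 = α1)
    (h3 : α2 ^ 10 * β3 ^ 7 * γ 5 ^ 4 * β1 = β2)
    (h4 : α2 ^ 6 * β3 ^ 4 * γ 5 ^ 3 * γ 1 = γ 4)
    (h5 : α2 ^ 12 * β3 ^ 8 * γ 5 ^ 5 * γ 2 = γ 3)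
    [Module.Finite ℂ (Aplus 5 α1 α2 β1 β2 β3 γ)] :
    60 ≤ Module.finrank ℂ (Aplus 5 α1 α2 β1 β2 β3 γ) := by
  obtain ⟨d, hd⟩ : ∃ d, d = α2 ^ 15 * β3 ^ 10 * γ 5 ^ 6 := ⟨_, rfl⟩
  have hdd : d * d = 1 := by rw [hd]; linear_combination h1
  have hd1 : d = 1 ∨ d = -1 := mul_self_eq_one_iff.1 hdd
  -- the scaling factors of `a`, `b` and `c⁻¹`
  obtain ⟨l, hl⟩ : ∃ l, l = d * α2 ^ 7 * β3 ^ 5 * γ 5 ^ 3 := ⟨_, rfl⟩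
  obtain ⟨m, hm⟩ : ∃ m, m = d * α2 ^ 5 * β3 ^ 3 * γ 5 ^ 2 := ⟨_, rfl⟩
  obtain ⟨w, hw⟩ : ∃ w, w = l * m := ⟨_, rfl⟩
  have hd0 : d ≠ 0 := by rintro rfl; simp at hdd
  have hl0 : l ≠ 0 := by rw [hl]; positivity
  have hm0 : m ≠ 0 := by rw [hm]; positivity
  have hw0 : w ≠ 0 := by rw [hw]; positivity
  have hw' : w = α2 ^ 12 * β3 ^ 8 * γ 5 ^ 5 := by
    rw [hw, hl, hm]; linear_combination α2 ^ 12 * β3 ^ 8 * γ 5 ^ 5 * hdd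
  have el : l ^ 2 * α2 = d := by
    rw [hl]; linear_combination d ^ 2 * hd.symm + d * hdd
  have em : m ^ 3 * β3 = 1 := by
    rw [hm]; linear_combination d ^ 3 * hd.symm + (d ^ 2 + 1) * hdd
  have ew : w ^ 5 = γ 5 := by
    rw [hw']; linear_combination (α2 ^ 30 * β3 ^ 20 * γ 5 ^ 12 + 1) * γ 5 * h1
  have em2 : m * β2 = β1 := by
    refine mul_left_cancel₀ hm0 ?_
    rw [hm, ← h3]
    linear_combination α2 ^ 5 * β3 ^ 3 * γ 5 ^ 2 * β1 * d ^ 2 * hd.symm +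
      α2 ^ 5 * β3 ^ 3 * γ 5 ^ 2 * β1 * d * hdd
  have eg : γ 4 = w ^ 3 * γ 1 := by
    rw [hw', ← h4]; linear_combination (- α2 ^ 6 * β3 ^ 4 * γ 5 ^ 3 * γ 1) * h1
  have ek : γ 3 = w * γ 2 := by rw [hw', ← h5]
  have hr : d = 1 ∨ d = -1 ∧ l * α1 = 0 := by
    refine hd1.imp_right fun h => ⟨h, ?_⟩
    rw [← hd, h] at h2
    have : α1 = 0 := by linear_combination (-1 / 2 : ℂ) * h2
    rw [this, mul_zero]
  obtain ⟨V, _, _, A, T, C, v, hV, hATC, hA, hT, hC, hgen⟩ :=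
    exists_icosa_model (l * α1) d (m * β1) (w⁻¹ * γ 1) (w⁻¹ ^ 2 * γ 2) hr
  let f : FreeAlgebra ℂ (Fin 3) →ₐ[ℂ] Module.End ℂ V :=
    FreeAlgebra.lift ℂ ![l⁻¹ • A, m⁻¹ • T, w • C]
  have fa : f a = l⁻¹ • A := FreeAlgebra.lift_ι_apply _ _
  have fb : f b = m⁻¹ • T := FreeAlgebra.lift_ι_apply _ _
  have fc : f c = w • C := FreeAlgebra.lift_ι_apply _ _
  have fκ (z : ℂ) (u : FreeAlgebra ℂ (Fin 3)) : f (κ z * u) = z • f u := by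
    rw [κ, ← Algebra.smul_def, map_smul]
  have fκ' (z : ℂ) : f (κ z) = z • 1 := by
    simpa using fκ z 1
  have hrel : ∀ ⦃s t⦄, Rel 5 α1 α2 β1 β2 β3 γ s t → f s = f t := by
    rintro _ _ (_ | _ | _ | _)
    · simp only [map_mul, fa, fb, fc, map_one, smul_mul_assoc, mul_smul_comm, smul_smul, hATC]
      rw [hw]; match_scalars; field_simp
    · rw [sub_add_eq_add_sub, sub_eq_zero, add_comm, ← eq_sub_iff_add_eq'] at hA
      simp only [map_sub, map_add, map_pow, fκ, fκ', fa, smul_pow, hA, map_zero]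
      match_scalars <;> field_simp <;> first | ring1 | linear_combination el
    · have hT : T ^ 3 = (m * β1) • T ^ 2 - (m * β1) • T + 1 := by
        rw [← sub_eq_zero, ← hT]; abel
      simp only [map_sub, map_add, map_pow, fκ, fκ', fb, smul_pow, hT, map_zero]
      match_scalars <;> field_simp <;>
        first | ring1 | linear_combination em2 | linear_combination -em
    · have hC : C ^ 5 = (w⁻¹ * γ 1) • C ^ 4 - (w⁻¹ ^ 2 * γ 2) • C ^ 3 + (w⁻¹ ^ 2 * γ 2) • C ^ 2
          - (w⁻¹ * γ 1) • C + 1 := by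
        rw [← sub_eq_zero, ← hC]; abel
      simp only [map_sum, map_add, map_pow, fκ, fc, smul_pow, hC, map_zero]
      simp [Finset.sum_Icc_succ_top, smul_pow]
      match_scalars <;> field_simp
      · ring
      · ring
      · linear_combination -w ^ 2 * ek
      · linear_combination w * eg
      · linear_combination ew
  let φ : Aplus 5 α1 α2 β1 β2 β3 γ →ₐ[ℂ] Module.End ℂ V := RingQuot.liftAlgHom ℂ ⟨f, hrel⟩
  let π := RingQuot.mkAlgHom ℂ (Rel 5 α1 α2 β1 β2 β3 γ)
  have hφ (u) : φ (π u) = f u := RingQuot.liftAlgHom_mkAlgHom_apply ..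
  let ev : Aplus 5 α1 α2 β1 β2 β3 γ →ₗ[ℂ] V := (LinearMap.applyₗ v) ∘ₗ φ.toLinearMap
  have stable {L : Module.End ℂ V} {z : ℂ} (hz : z ≠ 0) {s} (hs : f s = z • L) :
      ∀ w ∈ LinearMap.range ev, L w ∈ LinearMap.range ev := by
    rintro _ ⟨u, rfl⟩
    refine ⟨z⁻¹ • (π s * u), ?_⟩
    have : L = z⁻¹ • f s := by rw [hs, smul_smul, inv_mul_cancel₀ hz, one_smul]
    simp [ev, this, hφ]
  have : LinearMap.range ev = ⊤ := hgen _ ⟨1, by simp [ev]⟩ (stable (inv_ne_zero hl0) fa)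
    (stable (inv_ne_zero hm0) fb) (stable hw0 fc)
  rw [← hV]
  exact LinearMap.finrank_le_finrank_of_surjective (LinearMap.range_eq_top.1 this)

/-! ### Words and braid moves -/

section BraidSystems

/-- Words in the generators `s₁, s₂, s₃` of the Coxeter group, as letters `0, 1, 2`. -/
abbrev Word := List (Fin 3)

/-- The Coxeter matrix of type `H₃`. -/
def cox (i j : Fin 3) : ℕ :=
  if i = j then 1 else match i.val + j.val with
    | 1 => 2
    | 2 => 5
    | _ => 3

/-- The alternating word `i, j, i, …` of length `n`. -/
def alt (i j : Fin 3) : ℕ → Word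
  | 0 => []
  | n + 1 => i :: alt j i n

/-- The exponents of `x, y, z` in the constant term `κ i j` of the relation for `s_i s_j`. -/
def coxExp (i j : Fin 3) : ℤ × ℤ × ℤ :=
  match i, j with
  | 0, 1 => (1, 0, 0)
  | 1, 0 => (-1, 0, 0)
  | 1, 2 => (0, 1, 0)
  | 2, 1 => (0, -1, 0)
  | 2, 0 => (0, 0, 1)
  | 0, 2 => (0, 0, -1)
  | _, _ => 0

/-- The monomial `x ^ e₁ y ^ e₂ z ^ e₃`. -/
def mono (x y z : ℂ) (e : ℤ × ℤ × ℤ) : ℂ := x ^ e.1 * y ^ e.2.1 * z ^ e.2.2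

/-- A braid move at the start of a word, if one is possible. -/
def moveHead : Word → Word
  | i :: j :: u =>
    if i ≠ j ∧ (i :: j :: u).take (cox i j) = alt i j (cox i j) then
      alt j i (cox i j) ++ (i :: j :: u).drop (cox i j)
    else i :: j :: u
  | u => u

/-- The exponents of the scalar by which the braid move at the start of `u` acts, when `u` is followed
by `r` more letters. -/
def expHead (r : ℕ) : Word → ℤ × ℤ × ℤ
  | i :: j :: u =>
    if i ≠ j ∧ (i :: j :: u).take (cox i j) = alt i j (cox i j) then
      if ((i :: j :: u).length + r) % 2 = 0 then coxExp i j else coxExp j i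
    else 0
  | _ => 0

/-- A braid move at position `p`, if one is possible. -/
def move : ℕ → Word → Word
  | 0, u => moveHead u
  | p + 1, x :: u => x :: move p u
  | _ + 1, [] => []

/-- The exponents of the scalar by which the braid move at position `p` acts. -/
def expMove (r : ℕ) : ℕ → Word → ℤ × ℤ × ℤ
  | 0, u => expHead r u
  | p + 1, _ :: u => expMove r p u
  | _ + 1, [] => 0

/-- The result of a sequence of braid moves. -/
def follow : List ℕ → Word → Word
  | [], u => u
  | p :: ps, u => follow ps (move p u)

/-- The exponents of the scalar by which a sequence of braid moves acts. -/
def expFollow (r : ℕ) : List ℕ → Word → ℤ × ℤ × ℤ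
  | [], _ => 0
  | p :: ps, u => expMove r p u + expFollow r ps (move p u)

theorem cox_pos : ∀ i j, 0 < cox i j := by decide

theorem alt_length (i j : Fin 3) (n : ℕ) : (alt i j n).length = n := by
  induction n generalizing i j with
  | zero => rfl
  | succ n ih => simp [alt, ih]

theorem moveHead_length (u : Word) : (moveHead u).length = u.length := by
  unfold moveHead
  split
  · rename_i i j u
    split_ifs with h
    · have := congrArg List.length h.2
      rw [List.length_take, alt_length] at this
      rw [List.length_append, alt_length, List.length_drop]
      omega
    · rfl
  · rfl

theorem move_length (p : ℕ) (u : Word) : (move p u).length = u.length := by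
  induction p generalizing u with
  | zero => exact moveHead_length u
  | succ p ih => cases u <;> simp [move, ih]

theorem mono_add {x y z : ℂ} (hx : x ≠ 0) (hy : y ≠ 0) (hz : z ≠ 0) (e f : ℤ × ℤ × ℤ) :
    mono x y z (e + f) = mono x y z e * mono x y z f := by
  simp only [mono, Prod.fst_add, Prod.snd_add, zpow_add₀ hx, zpow_add₀ hy, zpow_add₀ hz]
  ring

variable {A : Type*} [Ring A] [Algebra ℂ A]

/-- Elements `t i j` of an algebra, in the roles of the products `s_i s_j` of two reflections, each
of which satisfies a monic polynomial with constant term determined by `x, y, z`. -/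
structure BraidSys (x y z : ℂ) (t : Fin 3 → Fin 3 → A) : Prop where
  hx : x ≠ 0
  hy : y ≠ 0
  hz : z ≠ 0
  one : ∀ i, t i i = 1
  mul : ∀ i j k, t i j * t j k = t i k
  rel : ∀ i j, i ≠ j → ∃ c : ℕ → ℂ, c 0 = mono x y z (coxExp i j) ∧
    t i j ^ cox i j = ∑ k ∈ Finset.range (cox i j), c k • t i j ^ k

/-- The action of the letter `s_i` on `A × A`, where the two factors stand for the even and the odd
part of the deformed group algebra of the full Coxeter group. -/
def sAct (t : Fin 3 → Fin 3 → A) (i : Fin 3) : A × A →ₗ[ℂ] A × A where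
  toFun u := (t i 0 * u.2, t 0 i * u.1)
  map_add' u v := by simp [mul_add]
  map_smul' c u := by simp

/-- The value of a word: its letters applied in turn to the even element `1`. -/
def ev (t : Fin 3 → Fin 3 → A) (w : Word) : A × A := w.foldr (fun i u => sAct t i u) (1, 0)

/-- The span of the values of all `u ++ w` with `u` at least two letters shorter than `n`. -/
def low (t : Fin 3 → Fin 3 → A) (n : ℕ) (w : Word) : Submodule ℂ (A × A) :=
  Submodule.span ℂ {v | ∃ u : Word, u.length + 2 ≤ n ∧ v = ev t (u ++ w)}

theorem ev_cons (t : Fin 3 → Fin 3 → A) (i : Fin 3) (w : Word) : ev t (i :: w) = sAct t i (ev t w) :=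
  rfl

theorem ev_append (t : Fin 3 → Fin 3 → A) (u w : Word) :
    ev t (u ++ w) = u.foldr (fun i v => sAct t i v) (ev t w) := by
  simp [ev, List.foldr_append]

theorem sAct_apply (t : Fin 3 → Fin 3 → A) (i : Fin 3) (u : A × A) :
    sAct t i u = (t i 0 * u.2, t 0 i * u.1) := rfl

section
variable {x y z : ℂ} {t : Fin 3 → Fin 3 → A}

theorem BraidSys.sAct_sAct (h : BraidSys x y z t) (i : Fin 3) (u : A × A) :
    sAct t i (sAct t i u) = u := by
  simp [sAct_apply, ← mul_assoc, h.mul, h.one]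

theorem BraidSys.ev_square (h : BraidSys x y z t) (p q : Word) (i : Fin 3) :
    ev t (p ++ i :: i :: q) = ev t (p ++ q) := by
  rw [ev_append, ev_append, ev_cons, ev_cons, h.sAct_sAct]

theorem ev_snd (t : Fin 3 → Fin 3 → A) (w : Word) : w.length % 2 = 0 → (ev t w).2 = 0 := by
  suffices (w.length % 2 = 0 → (ev t w).2 = 0) ∧ (w.length % 2 = 1 → (ev t w).1 = 0) from this.1
  induction w with
  | nil => simp [ev]
  | cons i w ih =>
    rw [ev_cons, sAct_apply, List.length_cons]
    exact ⟨fun hw => by simp [ih.2 (by omega)], fun hw => by simp [ih.1 (by omega)]⟩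

theorem ev_fst (t : Fin 3 → Fin 3 → A) (w : Word) (hw : w.length % 2 = 1) : (ev t w).1 = 0 := by
  cases w with
  | nil => simp at hw
  | cons i w =>
    rw [List.length_cons] at hw
    rw [ev_cons, sAct_apply, ev_snd t w (by omega), mul_zero]

theorem BraidSys.sAct_pow (h : BraidSys x y z t) (i j : Fin 3) (k : ℕ) (u : A × A) :
    ((sAct t i ∘ₗ sAct t j) ^ k) u =
      (t i j ^ k * u.1, t 0 i * t j i ^ k * t i 0 * u.2) := by
  induction k with
  | zero => simp [h.mul, h.one]
  | succ k ih =>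
    have e : t 0 i * (t j 0 * (t 0 i * t j i ^ k * t i 0 * u.2)) =
        t 0 i * (t j i * t j i ^ k) * t i 0 * u.2 := by
      rw [← h.mul j 0 i]; simp only [mul_assoc]
    have e' : t i 0 * (t 0 j * (t i j ^ k * u.1)) = t i j * t i j ^ k * u.1 := by
      rw [← mul_assoc, h.mul, mul_assoc]
    rw [pow_succ', Module.End.mul_apply, ih, LinearMap.comp_apply, sAct_apply, sAct_apply,
      pow_succ', pow_succ']
    exact Prod.ext e' e

/-- The polynomial relation of `t i j` on even elements and that of `t j i` on odd ones. -/
theorem BraidSys.exists_rel (h : BraidSys x y z t) {i j : Fin 3} (hij : i ≠ j) (w : Word) :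
    ∃ c : ℕ → ℂ, c 0 = mono x y z (if w.length % 2 = 0 then coxExp i j else coxExp j i) ∧
      ((sAct t i ∘ₗ sAct t j) ^ cox i j) (ev t w) =
        ∑ k ∈ Finset.range (cox i j), c k • ((sAct t i ∘ₗ sAct t j) ^ k) (ev t w) := by
  have hcox : cox j i = cox i j := by simp only [cox, add_comm, eq_comm]
  by_cases hw : w.length % 2 = 0
  · obtain ⟨c, hc, e⟩ := h.rel i j hij
    refine ⟨c, by simp [hw, hc], ?_⟩
    simp only [h.sAct_pow, ev_snd t w hw, mul_zero, e, Finset.sum_mul]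
    ext <;> simp [Prod.fst_sum, Prod.snd_sum]
  · obtain ⟨c, hc, e⟩ := h.rel j i hij.symm
    refine ⟨c, by simp [hw, hc], ?_⟩
    rw [hcox] at e
    simp only [h.sAct_pow, ev_fst t w (by omega), mul_zero, e, Finset.sum_mul, Finset.mul_sum]
    ext <;> simp [Prod.fst_sum, Prod.snd_sum]

theorem ev_mem_low {n : ℕ} (u w : Word) (hu : u.length + 2 ≤ n) : ev t (u ++ w) ∈ low t n w :=
  Submodule.subset_span ⟨u, hu, rfl⟩

theorem sAct_mem_low {n : ℕ} {w : Word} (i : Fin 3) {v : A × A} (hv : v ∈ low t n w) :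
    sAct t i v ∈ low t (n + 1) w := by
  have : low t n w ≤ (low t (n + 1) w).comap (sAct t i) := by
    refine Submodule.span_le.2 ?_
    rintro _ ⟨u, hu, rfl⟩
    exact ev_mem_low (i :: u) w (by simp; omega)
  exact this hv

/-- The powers of `s_i s_j` other than the zeroth and the last shorten `s_j s_i s_j ⋯`. -/
theorem BraidSys.sAct_pow_alt (h : BraidSys x y z t) {i j : Fin 3} (hij : i ≠ j) (q : Word) :
    ((sAct t i ∘ₗ sAct t j) ^ cox i j) (ev t (alt j i (cox i j) ++ q)) =
      ev t (alt i j (cox i j) ++ q) ∧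
    ∀ k, k ≠ 0 → k < cox i j → ∃ u : Word, u.length + 2 ≤ cox i j ∧
      ((sAct t i ∘ₗ sAct t j) ^ k) (ev t (alt j i (cox i j) ++ q)) = ev t (u ++ q) := by
  have hm : cox i j = 2 ∨ cox i j = 3 ∨ cox i j = 5 := by
    revert i j; decide
  rcases hm with hm | hm | hm <;> rw [hm]
  · refine ⟨by simp [alt, ev_cons, pow_succ, h.sAct_sAct], fun k h0 hk => ?_⟩
    interval_cases k
    · exact absurd rfl h0
    · exact ⟨[], by simp, by simp [alt, ev_cons, pow_succ, h.sAct_sAct]⟩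
  · refine ⟨by simp [alt, ev_cons, pow_succ, h.sAct_sAct], fun k h0 hk => ?_⟩
    interval_cases k
    · exact absurd rfl h0
    · exact ⟨[j], by simp, by simp [alt, ev_cons, pow_succ, h.sAct_sAct]⟩
    · exact ⟨[i], by simp, by simp [alt, ev_cons, pow_succ, h.sAct_sAct]⟩
  · refine ⟨by simp [alt, ev_cons, pow_succ, h.sAct_sAct], fun k h0 hk => ?_⟩
    interval_cases k
    · exact absurd rfl h0
    · exact ⟨[j, i, j], by simp, by simp [alt, ev_cons, pow_succ, h.sAct_sAct]⟩
    · exact ⟨[j], by simp, by simp [alt, ev_cons, pow_succ, h.sAct_sAct]⟩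
    · exact ⟨[i], by simp, by simp [alt, ev_cons, pow_succ, h.sAct_sAct]⟩
    · exact ⟨[i, j, i], by simp, by simp [alt, ev_cons, pow_succ, h.sAct_sAct]⟩

theorem BraidSys.moveHead_mem (h : BraidSys x y z t) (u w : Word) :
    ev t (u ++ w) - mono x y z (expHead w.length u) • ev t (moveHead u ++ w) ∈
      low t u.length w := by
  have triv (u : Word) : ev t (u ++ w) - mono x y z 0 • ev t (u ++ w) ∈ low t u.length w := by
    simp [mono]
  unfold moveHead expHead
  split
  · rename_i i j u
    split_ifs with hc hp
    all_goals first | exact triv _ | skip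
    all_goals
      obtain ⟨hij, ht⟩ := hc
      have hl := congrArg List.length ht
      rw [List.length_take, alt_length] at hl
      have hu := List.take_append_drop (cox i j) (i :: j :: u)
      rw [ht] at hu
      generalize (i :: j :: u).drop (cox i j) = q at hu ⊢
      rw [← hu] at hp ⊢
      obtain ⟨c, hc, e⟩ := h.exists_rel hij (alt j i (cox i j) ++ (q ++ w))
      obtain ⟨e1, e2⟩ := h.sAct_pow_alt hij (q ++ w)
      have hm := cox_pos i j
      rw [List.length_append, alt_length] at hp
      simp only [List.length_append, alt_length, ← add_assoc] at hc
      simp only [hp, if_true, if_false] at hc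
      rw [e1, Finset.range_eq_Ico, Finset.sum_eq_sum_Ico_succ_bot hm, pow_zero, hc] at e
      rw [List.append_assoc, List.append_assoc, e, Module.End.one_apply, add_sub_cancel_left]
      refine Submodule.sum_mem _ fun k hk => Submodule.smul_mem _ _ ?_
      rw [Finset.mem_Ico] at hk
      obtain ⟨v, hv, ev'⟩ := e2 k (by omega) hk.2
      rw [ev', ← List.append_assoc]
      exact ev_mem_low _ _ (by simp [alt_length]; omega)
  · exact triv _

theorem BraidSys.move_mem (h : BraidSys x y z t) (p : ℕ) (u w : Word) :
    ev t (u ++ w) - mono x y z (expMove w.length p u) • ev t (move p u ++ w) ∈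
      low t u.length w := by
  induction p generalizing u with
  | zero => exact h.moveHead_mem u w
  | succ p ih =>
    cases u with
    | nil => simp [move, expMove, mono]
    | cons i u =>
      have := sAct_mem_low i (ih u)
      rwa [map_sub, map_smul] at this

/-- A sequence of braid moves changes the value of a word by a scalar, up to shorter words. -/
theorem BraidSys.follow_mem (h : BraidSys x y z t) (ps : List ℕ) (u w : Word) :
    ev t (u ++ w) - mono x y z (expFollow w.length ps u) • ev t (follow ps u ++ w) ∈
      low t u.length w := by
  induction ps generalizing u with
  | nil => simp [follow, expFollow, mono]
  | cons p ps ih =>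
    have h1 := h.move_mem p u w
    have h2 := ih (move p u)
    rw [move_length] at h2
    have := add_mem h1 (Submodule.smul_mem _ (mono x y z (expMove w.length p u)) h2)
    rw [smul_sub, smul_smul, ← mono_add h.hx h.hy h.hz, sub_add_sub_cancel] at this
    exact this
end

/-! ### Reduction to cosets of a rank two parabolic subgroup -/

/-- Membership of a letter in `{i, j}`. -/
def inPair (i j l : Fin 3) : Bool := l == i || l == j

/-- Whether a word has two equal adjacent letters. -/
def hasSquare : Word → Bool
  | i :: j :: u => i == j || hasSquare (j :: u)
  | _ => false

/-- Whether a word has two equal adjacent letters, or is `d ++ w` with `d` in the list `D`, of length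
at most `b`, and `w` a word in `i, j`. -/
def good (D : List Word) (i j : Fin 3) (b : ℕ) (v : Word) : Bool :=
  hasSquare v || (List.range (b + 1)).any fun n =>
    D.contains (v.take n) && (v.drop n).all (inPair i j)

/-- A table of words `d`, meant to be the minimal representatives of the cosets `d⟨s_i, s_j⟩`, and for
each letter `l` of a sequence of braid moves from `l :: d` to a word which contains a square or starts
with a word in the table. If `l` is `i` or `j` and `d` is shorter than `N`, then that word must be
shorter than `N` too. -/
def cosetTable (i j : Fin 3) (N : ℕ) (tab : List (Word × List (List ℕ))) : Bool :=
  (tab.map Prod.fst).contains [] && tab.all fun e => (List.finRange 3).all fun l =>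
    good (tab.map Prod.fst) i j
      (if inPair i j l && decide (e.1.length < N) then min (N - 1) (e.1.length + 1)
        else e.1.length + 1)
      (follow (e.2.getD l.val []) (l :: e.1))

/-- The words of length at most `n` in a table. -/
def upTo (tab : List (Word × List (List ℕ))) (n : ℕ) : List Word :=
  (tab.map Prod.fst).filter fun d => decide (d.length ≤ n)

/-- The span of the values of all `d ++ w` with `d ∈ D` and `w` a word in `i, j`. -/
def cosetSpan (t : Fin 3 → Fin 3 → A) (i j : Fin 3) (D : List Word) : Submodule ℂ (A × A) :=
  Submodule.span ℂ {v | ∃ d ∈ D, ∃ w : Word, w.all (inPair i j) = true ∧ v = ev t (d ++ w)}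

theorem exists_square {u : Word} (hu : hasSquare u = true) : ∃ p i q, u = p ++ i :: i :: q := by
  induction u with
  | nil => simp [hasSquare] at hu
  | cons i u ih =>
    cases u with
    | nil => simp [hasSquare] at hu
    | cons j u =>
      rw [hasSquare, Bool.or_eq_true, beq_iff_eq] at hu
      rcases hu with rfl | hu
      · exact ⟨[], i, u, rfl⟩
      · obtain ⟨p, k, q, e⟩ := ih hu
        exact ⟨i :: p, k, q, by rw [e, List.cons_append]⟩

section
variable {x y z : ℂ} {t : Fin 3 → Fin 3 → A} {i j : Fin 3}

theorem ev_mem_cosetSpan {D : List Word} {d w : Word} (hd : d ∈ D) (hw : w.all (inPair i j) = true) :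
    ev t (d ++ w) ∈ cosetSpan t i j D := Submodule.subset_span ⟨d, hd, w, hw, rfl⟩

theorem cosetSpan_mono {D D' : List Word} (hD : D ⊆ D') :
    cosetSpan t i j D ≤ cosetSpan t i j D' :=
  Submodule.span_mono fun _ ⟨d, hd, h⟩ => ⟨d, hD hd, h⟩

theorem upTo_subset (tab : List (Word × List (List ℕ))) {m n : ℕ} (h : m ≤ n) :
    upTo tab m ⊆ upTo tab n := fun d hd => by
  simp only [upTo, List.mem_filter, decide_eq_true_eq] at hd ⊢
  exact ⟨hd.1, hd.2.trans h⟩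

theorem length_follow (ps : List ℕ) (u : Word) : (follow ps u).length = u.length := by
  induction ps generalizing u with
  | nil => rfl
  | cons p ps ih => rw [follow, ih, move_length]

theorem BraidSys.cons_mem (h : BraidSys x y z t) {S : Submodule ℂ (A × A)} {D : List Word} {b : ℕ}
    {u w : Word} (ps : List ℕ) (hgood : good D i j b (follow ps u) = true)
    (hlow : ∀ v : Word, v.length + 2 ≤ u.length → ∀ w : Word, w.all (inPair i j) = true →
      ev t (v ++ w) ∈ S)
    (hD : ∀ d ∈ D, d.length ≤ b → ∀ w : Word, w.all (inPair i j) = true → ev t (d ++ w) ∈ S)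
    (hw : w.all (inPair i j) = true) : ev t (u ++ w) ∈ S := by
  have h1 : low t u.length w ≤ S := Submodule.span_le.2 <| by
    rintro _ ⟨v, hv, rfl⟩
    exact hlow v hv w hw
  rw [← sub_add_cancel (ev t (u ++ w))]
  refine add_mem (h1 (h.follow_mem ps u w)) (Submodule.smul_mem _ _ ?_)
  have hl := length_follow ps u
  generalize follow ps u = v at hgood hl
  rw [good, Bool.or_eq_true] at hgood
  rcases hgood with hs | hs
  · obtain ⟨p, k, q, rfl⟩ := exists_square hs
    rw [List.append_assoc, List.cons_append, List.cons_append, h.ev_square, ← List.append_assoc]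
    refine hlow _ ?_ w hw
    simp only [List.length_append, List.length_cons] at hl ⊢
    omega
  · rw [List.any_eq_true] at hs
    obtain ⟨n, hn, hs⟩ := hs
    rw [Bool.and_eq_true, List.contains_iff_mem] at hs
    rw [List.mem_range] at hn
    rw [← List.take_append_drop n v, List.append_assoc]
    refine hD _ hs.1 ?_ _ ?_
    · rw [List.length_take]; omega
    · rw [List.all_append, hs.2, hw]; rfl

variable {N : ℕ} {tab : List (Word × List (List ℕ))}

/-- Every word can be rewritten in terms of coset representatives followed by words in `i, j`. -/
theorem BraidSys.reduce (h : BraidSys x y z t) (ht : cosetTable i j N tab = true) (n : ℕ) (u : Word)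
    (hu : u.length ≤ n) (w : Word) (hw : w.all (inPair i j) = true) :
    ev t (u ++ w) ∈ cosetSpan t i j (upTo tab n) := by
  induction n using Nat.strong_induction_on generalizing u w with
  | _ n ih =>
  rw [cosetTable, Bool.and_eq_true, List.contains_iff_mem, List.all_eq_true] at ht
  cases u with
  | nil => exact ev_mem_cosetSpan (by simp [upTo]; simpa using ht.1) hw
  | cons l u =>
    rw [List.length_cons] at hu
    obtain ⟨k, rfl⟩ : ∃ k, n = k + 1 := ⟨n - 1, by omega⟩
    have key : cosetSpan t i j (upTo tab k) ≤
        (cosetSpan t i j (upTo tab (k + 1))).comap (sAct t l) := by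
      refine Submodule.span_le.2 ?_
      rintro _ ⟨d, hd, w, hw, rfl⟩
      simp only [upTo, List.mem_filter, decide_eq_true_eq, List.mem_map] at hd
      obtain ⟨⟨e, he, rfl⟩, hd⟩ := hd
      have hg := List.all_eq_true.1 (ht.2 e he) l (List.mem_finRange l)
      change ev t (l :: e.1 ++ w) ∈ cosetSpan t i j (upTo tab (k + 1))
      refine h.cons_mem (u := l :: e.1) _ hg (fun v hv w hw => ?_) (fun d' hd' hb w hw => ?_) hw
      · rw [List.length_cons] at hv
        exact cosetSpan_mono (upTo_subset tab (by omega)) (ih k (by omega) v (by omega) w hw)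
      · refine ev_mem_cosetSpan ?_ hw
        simp only [upTo, List.mem_filter, decide_eq_true_eq]
        refine ⟨hd', ?_⟩
        split_ifs at hb <;> omega
    exact key (ih k (by omega) u (by omega) w hw)

/-- The span of the cosets of length less than `N` is stable under left multiplication by `s_i`
and `s_j`. -/
theorem BraidSys.sAct_mem (h : BraidSys x y z t) (ht : cosetTable i j N tab = true) {l : Fin 3}
    (hl : inPair i j l = true) {v : A × A} (hv : v ∈ cosetSpan t i j (upTo tab (N - 1)))
    (hN : 0 < N) :
    sAct t l v ∈ cosetSpan t i j (upTo tab (N - 1)) := by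
  have ht' := ht
  rw [cosetTable, Bool.and_eq_true, List.contains_iff_mem, List.all_eq_true] at ht'
  have key : cosetSpan t i j (upTo tab (N - 1)) ≤
      (cosetSpan t i j (upTo tab (N - 1))).comap (sAct t l) := by
    refine Submodule.span_le.2 ?_
    rintro _ ⟨d, hd, w, hw, rfl⟩
    simp only [upTo, List.mem_filter, decide_eq_true_eq, List.mem_map] at hd
    obtain ⟨⟨e, he, rfl⟩, hd⟩ := hd
    have hg := List.all_eq_true.1 (ht'.2 e he) l (List.mem_finRange l)
    change ev t (l :: e.1 ++ w) ∈ cosetSpan t i j (upTo tab (N - 1))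
    refine h.cons_mem (u := l :: e.1) _ hg (fun v hv w hw => ?_) (fun d' hd' hb w hw => ?_) hw
    · rw [List.length_cons] at hv
      exact h.reduce ht _ v (by omega) w hw
    · refine ev_mem_cosetSpan ?_ hw
      simp only [upTo, List.mem_filter, decide_eq_true_eq]
      rw [if_pos (by rw [hl, Bool.true_and, decide_eq_true_eq]; omega)] at hb
      exact ⟨hd', by omega⟩
  exact key hv

/-- The even part of the value of a word. -/
theorem ev_append_even (t : Fin 3 → Fin 3 → A) (u w : Word) (hw : w.length % 2 = 0) :
    ev t (u ++ w) = ((ev t u).1 * (ev t w).1, (ev t u).2 * (ev t w).1) := by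
  induction u with
  | nil =>
    refine Prod.ext (by simp [ev]) ?_
    rw [List.nil_append, ev_snd t w hw]
    simp [ev]
  | cons l u ih => rw [List.cons_append, ev_cons, ih, ev_cons, sAct_apply, sAct_apply]; simp [mul_assoc]

/-- The span of the first `m` powers of an element. -/
def powSpan (s : A) (m : ℕ) : Submodule ℂ A :=
  Submodule.span ℂ (Set.range fun k : Fin m => s ^ k.val)

theorem pow_mem_powSpan (s : A) {k m : ℕ} (hk : k < m) : s ^ k ∈ powSpan s m :=
  Submodule.subset_span ⟨⟨k, hk⟩, rfl⟩

/-- The span of the powers of `s` up to the degree of a polynomial relation is stable under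
multiplication by `s`, and by `s⁻¹` if the constant term of the relation is not zero. -/
theorem mul_mem_powSpan {s s' : A} {m : ℕ} {c : ℕ → ℂ} (hs : s' * s = 1) (hc : c 0 ≠ 0) (hm : 1 < m)
    (e : s ^ m = ∑ k ∈ Finset.range m, c k • s ^ k) {v : A} (hv : v ∈ powSpan s m) :
    s * v ∈ powSpan s m ∧ s' * v ∈ powSpan s m := by
  have h1 : powSpan s m ≤ (powSpan s m).comap (LinearMap.mulLeft ℂ s) := by
    refine Submodule.span_le.2 ?_
    rintro _ ⟨⟨k, hk⟩, rfl⟩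
    change s * s ^ k ∈ powSpan s m
    rw [← pow_succ']
    rcases (Nat.succ_le_of_lt hk).lt_or_eq with hk | hk
    · exact pow_mem_powSpan s hk
    · rw [show k + 1 = m from hk, e]
      exact Submodule.sum_mem _ fun k hk => Submodule.smul_mem _ _
        (pow_mem_powSpan s (Finset.mem_range.1 hk))
  have hs' (k : ℕ) : s' * s ^ (k + 1) = s ^ k := by rw [pow_succ', ← mul_assoc, hs, one_mul]
  have h2 : powSpan s m ≤ (powSpan s m).comap (LinearMap.mulLeft ℂ s') := by
    refine Submodule.span_le.2 ?_
    rintro _ ⟨⟨k, hk⟩, rfl⟩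
    change s' * s ^ k ∈ powSpan s m
    cases k with
    | succ k => rw [hs']; exact pow_mem_powSpan s (by omega)
    | zero =>
      obtain ⟨m, rfl⟩ : ∃ n, m = n + 1 := ⟨m - 1, by omega⟩
      rw [Finset.sum_range_succ'] at e
      have e' : s ^ 0 = (c 0)⁻¹ • (s ^ (m + 1) - ∑ k ∈ Finset.range m, c (k + 1) • s ^ (k + 1)) := by
        rw [e, add_sub_cancel_left, smul_smul, inv_mul_cancel₀ hc, one_smul]
      rw [e', mul_smul_comm, mul_sub, hs', Finset.mul_sum]
      refine Submodule.smul_mem _ _ (sub_mem (pow_mem_powSpan s (by omega)) ?_)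
      refine Submodule.sum_mem _ fun k hk => ?_
      rw [mul_smul_comm, hs']
      exact Submodule.smul_mem _ _ (pow_mem_powSpan s (by rw [Finset.mem_range] at hk; omega))
  exact ⟨h1 hv, h2 hv⟩

theorem one_lt_cox : ∀ i j, i ≠ j → 1 < cox i j := by decide

/-- Words of even length in `i, j` are powers of `t i j`. -/
theorem BraidSys.ev_mem_powSpan (h : BraidSys x y z t) (hij : i ≠ j) (w : Word)
    (hw : w.all (inPair i j) = true) (hl : w.length % 2 = 0) :
    (ev t w).1 ∈ powSpan (t i j) (cox i j) := by
  have hm := one_lt_cox i j hij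
  obtain ⟨c, hc, e⟩ := h.rel i j hij
  have hc : c 0 ≠ 0 := by
    have := h.hx; have := h.hy; have := h.hz
    rw [hc, mono]; positivity
  match w with
  | [] => simpa [ev] using pow_mem_powSpan (t i j) (k := 0) (by omega)
  | [l] => simp at hl
  | k :: l :: w =>
    rw [List.all_cons, List.all_cons, Bool.and_eq_true, Bool.and_eq_true] at hw
    have ih := h.ev_mem_powSpan hij w hw.2.2 (by simp only [List.length_cons] at hl; omega)
    have hmul := mul_mem_powSpan (s' := t j i) (by rw [h.mul, h.one]) hc hm e ih
    rw [ev_cons, ev_cons, sAct_apply, sAct_apply]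
    simp only [← mul_assoc, h.mul]
    simp only [inPair, Bool.or_eq_true, beq_iff_eq] at hw
    rcases hw with ⟨rfl | rfl, rfl | rfl, -⟩
    · simpa [h.one] using ih
    · exact hmul.1
    · exact hmul.2
    · simpa [h.one] using ih

/-- A word of odd length is extended by the letter `i` to become even. -/
def evenWord (i : Fin 3) (d : Word) : Word := if d.length % 2 = 0 then d else d ++ [i]

theorem BraidSys.ev_coset (h : BraidSys x y z t) (hij : i ≠ j) (d w : Word)
    (hw : w.all (inPair i j) = true) :
    (ev t (d ++ w)).1 ∈ (powSpan (t i j) (cox i j)).map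
      (LinearMap.mulLeft ℂ (ev t (evenWord i d)).1) := by
  by_cases hdw : (d ++ w).length % 2 = 0
  · rw [List.length_append] at hdw
    rw [evenWord]
    split_ifs with hd
    · rw [ev_append_even t d w (by omega)]
      exact ⟨_, h.ev_mem_powSpan hij w hw (by omega), rfl⟩
    · have e := h.ev_square d w i
      rw [← e, List.append_cons d i (i :: w),
        ev_append_even t (d ++ [i]) (i :: w) (by rw [List.length_cons]; omega)]
      exact ⟨_, h.ev_mem_powSpan hij (i :: w) (by simp [hw, inPair])
        (by rw [List.length_cons]; omega), rfl⟩
  · rw [ev_fst t (d ++ w) (by omega)]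
    exact zero_mem _

/-- The even part of a span of cosets. -/
def evenPart (t : Fin 3 → Fin 3 → A) (i j : Fin 3) (D : List Word) : Submodule ℂ A :=
  (cosetSpan t i j D).map (LinearMap.fst ℂ A A)

theorem BraidSys.evenPart_le (h : BraidSys x y z t) (hij : i ≠ j) (D : List Word) :
    evenPart t i j D ≤ Submodule.span ℂ (Set.range fun p : Fin D.length × Fin (cox i j) =>
      (ev t (evenWord i (D.get p.1))).1 * t i j ^ p.2.val) := by
  rw [evenPart, Submodule.map_le_iff_le_comap]
  refine Submodule.span_le.2 ?_
  rintro _ ⟨d, hd, w, hw, rfl⟩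
  obtain ⟨n, rfl⟩ := List.get_of_mem hd
  have hle : (powSpan (t i j) (cox i j)).map (LinearMap.mulLeft ℂ (ev t (evenWord i (D.get n))).1) ≤
      Submodule.span ℂ (Set.range fun p : Fin D.length × Fin (cox i j) =>
        (ev t (evenWord i (D.get p.1))).1 * t i j ^ p.2.val) := by
    rw [powSpan, Submodule.map_span_le]
    rintro _ ⟨k, rfl⟩
    exact Submodule.subset_span ⟨(n, k), rfl⟩
  exact hle (h.ev_coset hij _ w hw)

theorem BraidSys.finrank_evenPart_le (h : BraidSys x y z t) (hij : i ≠ j) (D : List Word) :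
    Module.Finite ℂ (evenPart t i j D) ∧
      Module.finrank ℂ (evenPart t i j D) ≤ D.length * cox i j := by
  have hle := h.evenPart_le hij D
  generalize (fun p : Fin D.length × Fin (cox i j) =>
      (ev t (evenWord i (D.get p.1))).1 * t i j ^ p.2.val) = f at hle
  have : Module.Finite ℂ (Submodule.span ℂ (Set.range f)) :=
    Module.Finite.span_of_finite ℂ (Set.finite_range f)
  refine ⟨Submodule.finiteDimensional_of_le hle,
    (Submodule.finrank_mono hle).trans ((finrank_range_le_card f).trans ?_)⟩
  simp

theorem BraidSys.evenPart_eq_top (h : BraidSys x y z t) (ht : cosetTable i j N tab = true)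
    (hgen : ∀ M : Submodule ℂ A, 1 ∈ M → (∀ k l, ∀ v ∈ M, t k l * v ∈ M) → M = ⊤) :
    evenPart t i j (tab.map Prod.fst) = ⊤ := by
  have hall (u : Word) : ev t u ∈ cosetSpan t i j (tab.map Prod.fst) := by
    have := h.reduce ht _ u le_rfl [] rfl
    rw [List.append_nil] at this
    have hsub : upTo tab u.length ⊆ tab.map Prod.fst := fun d hd => List.mem_of_mem_filter hd
    exact cosetSpan_mono hsub this
  have hs (l : Fin 3) : cosetSpan t i j (tab.map Prod.fst) ≤
      (cosetSpan t i j (tab.map Prod.fst)).comap (sAct t l) := by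
    refine Submodule.span_le.2 ?_
    rintro _ ⟨d, hd, w, hw, rfl⟩
    exact hall (l :: (d ++ w))
  refine hgen _ ⟨_, hall [], rfl⟩ ?_
  rintro k l _ ⟨v, hv, rfl⟩
  refine ⟨_, hs k (hs l hv), ?_⟩
  simp [sAct_apply, ← mul_assoc, h.mul]

end

/-! ### Symmetry of the relations in dimension `60` -/

/-- If `s * V` agrees with `K • V * s⁻¹` up to a subspace `F` stable under `s`, then the polynomial
relation of `s` and its reversal are proportional. -/
theorem reversal {F : Submodule ℂ A} {s s' V : A} {m : ℕ} {c : ℕ → ℂ} {K : ℂ} (hs : s' * s = 1)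
    (hm : 1 < m) (e : s ^ m = ∑ k ∈ Finset.range m, c k • s ^ k)
    (hL : ∀ v ∈ F, s * v ∈ F) (hR : ∀ v ∈ F, v * s ∈ F) (hV : s * V - K • (V * s') ∈ F)
    (hind : ∀ g : ℕ → ℂ, ∑ k ∈ Finset.range m, g k • (V * s ^ k) ∈ F → ∀ k < m, g k = 0) :
    K ^ m = c 0 ^ 2 ∧ ∀ k, 0 < k → k < m → c 0 * c k + c (m - k) * K ^ (m - k) = 0 := by
  have hR' (n : ℕ) : ∀ v ∈ F, v * s ^ n ∈ F := by
    induction n with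
    | zero => simp
    | succ n ih => intro v hv; rw [pow_succ, ← mul_assoc]; exact hR _ (ih v hv)
  have key (k n : ℕ) : s ^ k * V * s ^ (n + k) - K ^ k • (V * s ^ n) ∈ F := by
    induction k generalizing n with
    | zero => simp
    | succ k ih =>
      have h1 := hL _ (ih (n + 1))
      have h2 := Submodule.smul_mem _ (K ^ k) (hR' (n + 1) _ hV)
      convert add_mem h1 h2 using 1
      have e1 : s' * s ^ (n + 1) = s ^ n := by rw [pow_succ', ← mul_assoc, hs, one_mul]
      rw [sub_mul, mul_sub, smul_mul_assoc, mul_assoc V s', e1, smul_sub, smul_smul, mul_smul_comm,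
        show n + (k + 1) = n + 1 + k by ring, pow_succ', pow_succ]
      simp only [mul_assoc]
      abel
  obtain ⟨n, rfl⟩ : ∃ n, m = n + 1 := ⟨m - 1, by omega⟩
  have h1 := key (n + 1) 0
  have h2 : ∑ k ∈ Finset.range (n + 1), c k • (s ^ k * V * s ^ (n + 1) -
      K ^ k • (V * s ^ (n + 1 - k))) ∈ F := by
    refine Submodule.sum_mem _ fun k hk => Submodule.smul_mem _ _ ?_
    rw [Finset.mem_range] at hk
    have := key k (n + 1 - k)
    rwa [Nat.sub_add_cancel hk.le] at this
  have h3 : s ^ (n + 1) * V * s ^ (n + 1) =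
      ∑ k ∈ Finset.range (n + 1), c k • (s ^ k * V * s ^ (n + 1)) := by
    conv_lhs => enter [1, 1]; rw [e]
    simp only [Finset.sum_mul, smul_mul_assoc]
  have h4 : ∑ k ∈ Finset.range n, c (k + 1) • K ^ (k + 1) • (V * s ^ (n + 1 - (k + 1))) =
      ∑ k ∈ Finset.range n, (c (n - k) * K ^ (n - k)) • (V * s ^ (k + 1)) := by
    rw [← Finset.sum_range_reflect]
    refine Finset.sum_congr rfl fun k hk => ?_
    rw [Finset.mem_range] at hk
    rw [smul_smul, show n - 1 - k + 1 = n - k by omega, show n + 1 - (n - k) = k + 1 by omega]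
  have h5 : V * s ^ (n + 1) = ∑ k ∈ Finset.range (n + 1), c k • (V * s ^ k) := by
    rw [e, Finset.mul_sum]; simp only [mul_smul_comm]
  let g : ℕ → ℂ := fun k => match k with
    | 0 => K ^ (n + 1) - c 0 ^ 2
    | k + 1 => - (c 0 * c (k + 1) + c (n - k) * K ^ (n - k))
  have h6 : ∑ k ∈ Finset.range (n + 1), g k • (V * s ^ k) ∈ F := by
    convert sub_mem h2 h1 using 1
    rw [zero_add, h3]
    simp only [smul_sub]
    rw [Finset.sum_sub_distrib, sub_sub_sub_cancel_left, Finset.sum_range_succ',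
      Finset.sum_range_succ' (fun k => c k • K ^ k • (V * s ^ (n + 1 - k))), h4, Nat.sub_zero, h5,
      Finset.sum_range_succ']
    simp only [g, neg_smul, add_smul, Finset.sum_neg_distrib, Finset.sum_add_distrib, sub_smul,
      pow_zero, one_smul, mul_smul, smul_add, Finset.smul_sum, pow_two]
    abel
  have h7 := hind g h6
  refine ⟨sub_eq_zero.1 (h7 0 (by omega)), fun k h0 hk => ?_⟩
  obtain ⟨k, rfl⟩ : ∃ l, k = l + 1 := ⟨k - 1, by omega⟩
  rw [Nat.add_sub_add_right]
  exact neg_eq_zero.1 (h7 (k + 1) hk)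

/-- A family of vectors which spans a complement is independent if the dimensions leave no room. -/
theorem independent_of_sup_span_eq_top [Module.Finite ℂ A] {F : Submodule ℂ A} {m : ℕ} {f : ℕ → A}
    (hF : Module.finrank ℂ F + m ≤ Module.finrank ℂ A)
    (htop : F ⊔ Submodule.span ℂ (Set.range fun k : Fin m => f k) = ⊤)
    (g : ℕ → ℂ) (hg : ∑ k ∈ Finset.range m, g k • f k ∈ F) (k : ℕ) (hk : k < m) : g k = 0 := by
  have hspan : ⊤ ≤ Submodule.span ℂ (Set.range fun k : Fin m => F.mkQ (f k)) := by
    have := congrArg (Submodule.map F.mkQ) htop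
    rw [Submodule.map_sup, Submodule.mkQ_map_self, bot_sup_eq, Submodule.map_span, ← Set.range_comp,
      Submodule.map_top, Submodule.range_mkQ] at this
    exact this.ge
  have hq := Submodule.finrank_quotient_add_finrank F
  have hle : Module.finrank ℂ (A ⧸ F) ≤ m := by
    have := finrank_range_le_card (R := ℂ) (fun k : Fin m => F.mkQ (f k))
    rwa [Set.finrank, top_le_iff.1 hspan, finrank_top, Fintype.card_fin] at this
  have hli := linearIndependent_of_top_le_span_of_card_eq_finrank hspan
    (by rw [Fintype.card_fin]; omega)
  refine Fintype.linearIndependent_iff.1 hli (fun k => g k) ?_ ⟨k, hk⟩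
  rw [← (Submodule.Quotient.mk_eq_zero F)] at hg
  rw [← hg, Finset.sum_range, ← Submodule.mkQ_apply, map_sum]
  simp only [map_smul]

section
variable {x y z : ℂ} {t : Fin 3 → Fin 3 → A} {i j : Fin 3}
  {N : ℕ} {tab : List (Word × List (List ℕ))} {x0 : Word} {p q : Fin 3} {ps qs : List ℕ}

theorem BraidSys.ev_cons_pair (h : BraidSys x y z t) (i j : Fin 3) (u : Word) :
    (ev t (i :: j :: u)).1 = t i j * (ev t u).1 := by
  rw [ev_cons, ev_cons, sAct_apply, sAct_apply, ← mul_assoc, h.mul]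

theorem BraidSys.ev_append_pair (h : BraidSys x y z t) (i j : Fin 3) (u : Word) :
    (ev t (u ++ [i, j])).1 = (ev t u).1 * t i j := by
  have e := h.ev_cons_pair i j []
  rw [show (ev t []).1 = 1 from rfl, mul_one] at e
  rw [ev_append_even t u [i, j] (by simp), e]

theorem BraidSys.mul_mem_evenPart (h : BraidSys x y z t) (ht : cosetTable i j N tab = true)
    (hN : 0 < N) {v : A} (hv : v ∈ evenPart t i j (upTo tab (N - 1))) :
    t i j * v ∈ evenPart t i j (upTo tab (N - 1)) := by
  obtain ⟨u, hu, rfl⟩ := hv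
  refine ⟨_, h.sAct_mem ht (l := i) (by simp [inPair])
    (h.sAct_mem ht (l := j) (by simp [inPair]) hu hN) hN, ?_⟩
  simp [sAct_apply, ← mul_assoc, h.mul]

theorem BraidSys.mem_evenPart_mul (h : BraidSys x y z t) {D : List Word} {v : A}
    (hv : v ∈ evenPart t i j D) : v * t i j ∈ evenPart t i j D := by
  have hR : (cosetSpan t i j D) ≤ (evenPart t i j D).comap
      (LinearMap.mulRight ℂ (t i j) ∘ₗ LinearMap.fst ℂ A A) := by
    refine Submodule.span_le.2 ?_
    rintro _ ⟨d, hd, w, hw, rfl⟩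
    refine ⟨_, ev_mem_cosetSpan hd (w := w ++ [i, j]) (by simp [inPair] at hw ⊢; simpa using hw), ?_⟩
    rw [← List.append_assoc]
    exact h.ev_append_pair i j (d ++ w)
  obtain ⟨u, hu, rfl⟩ := hv
  exact hR hu

/-- Multiplication by `s_i s_j` on the left of the longest coset is multiplication by its inverse on
the right, up to a scalar and shorter cosets. -/
theorem BraidSys.twist (h : BraidSys x y z t) (ht : cosetTable i j N tab = true) (hN : 0 < N)
    (hx0 : x0.length = N) (hp : inPair i j p = true)
    (hps : follow ps (j :: x0) = x0 ++ [p]) (hqs : follow qs (i :: x0) = x0 ++ [q])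
    (w : Word) (hw : w.all (inPair i j) = true) :
    ev t (i :: j :: x0 ++ w) -
      mono x y z (expFollow w.length ps (j :: x0) + expFollow (w.length + 1) qs (i :: x0)) •
        ev t (x0 ++ q :: p :: w) ∈ cosetSpan t i j (upTo tab (N - 1)) := by
  have hlow (w : Word) (hw : w.all (inPair i j) = true) :
      low t (N + 1) w ≤ cosetSpan t i j (upTo tab (N - 1)) := Submodule.span_le.2 <| by
    rintro _ ⟨u, hu, rfl⟩
    exact h.reduce ht _ u (by omega) w hw
  have h1 := h.follow_mem ps (j :: x0) w
  have h2 := h.follow_mem qs (i :: x0) (p :: w)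
  rw [List.length_cons, hx0] at h1 h2
  have h1 := h.sAct_mem ht (l := i) (by simp [inPair]) (hlow w hw h1) hN
  have h2 := Submodule.smul_mem _ (mono x y z (expFollow w.length ps (j :: x0)))
    (hlow (p :: w) (by rw [List.all_cons, hp, hw]; rfl) h2)
  rw [hps, map_sub, map_smul, ← ev_cons, ← ev_cons, ← List.append_cons] at h1
  rw [hqs, smul_sub, smul_smul, ← mono_add h.hx h.hy h.hz, ← List.append_cons] at h2
  have := add_mem h1 h2
  simp only [List.cons_append] at this ⊢
  rwa [sub_add_sub_cancel] at this

/-- If the algebra has dimension `60`, the relation for `s_i s_j` satisfies a symmetry. -/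
theorem BraidSys.symmetry (h : BraidSys x y z t) (hij : i ≠ j)
    (hgen : ∀ M : Submodule ℂ A, 1 ∈ M → (∀ k l, ∀ v ∈ M, t k l * v ∈ M) → M = ⊤)
    (hA : Module.finrank ℂ A = 60) (ht : cosetTable i j N tab = true) (hN : 0 < N)
    (hx0 : x0.length = N)
    (htab : ((tab.map Prod.fst).all fun d => (upTo tab (N - 1)).contains d || d == x0) = true)
    (hcard : ((upTo tab (N - 1)).length + 1) * cox i j = 60)
    (hps : follow ps (j :: x0) = x0 ++ [p]) (hqs : follow qs (i :: x0) = x0 ++ [q])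
    (hpq : if N % 2 = 0 then p = i ∧ q = j else p = j ∧ q = i)
    {c : ℕ → ℂ} (hc : t i j ^ cox i j = ∑ k ∈ Finset.range (cox i j), c k • t i j ^ k)
    {e : ℤ × ℤ × ℤ}
    (he : expFollow (N % 2) ps (j :: x0) + expFollow (N % 2 + 1) qs (i :: x0) = e) :
    mono x y z e ^ cox i j = c 0 ^ 2 ∧ ∀ k, 0 < k → k < cox i j →
      c 0 * c k + c (cox i j - k) * mono x y z e ^ (cox i j - k) = 0 := by
  have : Module.Finite ℂ A := Module.finite_of_finrank_pos (by omega)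
  have hm := one_lt_cox i j hij
  have hp : inPair i j p = true := by
    split_ifs at hpq <;> simp [hpq, inPair]
  have hV : t i j * (ev t (evenWord i x0)).1 -
      mono x y z e • ((ev t (evenWord i x0)).1 * t j i) ∈ evenPart t i j (upTo tab (N - 1)) := by
    rw [evenWord, hx0]
    split_ifs at hpq ⊢ with hpar
    · have := h.twist ht hN hx0 hp hps hqs [] rfl
      rw [hpar] at he
      rw [List.length_nil, he, hpq.1, hpq.2] at this
      refine ⟨_, this, ?_⟩
      rw [List.append_nil, LinearMap.fst_apply, Prod.fst_sub, Prod.smul_fst, h.ev_append_pair,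
        h.ev_cons_pair]
    · have := h.twist ht hN hx0 hp hps hqs [i] (by simp [inPair])
      rw [show N % 2 = 1 by omega] at he
      rw [List.length_singleton, he, hpq.1, hpq.2, List.append_cons x0 i [j, i]] at this
      refine ⟨_, this, ?_⟩
      rw [LinearMap.fst_apply, Prod.fst_sub, Prod.smul_fst, h.ev_append_pair, List.cons_append,
        List.cons_append, h.ev_cons_pair]
  have hfin := h.finrank_evenPart_le hij (upTo tab (N - 1))
  have htop : evenPart t i j (upTo tab (N - 1)) ⊔ Submodule.span ℂ (Set.range
      fun k : Fin (cox i j) => (ev t (evenWord i x0)).1 * t i j ^ k.val) = ⊤ := by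
    rw [eq_top_iff, ← h.evenPart_eq_top ht hgen, evenPart, Submodule.map_le_iff_le_comap]
    refine Submodule.span_le.2 ?_
    rintro _ ⟨d, hd, w, hw, rfl⟩
    have hd := List.all_eq_true.1 htab d hd
    rw [Bool.or_eq_true, List.contains_iff_mem, beq_iff_eq] at hd
    rcases hd with hd | rfl
    · exact Submodule.mem_sup_left ⟨_, ev_mem_cosetSpan hd hw, rfl⟩
    · have := h.ev_coset hij d w hw
      rw [powSpan, Submodule.map_span, ← Set.range_comp] at this
      exact Submodule.mem_sup_right this
  refine reversal (s' := t j i) (by rw [h.mul, h.one]) hm hc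
    (fun v hv => h.mul_mem_evenPart ht hN hv) (fun v hv => h.mem_evenPart_mul hv) hV
    (independent_of_sup_span_eq_top ?_ htop)
  rw [hA, ← hcard, add_mul, one_mul]
  exact Nat.add_le_add_right hfin.2 _
end

end BraidSystems

/-! ### The tables of cosets -/

/-- Representatives of the cosets of `⟨s_3, s_1⟩` and their rewriting, for `cosetTable`. -/
def tableC : List (Word × List (List ℕ)) := [
  ([], []),
  ([1], [[0]]),
  ([2, 1], [[], [0]]),
  ([0, 2, 1], [[], [0, 1]]),
  ([2, 0, 2, 1], []),
  ([0, 2, 0, 2, 1], [[], [0], [0, 4]]),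
  ([1, 2, 0, 2, 1], [[], [], [0, 2, 3]]),
  ([0, 1, 2, 0, 2, 1], [[], [0]]),
  ([2, 0, 1, 2, 0, 2, 1], [[], [2, 0, 2, 1, 6]]),
  ([0, 2, 0, 1, 2, 0, 2, 1], [[], [0, 3, 1, 3, 2, 7]]),
  ([2, 0, 2, 0, 1, 2, 0, 2, 1], [[0, 4, 6, 7]]),
  ([1, 2, 0, 2, 0, 1, 2, 0, 2, 1], [[0, 1, 5, 7, 8], [], [0, 2, 5, 3, 5, 4, 9]])]

/-- Representatives of the cosets of `⟨s_2, s_3⟩` and their rewriting, for `cosetTable`. -/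
def tableB : List (Word × List (List ℕ)) := [
  ([], []),
  ([0], [[], [0]]),
  ([2, 0], []),
  ([0, 2, 0], [[], [0]]),
  ([1, 2, 0], [[], [], [0, 2]]),
  ([0, 1, 2, 0], [[], [0]]),
  ([2, 0, 2, 0], [[0]]),
  ([2, 0, 1, 2, 0], []),
  ([1, 2, 0, 2, 0], [[0, 1], [], [0, 2]]),
  ([0, 2, 0, 1, 2, 0], [[], [0]]),
  ([1, 2, 0, 1, 2, 0], [[], [], [0, 2]]),
  ([0, 1, 2, 0, 1, 2, 0], [[], [0]]),
  ([2, 0, 2, 0, 1, 2, 0], [[0, 4, 6]]),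
  ([2, 0, 1, 2, 0, 1, 2, 0], []),
  ([1, 2, 0, 2, 0, 1, 2, 0], [[0, 1, 5, 7], [], [0, 2]]),
  ([0, 2, 0, 1, 2, 0, 1, 2, 0], [[], [0], [6, 4, 0, 4, 5, 3, 5]]),
  ([1, 2, 0, 1, 2, 0, 1, 2, 0], [[], [], [0, 2]]),
  ([0, 1, 2, 0, 1, 2, 0, 1, 2, 0], [[], [0]]),
  ([2, 0, 1, 2, 0, 1, 2, 0, 1, 2, 0], [[], [2, 0, 8, 6, 2, 1, 6, 7, 5, 7]]),
  ([0, 2, 0, 1, 2, 0, 1, 2, 0, 1, 2, 0], [[], [0, 3, 1, 9, 7, 3, 2, 7, 8, 6, 8], [6, 4, 0, 4, 5, 3, 5, 9, 11]])]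

/-- Representatives of the cosets of `⟨s_1, s_2⟩` and their rewriting, for `cosetTable`. -/
def tableA : List (Word × List (List ℕ)) := [
  ([], []),
  ([2], []),
  ([0, 2], [[], [0]]),
  ([1, 2], [[], [], [0]]),
  ([0, 1, 2], [[], [0]]),
  ([2, 0, 2], []),
  ([2, 0, 1, 2], []),
  ([0, 2, 0, 2], [[], [0], [0]]),
  ([1, 2, 0, 2], [[], [], [0, 2]]),
  ([0, 2, 0, 1, 2], [[], [0]]),
  ([1, 2, 0, 1, 2], [[], [], [0, 2]]),
  ([0, 1, 2, 0, 2], [[], [0]]),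
  ([0, 1, 2, 0, 1, 2], [[], [0]]),
  ([2, 0, 2, 0, 1, 2], [[0, 4]]),
  ([2, 0, 1, 2, 0, 2], [[], [2, 0, 2, 1]]),
  ([2, 0, 1, 2, 0, 1, 2], []),
  ([1, 2, 0, 2, 0, 1, 2], [[0, 1, 5], [], [0, 2]]),
  ([0, 2, 0, 1, 2, 0, 2], [[], [0, 3, 1, 3, 2]]),
  ([0, 2, 0, 1, 2, 0, 1, 2], [[], [0], [6, 4, 0]]),
  ([1, 2, 0, 1, 2, 0, 1, 2], [[], [], [0, 2]]),
  ([2, 0, 2, 0, 1, 2, 0, 2], []),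
  ([0, 1, 2, 0, 1, 2, 0, 1, 2], [[], [0]]),
  ([0, 2, 0, 2, 0, 1, 2, 0, 2], [[], [0], [0]]),
  ([1, 2, 0, 2, 0, 1, 2, 0, 2], [[], [], [0, 2, 5, 3, 5, 4]]),
  ([2, 0, 1, 2, 0, 1, 2, 0, 1, 2], []),
  ([0, 1, 2, 0, 2, 0, 1, 2, 0, 2], [[], [0], [1, 2, 0, 2, 6, 8]]),
  ([0, 2, 0, 1, 2, 0, 1, 2, 0, 1, 2], [[], [0], [6, 4, 0, 4, 5, 3, 5, 9]]),
  ([1, 2, 0, 1, 2, 0, 1, 2, 0, 1, 2], [[], [], [0, 2]]),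
  ([0, 1, 2, 0, 1, 2, 0, 1, 2, 0, 1, 2], [[], [0]]),
  ([2, 0, 1, 2, 0, 1, 2, 0, 1, 2, 0, 1, 2], [[5, 3, 11, 9, 5, 4, 0, 4, 3, 6, 9, 7, 9, 8, 4, 2, 4, 8, 10], [2, 0, 8, 6, 2, 1, 6, 7, 5, 7, 11]])]

/-! ### The algebra as a braid system -/

/-- An inverse satisfies the reversed polynomial relation. -/
theorem exists_inverse_rel {A : Type*} [Ring A] [Algebra ℂ A] {s s' : A} (hs : s * s' = 1)
    (hs' : s' * s = 1) {m : ℕ} (hm : 1 < m) {c : ℕ → ℂ} (hc : c 0 ≠ 0)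
    (e : s ^ m = ∑ k ∈ Finset.range m, c k • s ^ k) :
    ∃ c' : ℕ → ℂ, c' 0 = (c 0)⁻¹ ∧ s' ^ m = ∑ k ∈ Finset.range m, c' k • s' ^ k := by
  obtain ⟨n, rfl⟩ : ∃ n, m = n + 1 := ⟨m - 1, by omega⟩
  have hcomm : Commute s' s := hs'.trans hs.symm
  have hpow (k : ℕ) : s' ^ k * s ^ k = 1 := by rw [← hcomm.mul_pow, hs', one_pow]
  have hp (k l : ℕ) : s' ^ (k + l) * s ^ l = s' ^ k := by rw [pow_add, mul_assoc, hpow, mul_one]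
  have e' := congrArg (s' ^ (n + 1) * ·) e
  simp only [hpow, Finset.mul_sum, mul_smul_comm] at e'
  rw [Finset.sum_range_succ', pow_zero, mul_one] at e'
  have h1 : ∑ k ∈ Finset.range n, c (k + 1) • (s' ^ (n + 1) * s ^ (k + 1)) =
      ∑ k ∈ Finset.range n, c (n - k) • s' ^ (k + 1) := by
    rw [← Finset.sum_range_reflect]
    refine Finset.sum_congr rfl fun k hk => ?_
    rw [Finset.mem_range] at hk
    rw [show n - 1 - k + 1 = n - k by omega, show n + 1 = k + 1 + (n - k) by omega, hp]
  rw [h1] at e'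
  refine ⟨fun k => match k with
    | 0 => (c 0)⁻¹
    | k + 1 => - (c 0)⁻¹ * c (n - k), rfl, ?_⟩
  have h2 : s' ^ (n + 1) = (c 0)⁻¹ • (1 - ∑ k ∈ Finset.range n, c (n - k) • s' ^ (k + 1)) := by
    rw [e', add_sub_cancel_left, smul_smul, inv_mul_cancel₀ hc, one_smul]
  rw [Finset.sum_range_succ', h2]
  simp only [smul_sub, Finset.smul_sum, mul_smul, neg_mul, neg_smul, Finset.sum_neg_distrib, pow_zero]
  abel

section
open Tilde23n

variable (α1 β1 β2 : ℂ) (γ : ℕ → ℂ) (α2 β3 : ℂ)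

/-- The elements of the algebra in the roles of the products `s_i s_j`: the generators `a`, `b`, `c`
for `s₁s₂`, `s₂s₃`, `s₃s₁`, and their inverses. -/
def tilt : Fin 3 → Fin 3 → Aplus 5 α1 α2 β1 β2 β3 γ :=
  let π := RingQuot.mkAlgHom ℂ (Rel 5 α1 α2 β1 β2 β3 γ)
  ![![1, π a, π (a * b)], ![π (b * c), 1, π b], ![π c, π (c * a), 1]]

theorem mk_κ_mul (z : ℂ) (u : FreeAlgebra ℂ (Fin 3)) :
    RingQuot.mkAlgHom ℂ (Rel 5 α1 α2 β1 β2 β3 γ) (κ z * u) =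
      z • RingQuot.mkAlgHom ℂ (Rel 5 α1 α2 β1 β2 β3 γ) u := by
  rw [κ, ← Algebra.smul_def, map_smul]

theorem mk_κ (z : ℂ) : RingQuot.mkAlgHom ℂ (Rel 5 α1 α2 β1 β2 β3 γ) (κ z) = z • 1 := by
  rw [κ, AlgHom.commutes, Algebra.algebraMap_eq_smul_one]

theorem tilt_a : tilt α1 β1 β2 γ α2 β3 0 1 ^ cox 0 1 =
    ∑ k ∈ Finset.range (cox 0 1), (if k = 0 then -α2 else α1) • tilt α1 β1 β2 γ α2 β3 0 1 ^ k := by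
  have e := RingQuot.mkAlgHom_rel ℂ (Rel.ra (n := 5) (α1 := α1) (α2 := α2) (β1 := β1) (β2 := β2)
    (β3 := β3) (γ := γ))
  simp only [map_add, map_sub, mk_κ_mul, mk_κ, map_pow, map_zero] at e
  rw [show cox 0 1 = 2 from rfl, ← sub_eq_zero, ← e]
  simp only [Finset.sum_range_succ, Finset.sum_range_zero]
  simp only [tilt, Matrix.cons_val]
  simp
  module

theorem tilt_b : tilt α1 β1 β2 γ α2 β3 1 2 ^ cox 1 2 =
    ∑ k ∈ Finset.range (cox 1 2), (if k = 0 then β3 else if k = 1 then -β2 else β1) •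
      tilt α1 β1 β2 γ α2 β3 1 2 ^ k := by
  have e := RingQuot.mkAlgHom_rel ℂ (Rel.rb (n := 5) (α1 := α1) (α2 := α2) (β1 := β1) (β2 := β2)
    (β3 := β3) (γ := γ))
  simp only [map_add, map_sub, mk_κ_mul, mk_κ, map_pow, map_zero] at e
  rw [show cox 1 2 = 3 from rfl, ← sub_eq_zero, ← e]
  simp only [Finset.sum_range_succ, Finset.sum_range_zero]
  simp only [tilt, Matrix.cons_val]
  simp
  module

theorem tilt_c : tilt α1 β1 β2 γ α2 β3 2 0 ^ cox 2 0 =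
    ∑ k ∈ Finset.range (cox 2 0), ((-1) ^ k * γ (5 - k)) • tilt α1 β1 β2 γ α2 β3 2 0 ^ k := by
  have e := RingQuot.mkAlgHom_rel ℂ (Rel.rc (n := 5) (α1 := α1) (α2 := α2) (β1 := β1) (β2 := β2)
    (β3 := β3) (γ := γ))
  simp only [map_add, map_sum, mk_κ_mul, mk_κ, map_pow, map_zero] at e
  rw [show cox 2 0 = 5 from rfl, ← sub_eq_zero, ← e]
  simp only [Finset.sum_range_succ, Finset.sum_range_zero, Finset.sum_Icc_succ_top,
    Nat.reduceLeDiff, le_refl]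
  simp only [tilt, Matrix.cons_val]
  simp
  module

theorem tilt_braidSys (hα2 : α2 ≠ 0) (hβ3 : β3 ≠ 0) (hγ5 : γ 5 ≠ 0) :
    BraidSys (-α2) β3 (γ 5) (tilt α1 β1 β2 γ α2 β3) := by
  let π := RingQuot.mkAlgHom ℂ (Rel 5 α1 α2 β1 β2 β3 γ)
  have abc : π a * (π b * π c) = 1 := by
    have e := RingQuot.mkAlgHom_rel ℂ (Rel.rabc (n := 5) (α1 := α1) (α2 := α2) (β1 := β1) (β2 := β2)
      (β3 := β3) (γ := γ))
    rwa [map_mul, map_mul, map_one, mul_assoc] at e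
  have qa : π a ^ 2 - α1 • π a + α2 • 1 = 0 := by
    have e := RingQuot.mkAlgHom_rel ℂ (Rel.ra (n := 5) (α1 := α1) (α2 := α2) (β1 := β1) (β2 := β2)
      (β3 := β3) (γ := γ))
    simpa only [map_add, map_sub, mk_κ_mul, mk_κ, map_pow, map_zero] using e
  have qb : π b ^ 3 - β1 • π b ^ 2 + β2 • π b - β3 • 1 = 0 := by
    have e := RingQuot.mkAlgHom_rel ℂ (Rel.rb (n := 5) (α1 := α1) (α2 := α2) (β1 := β1) (β2 := β2)
      (β3 := β3) (γ := γ))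
    simpa only [map_add, map_sub, mk_κ_mul, mk_κ, map_pow, map_zero] using e
  -- `a` and `b` have inverses on both sides by their polynomial relations
  obtain ⟨a', ha'⟩ : ∃ a', a' * π a = 1 := by
    refine ⟨α2⁻¹ • (α1 • 1 - π a), ?_⟩
    rw [smul_mul_assoc, sub_mul, smul_mul_assoc, one_mul, ← pow_two, inv_smul_eq_iff₀ hα2,
      ← sub_eq_zero, ← neg_eq_zero, ← qa]
    abel
  obtain ⟨b', hb'⟩ : ∃ b', b' * π b = 1 := by
    refine ⟨β3⁻¹ • (π b ^ 2 - β1 • π b + β2 • 1), ?_⟩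
    rw [smul_mul_assoc, add_mul, sub_mul, smul_mul_assoc, smul_mul_assoc, one_mul, ← pow_succ,
      ← pow_two, inv_smul_eq_iff₀ hβ3, ← sub_eq_zero, ← qb]
  have bca : π b * (π c * π a) = 1 := by
    rw [← mul_assoc, ← left_inv_eq_right_inv ha' abc, ha']
  have cab : π c * (π a * π b) = 1 := by
    rw [← mul_assoc, ← left_inv_eq_right_inv hb' bca, hb']
  have abc' (u) : π a * (π b * (π c * u)) = u := by
    rw [← mul_assoc (π b), ← mul_assoc (π a), abc, one_mul]
  have bca' (u) : π b * (π c * (π a * u)) = u := by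
    rw [← mul_assoc (π c), ← mul_assoc (π b), bca, one_mul]
  have cab' (u) : π c * (π a * (π b * u)) = u := by
    rw [← mul_assoc (π a), ← mul_assoc (π c), cab, one_mul]
  have one (i) : tilt α1 β1 β2 γ α2 β3 i i = 1 := by fin_cases i <;> rfl
  have mul (i j k) : tilt α1 β1 β2 γ α2 β3 i j * tilt α1 β1 β2 γ α2 β3 j k =
      tilt α1 β1 β2 γ α2 β3 i k := by
    change (![![1, π a, π (a * b)], ![π (b * c), 1, π b], ![π c, π (c * a), 1]] :
      Fin 3 → Fin 3 → Aplus 5 α1 α2 β1 β2 β3 γ) i j * (![![1, π a, π (a * b)],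
      ![π (b * c), 1, π b], ![π c, π (c * a), 1]] : Fin 3 → Fin 3 → Aplus 5 α1 α2 β1 β2 β3 γ) j k =
      (![![1, π a, π (a * b)], ![π (b * c), 1, π b], ![π c, π (c * a), 1]] :
      Fin 3 → Fin 3 → Aplus 5 α1 α2 β1 β2 β3 γ) i k
    fin_cases i <;> fin_cases j <;> fin_cases k <;>
      simp [mul_assoc, abc, bca, cab, abc', bca', cab']
  have inv {i j : Fin 3} (hm : 1 < cox i j) (hc : cox j i = cox i j) {f : ℕ → ℂ} (hf : f 0 ≠ 0)
      {e : ℂ} (he : (f 0)⁻¹ = e) (hrel : tilt α1 β1 β2 γ α2 β3 i j ^ cox i j =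
        ∑ k ∈ Finset.range (cox i j), f k • tilt α1 β1 β2 γ α2 β3 i j ^ k) :
      ∃ f' : ℕ → ℂ, f' 0 = e ∧ tilt α1 β1 β2 γ α2 β3 j i ^ cox j i =
        ∑ k ∈ Finset.range (cox j i), f' k • tilt α1 β1 β2 γ α2 β3 j i ^ k := by
    rw [← he, hc]
    exact exists_inverse_rel (by rw [mul, one]) (by rw [mul, one]) hm hf hrel
  refine ⟨neg_ne_zero.2 hα2, hβ3, hγ5, one, mul, fun i j hij => ?_⟩
  fin_cases i <;> fin_cases j
  · exact absurd rfl hij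
  · exact ⟨_, by simp [mono, coxExp], tilt_a α1 β1 β2 γ α2 β3⟩
  · exact inv (i := 2) (j := 0) (by decide) rfl (f := fun k => (-1) ^ k * γ (5 - k)) (by simpa using hγ5)
      (by simp [mono, coxExp]) (tilt_c α1 β1 β2 γ α2 β3)
  · exact inv (i := 0) (j := 1) (by decide) rfl (f := fun k => if k = 0 then -α2 else α1)
      (by simpa using hα2) (by simp [mono, coxExp]) (tilt_a α1 β1 β2 γ α2 β3)
  · exact absurd rfl hij
  · exact ⟨_, by simp [mono, coxExp], tilt_b α1 β1 β2 γ α2 β3⟩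
  · exact ⟨_, by simp [mono, coxExp], tilt_c α1 β1 β2 γ α2 β3⟩
  · exact inv (i := 1) (j := 2) (by decide) rfl
      (f := fun k => if k = 0 then β3 else if k = 1 then -β2 else β1)
      (by simpa using hβ3) (by simp [mono, coxExp]) (tilt_b α1 β1 β2 γ α2 β3)
  · exact absurd rfl hij

theorem tilt_generates (M : Submodule ℂ (Aplus 5 α1 α2 β1 β2 β3 γ)) (h1 : 1 ∈ M)
    (hM : ∀ k l, ∀ v ∈ M, tilt α1 β1 β2 γ α2 β3 k l * v ∈ M) : M = ⊤ := by
  let π := RingQuot.mkAlgHom ℂ (Rel 5 α1 α2 β1 β2 β3 γ)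
  have key (u : FreeAlgebra ℂ (Fin 3)) : ∀ v ∈ M, π u * v ∈ M := by
    induction u using FreeAlgebra.induction with
    | grade0 r =>
      intro v hv
      rw [AlgHom.commutes, ← Algebra.smul_def]
      exact Submodule.smul_mem _ _ hv
    | grade1 i =>
      fin_cases i
      · exact hM 0 1
      · exact hM 1 2
      · exact hM 2 0
    | mul u w hu hw => intro v hv; rw [map_mul, mul_assoc]; exact hu _ (hw v hv)
    | add u w hu hw => intro v hv; rw [map_add, add_mul]; exact add_mem (hu v hv) (hw v hv)
  rw [eq_top_iff]
  intro v _
  obtain ⟨u, rfl⟩ := RingQuot.mkAlgHom_surjective ℂ (Rel 5 α1 α2 β1 β2 β3 γ) v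
  simpa using key u 1 h1

end

/-! ### The flatness locus -/

theorem cosetTable_A : cosetTable 0 1 13 tableA = true := by decide +kernel

theorem cosetTable_B : cosetTable 1 2 12 tableB = true := by decide +kernel

theorem cosetTable_C : cosetTable 2 0 10 tableC = true := by decide +kernel

/-- The conditions are the symmetries of the relations of `a`, `b` and `c` which dimension `60`
enforces. -/
theorem conditions_of_finrank (α1 β1 β2 : ℂ) (γ : ℕ → ℂ) (α2 β3 : ℂ)
    (hα2 : α2 ≠ 0) (hβ3 : β3 ≠ 0) (hγ5 : γ 5 ≠ 0)
    (h : Module.finrank ℂ (Tilde23n.Aplus 5 α1 α2 β1 β2 β3 γ) = 60) :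
      (α2 ^ 30 * β3 ^ 20 * γ 5 ^ 12 = 1 ∧
       α2 ^ 15 * β3 ^ 10 * γ 5 ^ 6 * α1 = α1 ∧
       α2 ^ 10 * β3 ^ 7 * γ 5 ^ 4 * β1 = β2 ∧
       α2 ^ 6 * β3 ^ 4 * γ 5 ^ 3 * γ 1 = γ 4 ∧
       α2 ^ 12 * β3 ^ 8 * γ 5 ^ 5 * γ 2 = γ 3) := by
  have hs := tilt_braidSys α1 β1 β2 γ α2 β3 hα2 hβ3 hγ5
  have hgen := tilt_generates α1 β1 β2 γ α2 β3
  -- `x0` is the longest representative in the table, `ps` and `qs` are the positions of the braid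
  -- moves which carry `j :: x0` and `i :: x0` to `x0` followed by a letter, and `e` records the
  -- exponents of the resulting monomial.
  have hA := hs.symmetry (i := 0) (j := 1) (p := 1) (q := 0) (e := (-14, -10, -6))
    (x0 := [2, 0, 1, 2, 0, 1, 2, 0, 1, 2, 0, 1, 2])
    (ps := [2, 0, 8, 6, 2, 1, 6, 7, 5, 7, 11])
    (qs := [5, 3, 11, 9, 5, 4, 0, 4, 3, 6, 9, 7, 9, 8, 4, 2, 4, 8, 10])
    (by decide) hgen h cosetTable_A (by decide) (by decide +kernel) (by decide +kernel)
    (by decide +kernel) (by decide +kernel) (by decide +kernel) (by decide)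
    (tilt_a α1 β1 β2 γ α2 β3) (by decide +kernel)
  have hB := hs.symmetry (i := 1) (j := 2) (p := 1) (q := 2) (e := (-10, -6, -4))
    (x0 := [0, 2, 0, 1, 2, 0, 1, 2, 0, 1, 2, 0])
    (ps := [6, 4, 0, 4, 5, 3, 5, 9, 11]) (qs := [0, 3, 1, 9, 7, 3, 2, 7, 8, 6, 8])
    (by decide) hgen h cosetTable_B (by decide) (by decide +kernel) (by decide +kernel)
    (by decide +kernel) (by decide +kernel) (by decide +kernel) (by decide)
    (tilt_b α1 β1 β2 γ α2 β3) (by decide +kernel)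
  have hC := hs.symmetry (i := 2) (j := 0) (p := 2) (q := 0) (e := (-6, -4, -2))
    (x0 := [1, 2, 0, 2, 0, 1, 2, 0, 2, 1])
    (ps := [0, 1, 5, 7, 8]) (qs := [0, 2, 5, 3, 5, 4, 9])
    (by decide) hgen h cosetTable_C (by decide) (by decide +kernel) (by decide +kernel)
    (by decide +kernel) (by decide +kernel) (by decide +kernel) (by decide)
    (tilt_c α1 β1 β2 γ α2 β3) (by decide +kernel)
  have hA1 := hA.2 1 (by decide) (by decide)
  have hB2 := hB.2 2 (by decide) (by decide)
  have hC0 := hC.1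
  have hC4 := hC.2 4 (by decide) (by decide)
  have hC3 := hC.2 3 (by decide) (by decide)
  simp only [mono, show cox 0 1 = 2 from rfl, show cox 1 2 = 3 from rfl, show cox 2 0 = 5 from rfl]
    at hA1 hB2 hC0 hC3 hC4
  simp at hA1 hB2 hC0 hC3 hC4
  have h6 : (-α2) ^ 6 = α2 ^ 6 := by ring
  have h10 : (-α2) ^ 10 = α2 ^ 10 := by ring
  have h14 : (-α2) ^ 14 = α2 ^ 14 := by ring
  rw [h6] at hC0 hC3 hC4
  rw [h10] at hB2
  rw [h14] at hA1
  have eA : α2 ^ 14 * β3 ^ 10 * γ 5 ^ 6 * ((α2 ^ 14)⁻¹ * (β3 ^ 10)⁻¹ * (γ 5 ^ 6)⁻¹) = 1 := by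
    field_simp
  have eB : α2 ^ 10 * β3 ^ 6 * γ 5 ^ 4 * ((α2 ^ 10)⁻¹ * (β3 ^ 6)⁻¹ * (γ 5 ^ 4)⁻¹) = 1 := by
    field_simp
  have eC : α2 ^ 6 * β3 ^ 4 * γ 5 ^ 2 * ((α2 ^ 6)⁻¹ * (β3 ^ 4)⁻¹ * (γ 5 ^ 2)⁻¹) = 1 := by
    field_simp
  generalize (α2 ^ 14)⁻¹ * (β3 ^ 10)⁻¹ * (γ 5 ^ 6)⁻¹ = K at *
  generalize (α2 ^ 10)⁻¹ * (β3 ^ 6)⁻¹ * (γ 5 ^ 4)⁻¹ = L at *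
  generalize (α2 ^ 6)⁻¹ * (β3 ^ 4)⁻¹ * (γ 5 ^ 2)⁻¹ = M at *
  have e5 := congrArg (· ^ 5) eC
  have e2 := congrArg (· ^ 2) eC
  refine ⟨?_, ?_, ?_, ?_, ?_⟩
  · linear_combination e5 - (α2 ^ 6 * β3 ^ 4 * γ 5 ^ 2) ^ 5 * hC0
  · linear_combination α1 * eA - α2 ^ 14 * β3 ^ 10 * γ 5 ^ 6 * hA1
  · linear_combination β2 * eB + α2 ^ 10 * β3 ^ 6 * γ 5 ^ 4 * hB2
  · linear_combination γ 4 * eC + α2 ^ 6 * β3 ^ 4 * γ 5 ^ 2 * hC4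
  · linear_combination γ 3 * e2 - (α2 ^ 6 * β3 ^ 4 * γ 5 ^ 2) ^ 2 * hC3

/-- The words of even length in the cosets of `⟨s₃, s₁⟩` span. -/
theorem finite_and_finrank_le (α1 β1 β2 : ℂ) (γ : ℕ → ℂ) (α2 β3 : ℂ)
    (hα2 : α2 ≠ 0) (hβ3 : β3 ≠ 0) (hγ5 : γ 5 ≠ 0) :
    Module.Finite ℂ (Tilde23n.Aplus 5 α1 α2 β1 β2 β3 γ) ∧
      Module.finrank ℂ (Tilde23n.Aplus 5 α1 α2 β1 β2 β3 γ) ≤ 60 := by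
  have hs := tilt_braidSys α1 β1 β2 γ α2 β3 hα2 hβ3 hγ5
  have h := hs.finrank_evenPart_le (i := 2) (j := 0) (by decide) (tableC.map Prod.fst)
  rw [hs.evenPart_eq_top cosetTable_C (tilt_generates α1 β1 β2 γ α2 β3), finrank_top] at h
  have := h.1
  exact ⟨Module.Finite.equiv (Submodule.topEquiv (R := ℂ)), h.2.trans (by decide +kernel)⟩

/-- Flatness locus of `Ã₊(2,3,5)` (type `H₃`, `|W₊| = 60`). -/
theorem flatness_tilde_235 (α1 β1 β2 : ℂ) (γ : ℕ → ℂ) (α2 β3 : ℂ)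
    (hα2 : α2 ≠ 0) (hβ3 : β3 ≠ 0) (hγ5 : γ 5 ≠ 0) :
    Module.finrank ℂ (Tilde23n.Aplus 5 α1 α2 β1 β2 β3 γ) = 60 ↔
      (α2 ^ 30 * β3 ^ 20 * γ 5 ^ 12 = 1 ∧
       α2 ^ 15 * β3 ^ 10 * γ 5 ^ 6 * α1 = α1 ∧
       α2 ^ 10 * β3 ^ 7 * γ 5 ^ 4 * β1 = β2 ∧
       α2 ^ 6 * β3 ^ 4 * γ 5 ^ 3 * γ 1 = γ 4 ∧
       α2 ^ 12 * β3 ^ 8 * γ 5 ^ 5 * γ 2 = γ 3) := by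
  refine ⟨conditions_of_finrank α1 β1 β2 γ α2 β3 hα2 hβ3 hγ5, fun ⟨h1, h2, h3, h4, h5⟩ => ?_⟩
  obtain ⟨hfin, hle⟩ := finite_and_finrank_le α1 β1 β2 γ α2 β3 hα2 hβ3 hγ5
  exact hle.antisymm (sixty_le_finrank α1 β1 β2 γ α2 β3 hα2 hβ3 hγ5 h1 h2 h3 h4 h5)
end
end
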